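/- arXiv:1904.10919 — 2 statements merged into one kernel-verified Lean document; each statement's English description precedes it below -/
import Mathlib

section
/- Let n ≥ 4, let A be the Cartan matrix of type D_n, and let ι be an admissible sequence in I = {1,…,n} adapted to A. Then Ξ_ι = Tab_{D,ι}, i.e. the set of all linear forms obtained by applying finitely many operators S_k to the coordinate functions x_{j_0} coincides exactly with the set of column tableaux of type D. -/
noncomputable section

/-- The coordinate linear form `x_k` (as a coefficient vector). -/
def xc (k : ℕ) : ℕ → ℚ := fun l => if l = k then 1 else 0

/-- Cartan matrix of type `A_n`. -/
def cartanA (_n : ℕ) (i j : ℕ) : ℤ :=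
  if i = j then 2 else if i + 1 = j ∨ j + 1 = i then -1 else 0

/-- Cartan matrix of type `B_n`. -/
def cartanB (n : ℕ) (i j : ℕ) : ℤ :=
  if i = j then 2
  else if i = n ∧ j = n - 1 then -2
  else if i + 1 = j ∨ j + 1 = i then -1 else 0

/-- Cartan matrix of type `C_n`. -/
def cartanC (n : ℕ) (i j : ℕ) : ℤ :=
  if i = j then 2
  else if i = n - 1 ∧ j = n then -2
  else if i + 1 = j ∨ j + 1 = i then -1 else 0

/-- Cartan matrix of type `D_n`. -/
def cartanD (n : ℕ) (i j : ℕ) : ℤ :=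
  if i = j then 2
  else if (i = n - 1 ∧ j = n) ∨ (i = n ∧ j = n - 1) then 0
  else if (i + 1 = j ∨ j + 1 = i) ∨ (i = n ∧ j = n - 2) ∨ (i = n - 2 ∧ j = n) then -1
  else 0

/-- `ι` (with positions indexed by `k ≥ 1`) takes values in `{1,…,n}`, has no two equal
consecutive entries, and every index occurs infinitely often. -/
def Admissible (n : ℕ) (ι : ℕ → ℕ) : Prop :=
  (∀ k, 1 ≤ k → 1 ≤ ι k ∧ ι k ≤ n) ∧
  (∀ k, 1 ≤ k → ι k ≠ ι (k + 1)) ∧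
  (∀ i, 1 ≤ i → i ≤ n → ∀ N, ∃ k, N ≤ k ∧ ι k = i)

/-- `k^+`: the next position after `k` carrying the same letter. -/
def kplus (ι : ℕ → ℕ) (k : ℕ) : ℕ := sInf {l | k < l ∧ ι l = ι k}

/-- `k^-`: the previous position (`≥ 1`) carrying the same letter, `0` if none. -/
def kminus (ι : ℕ → ℕ) (k : ℕ) : ℕ := sSup {l | 0 < l ∧ l < k ∧ ι l = ι k}

/-- The linear form `β_k` (with `β_0 = 0`). -/
def beta (A : ℕ → ℕ → ℤ) (ι : ℕ → ℕ) (k : ℕ) : ℕ → ℚ :=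
  if k = 0 then 0
  else xc k + (∑ j ∈ Finset.Ioo k (kplus ι k), (A (ι k) (ι j) : ℚ) • xc j) + xc (kplus ι k)

/-- The piecewise-linear operator `S_k`. -/
def Sop (A : ℕ → ℕ → ℤ) (ι : ℕ → ℕ) (k : ℕ) (φ : ℕ → ℚ) : ℕ → ℚ :=
  if 0 < φ k then φ - φ k • beta A ι k
  else φ - φ k • beta A ι (kminus ι k)

/-- Membership in `Ξ_ι`: forms obtained from some `x_{j_0}` by finitely many operators `S_k`. -/
inductive XiMem (A : ℕ → ℕ → ℤ) (ι : ℕ → ℕ) : (ℕ → ℚ) → Prop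
  | base (k : ℕ) (hk : 1 ≤ k) : XiMem A ι (xc k)
  | step (k : ℕ) (hk : 1 ≤ k) (φ : ℕ → ℚ) (h : XiMem A ι φ) : XiMem A ι (Sop A ι k φ)

/-- The set `Ξ_ι`. -/
def Xi (A : ℕ → ℕ → ℤ) (ι : ℕ → ℕ) : Set (ℕ → ℚ) := { φ | XiMem A ι φ }

/-- Forms obtained from a set `g` of generators by finitely many operators `S_k`. -/
inductive XiMemFrom (A : ℕ → ℕ → ℤ) (ι : ℕ → ℕ) (g : Set (ℕ → ℚ)) : (ℕ → ℚ) → Prop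
  | base (φ : ℕ → ℚ) (h : φ ∈ g) : XiMemFrom A ι g φ
  | step (k : ℕ) (hk : 1 ≤ k) (φ : ℕ → ℚ) (h : XiMemFrom A ι g φ) :
      XiMemFrom A ι g (Sop A ι k φ)

/-- `ι` is adapted to the Cartan matrix `A`: for `i ≠ j` with `a_{i,j} ≠ 0`, consecutive
members of the subsequence of `ι` consisting of the letters `i`, `j` are distinct. -/
def Adapted (n : ℕ) (A : ℕ → ℕ → ℤ) (ι : ℕ → ℕ) : Prop :=
  ∀ i j, 1 ≤ i → i ≤ n → 1 ≤ j → j ≤ n → i ≠ j → A i j ≠ 0 →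
    ∀ k l, 1 ≤ k → k < l → (ι k = i ∨ ι k = j) → (ι l = i ∨ ι l = j) →
      (∀ m, k < m → m < l → ι m ≠ i ∧ ι m ≠ j) → ι k ≠ ι l

/-- Position of the first occurrence of the letter `i` in `ι`. -/
def firstOcc (ι : ℕ → ℕ) (i : ℕ) : ℕ := sInf {k | 1 ≤ k ∧ ι k = i}

/-- `p_{i,j} = 1` iff the first occurrence of `i` precedes the first occurrence of `j`. -/
def pval (ι : ℕ → ℕ) (i j : ℕ) : ℕ := if firstOcc ι i < firstOcc ι j then 1 else 0

/-- The function `P(k)` for types A, B, C (and `P(k) = 0` for `k > n`, `k ≤ 1`). -/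
def PABC (ι : ℕ → ℕ) (n k : ℕ) : ℕ :=
  if k ≤ n then ∑ t ∈ Finset.Icc 2 k, pval ι t (t - 1) else 0

/-- The function `P(k)` for type D. -/
def PD (ι : ℕ → ℕ) (n k : ℕ) : ℕ :=
  if k = n then (∑ t ∈ Finset.Icc 2 (n - 2), pval ι t (t - 1)) + pval ι n (n - 2)
  else if k ≤ n then ∑ t ∈ Finset.Icc 2 k, pval ι t (t - 1) else 0

/-- `occPos ι j s`: the position of the `s`-th occurrence of the letter `j` in `ι`
(`0` for `s = 0`). -/
def occPos (ι : ℕ → ℕ) (j : ℕ) : ℕ → ℕ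
  | 0 => 0
  | s + 1 => sInf {k | occPos ι j s < k ∧ ι k = j}

/-- The double-indexed coordinate form `x_{s,j}`, with the conventions
`x_{s,0} = x_{s,n+1} = 0` and `x_{s,j} = 0` for `s ≤ 0`. -/
def xsj (ι : ℕ → ℕ) (n : ℕ) (s : ℤ) (j : ℕ) : ℕ → ℚ :=
  if 1 ≤ s ∧ 1 ≤ j ∧ j ≤ n then xc (occPos ι j s.toNat) else 0

/-- The double-indexed form `β_{s,j}`. -/
def betasj (A : ℕ → ℕ → ℤ) (ι : ℕ → ℕ) (s : ℤ) (j : ℕ) : ℕ → ℚ :=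
  beta A ι (occPos ι j s.toNat)

/-- The double-indexed operator `S_{m,j}`. -/
def Ssj (A : ℕ → ℕ → ℤ) (ι : ℕ → ℕ) (m j : ℕ) (φ : ℕ → ℚ) : ℕ → ℚ :=
  Sop A ι (occPos ι j m) φ

/- Entries of the ordered sets `J_X` are encoded as natural numbers:
an unbarred entry `j ∈ {1,…,n}` is encoded as `j`, a barred entry `j̄` is
encoded as `2n+1-j` (so that `n̄ = n+1, …, 1̄ = 2n` and the total order of
`J_B = J_C` is the numerical order), and the extra symbol `ovl(n+1)` of
types C and D is encoded as `0`. -/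

/-- The box of type A. -/
def boxA (ι : ℕ → ℕ) (n : ℕ) (s : ℤ) (j : ℕ) : ℕ → ℚ :=
  xsj ι n (s + (PABC ι n j : ℤ)) j - xsj ι n (s + (PABC ι n (j - 1) : ℤ) + 1) (j - 1)

/-- The box of type B. -/
def boxB (ι : ℕ → ℕ) (n : ℕ) (s : ℤ) (e : ℕ) : ℕ → ℚ :=
  if e ≤ n then
    xsj ι n (s + (PABC ι n e : ℤ)) e - xsj ι n (s + (PABC ι n (e - 1) : ℤ) + 1) (e - 1)
  else
    xsj ι n (s + (PABC ι n (2 * n - e) : ℤ) + (n : ℤ) - ((2 * n + 1 - e : ℕ) : ℤ) + 1)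
        (2 * n - e)
      - xsj ι n (s + (PABC ι n (2 * n + 1 - e) : ℤ) + (n : ℤ) - ((2 * n + 1 - e : ℕ) : ℤ) + 1)
          (2 * n + 1 - e)

/-- The box of type C (`ovl(n+1)` encoded as `0`). -/
def boxC (ι : ℕ → ℕ) (n : ℕ) (s : ℤ) (e : ℕ) : ℕ → ℚ :=
  if e = 0 then xsj ι n (s + (PABC ι n n : ℤ)) n
  else if e < n then
    xsj ι n (s + (PABC ι n e : ℤ)) e - xsj ι n (s + (PABC ι n (e - 1) : ℤ) + 1) (e - 1)
  else if e = n then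
    (2 : ℚ) • xsj ι n (s + (PABC ι n n : ℤ)) n
      - xsj ι n (s + (PABC ι n (n - 1) : ℤ) + 1) (n - 1)
  else if e = n + 1 then
    xsj ι n (s + (PABC ι n (n - 1) : ℤ) + 1) (n - 1)
      - (2 : ℚ) • xsj ι n (s + (PABC ι n n : ℤ) + 1) n
  else
    xsj ι n (s + (PABC ι n (2 * n - e) : ℤ) + (n : ℤ) - ((2 * n + 1 - e : ℕ) : ℤ) + 1)
        (2 * n - e)
      - xsj ι n (s + (PABC ι n (2 * n + 1 - e) : ℤ) + (n : ℤ) - ((2 * n + 1 - e : ℕ) : ℤ) + 1)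
          (2 * n + 1 - e)

/-- The box of type D (`ovl(n+1)` encoded as `0`, `n̄` as `n+1`, `ovl(n-1)` as `n+2`). -/
def boxD (ι : ℕ → ℕ) (n : ℕ) (s : ℤ) (e : ℕ) : ℕ → ℚ :=
  if e = 0 then xsj ι n (s + (PD ι n n : ℤ)) n
  else if e ≤ n - 2 then
    xsj ι n (s + (PD ι n e : ℤ)) e - xsj ι n (s + (PD ι n (e - 1) : ℤ) + 1) (e - 1)
  else if e = n - 1 then
    xsj ι n (s + (PD ι n (n - 1) : ℤ)) (n - 1) + xsj ι n (s + (PD ι n n : ℤ)) n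
      - xsj ι n (s + (PD ι n (n - 2) : ℤ) + 1) (n - 2)
  else if e = n then
    xsj ι n (s + (PD ι n n : ℤ)) n - xsj ι n (s + (PD ι n (n - 1) : ℤ) + 1) (n - 1)
  else if e = n + 1 then
    xsj ι n (s + (PD ι n (n - 1) : ℤ)) (n - 1) - xsj ι n (s + (PD ι n n : ℤ) + 1) n
  else if e = n + 2 then
    xsj ι n (s + (PD ι n (n - 2) : ℤ) + 1) (n - 2)
      - xsj ι n (s + (PD ι n (n - 1) : ℤ) + 1) (n - 1)
      - xsj ι n (s + (PD ι n n : ℤ) + 1) n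
  else
    xsj ι n (s + (PD ι n (2 * n - e) : ℤ) + (n : ℤ) - ((2 * n + 1 - e : ℕ) : ℤ)) (2 * n - e)
      - xsj ι n (s + (PD ι n (2 * n + 1 - e) : ℤ) + (n : ℤ) - ((2 * n + 1 - e : ℕ) : ℤ))
          (2 * n + 1 - e)

/-- The column tableau `[j_1,…,j_k]_s = Σ_{i=1}^k box_{s+k-i}(j_i)`. -/
def tab (box : ℤ → ℕ → ℕ → ℚ) (s : ℤ) (k : ℕ) (j : ℕ → ℕ) : ℕ → ℚ :=
  ∑ i ∈ Finset.Icc 1 k, box (s + (k : ℤ) - (i : ℤ)) (j i)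

/-- The set `Tab_{A,ι}`. -/
def TabA (ι : ℕ → ℕ) (n : ℕ) : Set (ℕ → ℚ) :=
  { T | ∃ (k : ℕ) (s : ℤ) (j : ℕ → ℕ),
      1 ≤ k ∧ k ≤ n ∧
      (∀ i, 1 ≤ i → i ≤ k → 1 ≤ j i ∧ j i ≤ n + 1) ∧
      (∀ i, 1 ≤ i → i < k → j i < j (i + 1)) ∧
      1 - (PABC ι n k : ℤ) ≤ s ∧
      T = tab (boxA ι n) s k j }

/-- `|·|` on encoded entries of `J_B = J_C`. -/
def absJ (n e : ℕ) : ℕ := if e ≤ n then e else 2 * n + 1 - e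

/-- The set `Tab_{B,ι}`. -/
def TabB (ι : ℕ → ℕ) (n : ℕ) : Set (ℕ → ℚ) :=
  { T | ∃ (k : ℕ) (s : ℤ) (j : ℕ → ℕ),
      1 ≤ k ∧ k ≤ n ∧
      (∀ i, 1 ≤ i → i ≤ k → 1 ≤ j i ∧ j i ≤ 2 * n) ∧
      (∀ i, 1 ≤ i → i < k → j i < j (i + 1)) ∧
      (k = n → ∀ l m, 1 ≤ l → l < m → m ≤ k → absJ n (j l) ≠ absJ n (j m)) ∧
      1 - (PABC ι n k : ℤ) ≤ s ∧
      T = tab (boxB ι n) s k j }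

/-- Defining conditions of `Tab_{C,ι}` on the data `(k,s,j)`. -/
def TabCcond (ι : ℕ → ℕ) (n : ℕ) (k : ℕ) (s : ℤ) (j : ℕ → ℕ) : Prop :=
  (1 ≤ k ∧ k ≤ n - 1 ∧
    (∀ i, 1 ≤ i → i ≤ k → 1 ≤ j i ∧ j i ≤ 2 * n) ∧
    (∀ i, 1 ≤ i → i < k → j i < j (i + 1)) ∧
    1 - (PABC ι n k : ℤ) ≤ s)
  ∨
  (j 1 = 0 ∧ 1 ≤ k ∧ k ≤ n + 1 ∧
    (∀ i, 2 ≤ i → i ≤ k → n + 1 ≤ j i ∧ j i ≤ 2 * n) ∧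
    (∀ i, 2 ≤ i → i < k → j i < j (i + 1)) ∧
    1 - (PABC ι n n : ℤ) ≤ s)

/-- The set `Tab_{C,ι}`. -/
def TabC (ι : ℕ → ℕ) (n : ℕ) : Set (ℕ → ℚ) :=
  { T | ∃ k s j, TabCcond ι n k s j ∧ T = tab (boxC ι n) s k j }

/-- The partial order on (encoded) `J_D`: `a ≤ b` iff `a = b`, or `a < b` numerically and
`(a,b)` is not the incomparable pair `(n, n̄)`. -/
def leD (n a b : ℕ) : Prop := a = b ∨ (a < b ∧ ¬(a = n ∧ b = n + 1))

/-- Defining conditions of `Tab_{D,ι}` on the data `(k,s,j)`. -/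
def TabDcond (ι : ℕ → ℕ) (n : ℕ) (k : ℕ) (s : ℤ) (j : ℕ → ℕ) : Prop :=
  (1 ≤ k ∧ k ≤ n - 2 ∧
    (∀ i, 1 ≤ i → i ≤ k → 1 ≤ j i ∧ j i ≤ 2 * n) ∧
    (∀ i, 1 ≤ i → i < k → ¬ leD n (j (i + 1)) (j i)) ∧
    1 - (PD ι n k : ℤ) ≤ s)
  ∨
  (j 1 = 0 ∧ 1 ≤ k ∧ k ≤ n + 1 ∧
    (∀ i, 2 ≤ i → i ≤ k → n + 1 ≤ j i ∧ j i ≤ 2 * n) ∧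
    (∀ i, 2 ≤ i → i < k → j i < j (i + 1)) ∧
    (k % 2 = 0 → 1 - (PD ι n (n - 1) : ℤ) ≤ s) ∧
    (k % 2 = 1 → 1 - (PD ι n n : ℤ) ≤ s))

/-- The set `Tab_{D,ι}`. -/
def TabD (ι : ℕ → ℕ) (n : ℕ) : Set (ℕ → ℚ) :=
  { T | ∃ k s j, TabDcond ι n k s j ∧ T = tab (boxD ι n) s k j }

end

section XiTabProof

/-! ### Occurrences of letters -/

lemma occ_spec {n : ℕ} {ι : ℕ → ℕ} (hadm : Admissible n ι) {i : ℕ} (hi : 1 ≤ i) (hin : i ≤ n)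
    (s : ℕ) : occPos ι i s < occPos ι i (s + 1) ∧ ι (occPos ι i (s + 1)) = i := by
  have hne : {k | occPos ι i s < k ∧ ι k = i}.Nonempty := by
    obtain ⟨k, hk, hk'⟩ := hadm.2.2 i hi hin (occPos ι i s + 1)
    exact ⟨k, by simpa using hk, hk'⟩
  exact Nat.sInf_mem hne

lemma occ_next {ι : ℕ → ℕ} {i : ℕ} {s k : ℕ} (h : occPos ι i s < k) (hk : ι k = i) :
    occPos ι i (s + 1) ≤ k := Nat.sInf_le ⟨h, hk⟩

lemma occ_mono {n : ℕ} {ι : ℕ → ℕ} (hadm : Admissible n ι) {i : ℕ} (hi : 1 ≤ i) (hin : i ≤ n) :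
    StrictMono (occPos ι i) :=
  strictMono_nat_of_lt_succ fun s => (occ_spec hadm hi hin s).1

lemma occ_letter {n : ℕ} {ι : ℕ → ℕ} (hadm : Admissible n ι) {i : ℕ} (hi : 1 ≤ i) (hin : i ≤ n)
    {m : ℕ} (hm : 1 ≤ m) : ι (occPos ι i m) = i := by
  obtain ⟨s, rfl⟩ : ∃ s, m = s + 1 := ⟨m - 1, by omega⟩
  exact (occ_spec hadm hi hin s).2

lemma occ_pos {n : ℕ} {ι : ℕ → ℕ} (hadm : Admissible n ι) {i : ℕ} (hi : 1 ≤ i) (hin : i ≤ n)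
    {m : ℕ} (hm : 1 ≤ m) : 1 ≤ occPos ι i m :=
  le_trans hm ((occ_mono hadm hi hin).le_apply)

lemma occ_surj {n : ℕ} {ι : ℕ → ℕ} (hadm : Admissible n ι) {k : ℕ} (hk : 1 ≤ k) :
    ∃ m, 1 ≤ m ∧ occPos ι (ι k) m = k := by
  obtain ⟨hi, hin⟩ := hadm.1 k hk
  have hex : ∃ s, k ≤ occPos ι (ι k) s := ⟨k, (occ_mono hadm hi hin).le_apply⟩
  classical
  have h1 := Nat.find_spec hex
  have h0 : Nat.find hex ≠ 0 := by
    intro h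
    rw [h] at h1
    simp [occPos] at h1
    omega
  obtain ⟨s, hs⟩ : ∃ s, Nat.find hex = s + 1 := ⟨Nat.find hex - 1, by omega⟩
  have h2 : ¬ k ≤ occPos ι (ι k) s := Nat.find_min hex (by omega)
  rw [hs] at h1
  refine ⟨s + 1, by omega, le_antisymm (occ_next (by omega) rfl) h1⟩

lemma kplus_occ {n : ℕ} {ι : ℕ → ℕ} (hadm : Admissible n ι) {i : ℕ} (hi : 1 ≤ i) (hin : i ≤ n)
    {m : ℕ} (hm : 1 ≤ m) : kplus ι (occPos ι i m) = occPos ι i (m + 1) := by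
  rw [kplus, occ_letter hadm hi hin hm, occPos]

lemma kminus_occ {n : ℕ} {ι : ℕ → ℕ} (hadm : Admissible n ι) {i : ℕ} (hi : 1 ≤ i) (hin : i ≤ n)
    (m : ℕ) : kminus ι (occPos ι i (m + 1)) = occPos ι i m := by
  rw [kminus, (occ_spec hadm hi hin m).2]
  have hup : ∀ l, 0 < l ∧ l < occPos ι i (m + 1) ∧ ι l = i → l ≤ occPos ι i m := by
    rintro l ⟨_, h2, h3⟩
    by_contra h
    have := occ_next (ι := ι) (not_le.mp h) h3
    omega
  rcases Nat.eq_zero_or_pos m with rfl | hm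
  · have : {l | 0 < l ∧ l < occPos ι i (0 + 1) ∧ ι l = i} = ∅ := by
      ext l
      simp only [Set.mem_ofPred_eq, Set.mem_empty_iff_false, iff_false]
      intro h
      have := hup l h
      simp [occPos] at this
      omega
    rw [this]; simp [occPos]
  · exact IsGreatest.csSup_eq ⟨⟨occ_pos hadm hi hin hm, (occ_spec hadm hi hin m).1,
      occ_letter hadm hi hin hm⟩, hup⟩

lemma occ_one {ι : ℕ → ℕ} {i : ℕ} : occPos ι i 1 = firstOcc ι i := by
  simp [occPos, firstOcc, Nat.succ_le_iff]

/-- Interleaving of two adjacent letters. -/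
lemma interleave {n : ℕ} {ι : ℕ → ℕ} (hadm : Admissible n ι) {A : ℕ → ℕ → ℤ}
    (hadap : Adapted n A ι) {i j : ℕ} (hi : 1 ≤ i) (hin : i ≤ n) (hj : 1 ≤ j) (hjn : j ≤ n)
    (hij : i ≠ j) (hA : A i j ≠ 0) (hf : firstOcc ι i < firstOcc ι j) (m : ℕ) :
    occPos ι j m < occPos ι i (m + 1) ∧ occPos ι i (m + 1) < occPos ι j (m + 1) := by
  have hd : ∀ a b, 1 ≤ a → 1 ≤ b → occPos ι i a ≠ occPos ι j b := by
    intro a b ha hb h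
    have h1 := occ_letter hadm hi hin ha
    have h2 := occ_letter hadm hj hjn hb
    rw [h] at h1
    exact hij (h1.symm.trans h2)
  have noocc : ∀ {q : ℕ} {a l : ℕ}, occPos ι q a < l → l < occPos ι q (a + 1) → ι l ≠ q := by
    intro q a l h1 h2 h3
    have := occ_next h1 h3
    omega
  induction m with
  | zero =>
    refine ⟨occ_pos hadm hi hin le_rfl, ?_⟩
    rw [zero_add, occ_one, occ_one]; exact hf
  | succ m ih =>
    obtain ⟨h1, h2⟩ := ih
    have h3 : occPos ι j (m + 1) < occPos ι i (m + 1 + 1) := by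
      by_contra h
      have hlt := (occ_spec hadm hi hin (m + 1)).1
      refine hadap i j hi hin hj hjn hij hA (occPos ι i (m + 1)) (occPos ι i (m + 1 + 1))
        (occ_pos hadm hi hin (by omega)) hlt (Or.inl (occ_letter hadm hi hin (by omega)))
        (Or.inl (occ_letter hadm hi hin (by omega))) ?_ ?_
      · intro l hl1 hl2
        exact ⟨noocc hl1 hl2, noocc (a := m) (by omega) (by omega)⟩
      · rw [occ_letter hadm hi hin (by omega), occ_letter hadm hi hin (by omega)]
    refine ⟨h3, ?_⟩
    by_contra h
    have hlt := (occ_spec hadm hj hjn (m + 1)).1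
    have hne := hd (m + 1 + 1) (m + 1 + 1) (by omega) (by omega)
    refine hadap i j hi hin hj hjn hij hA (occPos ι j (m + 1)) (occPos ι j (m + 1 + 1))
      (occ_pos hadm hj hjn (by omega)) hlt (Or.inr (occ_letter hadm hj hjn (by omega)))
      (Or.inr (occ_letter hadm hj hjn (by omega))) ?_ ?_
    · intro l hl1 hl2
      exact ⟨noocc (a := m + 1) (by omega) (by omega), noocc hl1 hl2⟩
    · rw [occ_letter hadm hj hjn (by omega), occ_letter hadm hj hjn (by omega)]

lemma firstOcc_ne {n : ℕ} {ι : ℕ → ℕ} (hadm : Admissible n ι) {i j : ℕ}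
    (hi : 1 ≤ i) (hin : i ≤ n) (hj : 1 ≤ j) (hjn : j ≤ n) (hij : i ≠ j) :
    firstOcc ι i ≠ firstOcc ι j := by
  intro h
  have h1 := occ_letter hadm hi hin (m := 1) le_rfl
  have h2 := occ_letter hadm hj hjn (m := 1) le_rfl
  rw [occ_one] at h1 h2
  rw [h] at h1
  exact hij (h1.symm.trans h2)

lemma pval_add {n : ℕ} {ι : ℕ → ℕ} (hadm : Admissible n ι) {i j : ℕ}
    (hi : 1 ≤ i) (hin : i ≤ n) (hj : 1 ≤ j) (hjn : j ≤ n) (hij : i ≠ j) :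
    pval ι i j + pval ι j i = 1 := by
  have := firstOcc_ne hadm hi hin hj hjn hij
  unfold pval
  split_ifs <;> omega

/-- The unique occurrence of `j` between two consecutive occurrences of an adjacent letter `i`. -/
lemma between {n : ℕ} {ι : ℕ → ℕ} (hadm : Admissible n ι) {A : ℕ → ℕ → ℤ}
    (hadap : Adapted n A ι) {i j : ℕ} (hi : 1 ≤ i) (hin : i ≤ n) (hj : 1 ≤ j) (hjn : j ≤ n)
    (hij : i ≠ j) (hA : A i j ≠ 0) (hA' : A j i ≠ 0) {m : ℕ} (hm : 1 ≤ m) (l : ℕ) :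
    ((occPos ι i m < l ∧ l < occPos ι i (m + 1)) ∧ ι l = j) ↔
      l = occPos ι j (m + pval ι j i) := by
  have hne := firstOcc_ne hadm hi hin hj hjn hij
  have hmonoj := occ_mono hadm hj hjn
  have key : occPos ι i m < occPos ι j (m + pval ι j i) ∧
      occPos ι j (m + pval ι j i) < occPos ι i (m + 1) ∧
      (∀ u, occPos ι i m < occPos ι j u → m + pval ι j i ≤ u) ∧
      (∀ u, occPos ι j u < occPos ι i (m + 1) → u ≤ m + pval ι j i) := by
    obtain ⟨m, rfl⟩ : ∃ q, m = q + 1 := ⟨m - 1, by omega⟩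
    by_cases hf : firstOcc ι i < firstOcc ι j
    · have hp : pval ι j i = 0 := by unfold pval; rw [if_neg (by omega)]
      rw [hp]
      have a1 := interleave hadm hadap hi hin hj hjn hij hA hf m
      have a2 := interleave hadm hadap hi hin hj hjn hij hA hf (m + 1)
      refine ⟨a1.2, a2.1, ?_, ?_⟩
      · intro u hu
        have : occPos ι j m < occPos ι j u := by omega
        have := hmonoj.lt_iff_lt.mp this
        omega
      · intro u hu
        have : occPos ι j u < occPos ι j (m + 1 + 1) := by omega
        have := hmonoj.lt_iff_lt.mp this
        omega
    · have hp : pval ι j i = 1 := by unfold pval; rw [if_pos (by omega)]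
      rw [hp]
      have a1 := interleave hadm hadap hj hjn hi hin hij.symm hA' (by omega) m
      have a2 := interleave hadm hadap hj hjn hi hin hij.symm hA' (by omega) (m + 1)
      have a3 := interleave hadm hadap hj hjn hi hin hij.symm hA' (by omega) (m + 1 + 1)
      refine ⟨a2.1, a2.2, ?_, ?_⟩
      · intro u hu
        have : occPos ι j (m + 1) < occPos ι j u := by omega
        have := hmonoj.lt_iff_lt.mp this
        omega
      · intro u hu
        have : occPos ι j u < occPos ι j (m + 1 + 1 + 1) := by omega
        have := hmonoj.lt_iff_lt.mp this
        omega
  obtain ⟨k1, k2, k3, k4⟩ := key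
  constructor
  · rintro ⟨⟨h1, h2⟩, h3⟩
    obtain ⟨u, hu1, hu⟩ := occ_surj hadm (k := l) (by omega)
    rw [h3] at hu
    subst hu
    rw [le_antisymm (k3 u h1) (k4 u h2)]
  · rintro rfl
    exact ⟨⟨k1, k2⟩, occ_letter hadm hj hjn (by omega)⟩

/-! ### Normalized coordinates -/

/-- The normalized coordinate form. -/
noncomputable def yv (ι : ℕ → ℕ) (n i : ℕ) (t : ℤ) : ℕ → ℚ := xsj ι n (t + (PD ι n i : ℤ)) i

/-- The position of the normalized coordinate. -/
noncomputable def ypos (ι : ℕ → ℕ) (n i : ℕ) (t : ℤ) : ℕ := occPos ι i (t + (PD ι n i : ℤ)).toNat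

/-- The sum of neighbours appearing in `β`. -/
noncomputable def nbf (ι : ℕ → ℕ) (n i : ℕ) (t : ℤ) : ℕ → ℚ :=
  if i + 3 ≤ n then yv ι n (i - 1) (t + 1) + yv ι n (i + 1) t
  else if i + 2 = n then yv ι n (n - 3) (t + 1) + yv ι n (n - 1) t + yv ι n n t
  else yv ι n (n - 2) (t + 1)

/-- The normalized form `β`. -/
noncomputable def bf (ι : ℕ → ℕ) (n i : ℕ) (t : ℤ) : ℕ → ℚ :=
  yv ι n i t + yv ι n i (t + 1) - nbf ι n i t

lemma PD_zero {ι : ℕ → ℕ} {n : ℕ} (hn : 4 ≤ n) : PD ι n 0 = 0 := by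
  unfold PD
  rw [if_neg (by omega)]
  simp

lemma PD_one {ι : ℕ → ℕ} {n : ℕ} (hn : 4 ≤ n) : PD ι n 1 = 0 := by
  unfold PD
  rw [if_neg (by omega)]
  simp

lemma PD_succ {ι : ℕ → ℕ} {n i : ℕ} (_hn : 4 ≤ n) (hi : 1 ≤ i) (hin : i + 2 ≤ n) :
    PD ι n (i + 1) = PD ι n i + pval ι (i + 1) i := by
  unfold PD
  rw [if_neg (by omega), if_pos (by omega), if_neg (by omega), if_pos (by omega),
    Finset.sum_Icc_succ_top (by omega)]
  simp

lemma PD_n {ι : ℕ → ℕ} {n : ℕ} (hn : 4 ≤ n) :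
    PD ι n n = PD ι n (n - 2) + pval ι n (n - 2) := by
  unfold PD
  rw [if_pos rfl, if_neg (by omega), if_pos (by omega)]

lemma pval_le {ι : ℕ → ℕ} {i j : ℕ} : pval ι i j ≤ 1 := by
  unfold pval; split_ifs <;> omega

lemma PD_lip {ι : ℕ → ℕ} {n : ℕ} (hn : 4 ≤ n) {i k : ℕ} (hi : 1 ≤ i) (hik : i ≤ k)
    (hk : k + 1 ≤ n) : PD ι n i ≤ PD ι n k ∧ PD ι n k + i ≤ PD ι n i + k := by
  induction k, hik using Nat.le_induction with
  | base => exact ⟨le_rfl, le_rfl⟩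
  | succ k hk' ih =>
    have h1 := ih (by omega)
    have h2 := PD_succ (ι := ι) hn (i := k) (by omega) (by omega)
    have h3 := pval_le (ι := ι) (i := k + 1) (j := k)
    omega

lemma PD_n_lip {ι : ℕ → ℕ} {n : ℕ} (hn : 4 ≤ n) :
    PD ι n (n - 2) ≤ PD ι n n ∧ PD ι n n ≤ PD ι n (n - 2) + 1 ∧
    PD ι n (n - 2) ≤ PD ι n (n - 1) ∧ PD ι n (n - 1) ≤ PD ι n (n - 2) + 1 := by
  have h2 := PD_n (ι := ι) hn
  have h3 := pval_le (ι := ι) (i := n) (j := n - 2)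
  have h4 := PD_lip (ι := ι) hn (i := n - 2) (k := n - 1) (by omega) (by omega) (by omega)
  omega

lemma yv_zero {ι : ℕ → ℕ} {n : ℕ} (t : ℤ) : yv ι n 0 t = 0 := by
  simp [yv, xsj]

lemma yv_valid {ι : ℕ → ℕ} {n i : ℕ} {t : ℤ} (hi : 1 ≤ i) (hin : i ≤ n)
    (ht : 1 ≤ t + (PD ι n i : ℤ)) : yv ι n i t = xc (ypos ι n i t) := by
  rw [yv, xsj, if_pos ⟨ht, hi, hin⟩, ypos]

lemma yv_eval {n : ℕ} {ι : ℕ → ℕ} (hadm : Admissible n ι) {i : ℕ} {t : ℤ} (hi : 1 ≤ i)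
    (hin : i ≤ n) (ht : 1 ≤ t + (PD ι n i : ℤ)) (j : ℕ) (u : ℤ) :
    yv ι n j u (ypos ι n i t) = if j = i ∧ u = t then 1 else 0 := by
  unfold yv xsj
  by_cases h : 1 ≤ u + (PD ι n j : ℤ) ∧ 1 ≤ j ∧ j ≤ n
  · rw [if_pos h]
    obtain ⟨h1, h2, h3⟩ := h
    unfold xc ypos
    congr 1
    rw [eq_iff_iff]
    constructor
    · intro he
      have l1 := occ_letter hadm hi hin (m := (t + (PD ι n i : ℤ)).toNat) (by omega)
      have l2 := occ_letter hadm h2 h3 (m := (u + (PD ι n j : ℤ)).toNat) (by omega)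
      rw [he] at l1
      have hij : j = i := l2.symm.trans l1
      subst hij
      have := (occ_mono hadm hi hin).injective he
      exact ⟨rfl, by omega⟩
    · rintro ⟨rfl, rfl⟩; rfl
  · rw [if_neg h, if_neg]
    · rfl
    · rintro ⟨rfl, rfl⟩
      exact h ⟨ht, hi, hin⟩

lemma ypos_surj {n : ℕ} {ι : ℕ → ℕ} (hadm : Admissible n ι) {k : ℕ} (hk : 1 ≤ k) :
    ∃ i t, 1 ≤ i ∧ i ≤ n ∧ 1 ≤ t + (PD ι n i : ℤ) ∧ ypos ι n i t = k := by
  obtain ⟨m, hm, h⟩ := occ_surj hadm hk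
  refine ⟨ι k, (m : ℤ) - PD ι n (ι k), (hadm.1 k hk).1, (hadm.1 k hk).2, by omega, ?_⟩
  unfold ypos
  rw [show ((m : ℤ) - PD ι n (ι k) + PD ι n (ι k)).toNat = m by omega, h]

lemma ypos_pos {n : ℕ} {ι : ℕ → ℕ} (hadm : Admissible n ι) {i : ℕ} {t : ℤ} (hi : 1 ≤ i)
    (hin : i ≤ n) (ht : 1 ≤ t + (PD ι n i : ℤ)) : 1 ≤ ypos ι n i t :=
  occ_pos hadm hi hin (by omega)

lemma cartanD_adj {n i j : ℕ} (hij : i ≠ j)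
    (h : (i + 1 = j ∧ j + 1 ≤ n) ∨ (j + 1 = i ∧ i + 1 ≤ n) ∨ (i = n ∧ j + 2 = n) ∨
      (i + 2 = n ∧ j = n)) : cartanD n i j = -1 := by
  unfold cartanD
  rw [if_neg hij, if_neg (by omega), if_pos (by omega)]

lemma cartanD_nadj {n i j : ℕ} (hij : i ≠ j) (hi : i ≤ n) (hj : j ≤ n)
    (h : ¬ ((i + 1 = j ∧ j + 1 ≤ n) ∨ (j + 1 = i ∧ i + 1 ≤ n) ∨ (i = n ∧ j + 2 = n) ∨
      (i + 2 = n ∧ j = n))) : cartanD n i j = 0 := by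
  unfold cartanD
  rw [if_neg hij]
  split_ifs
  · rfl
  · omega
  · rfl

lemma yv_nb {n : ℕ} {ι : ℕ → ℕ} (hadm : Admissible n ι)
    (hadap : Adapted n (cartanD n) ι) {i : ℕ} {t : ℤ} (hi : 1 ≤ i)
    (hin : i ≤ n) (ht : 1 ≤ t + (PD ι n i : ℤ)) {j : ℕ} (hj : 1 ≤ j) (hjn : j ≤ n) (hij : i ≠ j)
    (h : (i + 1 = j ∧ j + 1 ≤ n) ∨ (j + 1 = i ∧ i + 1 ≤ n) ∨ (i = n ∧ j + 2 = n) ∨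
      (i + 2 = n ∧ j = n)) {u : ℤ}
    (hu : u + (PD ι n j : ℤ) = t + (PD ι n i : ℤ) + pval ι j i) (l : ℕ) :
    yv ι n j u l = if (ypos ι n i t < l ∧ l < ypos ι n i (t + 1)) ∧ ι l = j then 1 else 0 := by
  have hb := between hadm hadap hi hin hj hjn hij (by rw [cartanD_adj hij h]; decide)
    (by rw [cartanD_adj hij.symm (by omega)]; decide)
    (m := (t + (PD ι n i : ℤ)).toNat) (by omega) l
  have e1 : (t + 1 + (PD ι n i : ℤ)).toNat = (t + (PD ι n i : ℤ)).toNat + 1 := by omega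
  have e2 : (u + (PD ι n j : ℤ)).toNat = (t + (PD ι n i : ℤ)).toNat + pval ι j i := by omega
  unfold yv xsj ypos
  rw [if_pos ⟨by omega, hj, hjn⟩, e1, e2]
  unfold xc
  congr 1
  rw [eq_iff_iff, hb]

lemma beta_ypos {n : ℕ} (hn : 4 ≤ n) {ι : ℕ → ℕ} (hadm : Admissible n ι)
    (hadap : Adapted n (cartanD n) ι) {i : ℕ} {t : ℤ} (hi : 1 ≤ i)
    (hin : i ≤ n) (ht : 1 ≤ t + (PD ι n i : ℤ)) :
    beta (cartanD n) ι (ypos ι n i t) = bf ι n i t := by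
  have e1 : (t + 1 + (PD ι n i : ℤ)).toNat = (t + (PD ι n i : ℤ)).toNat + 1 := by omega
  have hkp : kplus ι (ypos ι n i t) = ypos ι n i (t + 1) := by
    unfold ypos
    rw [kplus_occ hadm hi hin (by omega), e1]
  have hp := ypos_pos hadm hi hin ht
  have hl : ι (ypos ι n i t) = i := occ_letter hadm hi hin (by omega)
  unfold beta bf
  rw [if_neg (by omega), hkp, hl, yv_valid hi hin ht, yv_valid hi hin (t := t + 1) (by omega)]
  have key : (∑ j ∈ Finset.Ioo (ypos ι n i t) (ypos ι n i (t + 1)),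
      (cartanD n i (ι j) : ℚ) • xc j) = - nbf ι n i t := by
    funext l
    rw [Finset.sum_apply]
    have hs : (∑ j ∈ Finset.Ioo (ypos ι n i t) (ypos ι n i (t + 1)),
        ((cartanD n i (ι j) : ℚ) • xc j) l) =
        if ypos ι n i t < l ∧ l < ypos ι n i (t + 1) then (cartanD n i (ι l) : ℚ) else 0 := by
      simp only [xc, Pi.smul_apply, smul_eq_mul, mul_ite, mul_one, mul_zero,
        Finset.sum_ite_eq, Finset.mem_Ioo]
    rw [hs]
    have nb := fun {j : ℕ} (a : 1 ≤ j) (b : j ≤ n) (c : i ≠ j) d {u : ℤ} e =>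
      yv_nb hadm hadap hi hin ht (j := j) a b c d (u := u) e l
    have hq : ypos ι n i t < l ∧ l < ypos ι n i (t + 1) → 1 ≤ ι l ∧ ι l ≤ n ∧ ι l ≠ i := by
      rintro ⟨h1, h2⟩
      refine ⟨(hadm.1 l (by omega)).1, (hadm.1 l (by omega)).2, fun h => ?_⟩
      have := occ_next (ι := ι) h1 h
      unfold ypos at h2
      rw [e1] at h2
      omega
    have pa := fun {a b : ℕ} (h1 : 1 ≤ a) (h2 : a ≤ n) (h3 : 1 ≤ b) (h4 : b ≤ n) (h5 : a ≠ b) =>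
      pval_add hadm h1 h2 h3 h4 h5
    rw [Pi.neg_apply]
    -- the value of the Cartan matrix in the open interval
    have hc : ∀ q, 1 ≤ q → q ≤ n → q ≠ i → (cartanD n i q : ℚ) =
        if ((i + 1 = q ∧ q + 1 ≤ n) ∨ (q + 1 = i ∧ i + 1 ≤ n) ∨ (i = n ∧ q + 2 = n) ∨
      (i + 2 = n ∧ q = n)) then -1 else 0 := by
      intro q h1 h2 h3
      split_ifs with h
      · rw [cartanD_adj h3.symm h]; norm_num
      · rw [cartanD_nadj h3.symm hin h2 h]; norm_num
    unfold nbf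
    by_cases hin3 : i + 3 ≤ n
    · rw [if_pos hin3]
      have n1 := nb (j := i + 1) (by omega) (by omega) (by omega) (by omega) (u := t) (by
        have := PD_succ (ι := ι) hn hi (by omega); omega)
      have n2 : yv ι n (i - 1) (t + 1) l =
          if (ypos ι n i t < l ∧ l < ypos ι n i (t + 1)) ∧ ι l = i - 1 then 1 else 0 := by
        by_cases h1 : i = 1
        · subst h1
          rw [show 1 - 1 = 0 from rfl, yv_zero, if_neg]
          · rfl
          · rintro ⟨h, h'⟩
            have := hq h
            omega
        · apply nb (by omega) (by omega) (by omega) (by omega)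
          have h2 := PD_succ (ι := ι) hn (i := i - 1) (by omega) (by omega)
          have h3 := pa (a := i) (b := i - 1) (by omega) (by omega) (by omega) (by omega)
            (by omega)
          rw [show i - 1 + 1 = i by omega] at h2
          omega
      rw [Pi.add_apply, n1, n2]
      by_cases hI : ypos ι n i t < l ∧ l < ypos ι n i (t + 1)
      · obtain ⟨q1, q2, q3⟩ := hq hI
        rw [if_pos hI, hc _ q1 q2 q3]
        simp only [hI, true_and]
        split_ifs <;> first | omega | norm_num
      · simp [hI]
    rw [if_neg hin3]
    by_cases hin2 : i + 2 = n
    · rw [if_pos hin2]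
      have n1 := nb (j := n - 1) (by omega) (by omega) (by omega) (by omega) (u := t) (by
        have := PD_succ (ι := ι) hn hi (by omega)
        rw [show i + 1 = n - 1 by omega] at this
        omega)
      have n3 := nb (j := n) (by omega) (by omega) (by omega) (by omega) (u := t) (by
        have := PD_n (ι := ι) hn
        rw [show n - 2 = i by omega] at this
        omega)
      have n2 := nb (j := n - 3) (by omega) (by omega) (by omega) (by omega) (u := t + 1) (by
        have h2 := PD_succ (ι := ι) hn (i := n - 3) (by omega) (by omega)
        have h3 := pa (a := i) (b := n - 3) (by omega) (by omega) (by omega) (by omega) (by omega)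
        rw [show n - 3 + 1 = i by omega] at h2
        omega)
      rw [Pi.add_apply, Pi.add_apply, n1, n2, n3]
      by_cases hI : ypos ι n i t < l ∧ l < ypos ι n i (t + 1)
      · obtain ⟨q1, q2, q3⟩ := hq hI
        rw [if_pos hI, hc _ q1 q2 q3]
        simp only [hI, true_and]
        split_ifs <;> first | omega | norm_num
      · simp [hI]
    · rw [if_neg hin2]
      have n2 := nb (j := n - 2) (by omega) (by omega) (by omega) (by omega) (u := t + 1) (by
        have h3 := pa (a := i) (b := n - 2) (by omega) (by omega) (by omega) (by omega) (by omega)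
        rcases (by omega : i = n ∨ i = n - 1) with h | h
        · have := PD_n (ι := ι) hn
          subst h
          omega
        · have h2 := PD_succ (ι := ι) hn (i := n - 2) (by omega) (by omega)
          rw [show n - 2 + 1 = i by omega] at h2
          omega)
      rw [n2]
      by_cases hI : ypos ι n i t < l ∧ l < ypos ι n i (t + 1)
      · obtain ⟨q1, q2, q3⟩ := hq hI
        rw [if_pos hI, hc _ q1 q2 q3]
        simp only [hI, true_and]
        split_ifs <;> first | omega | norm_num
      · simp [hI]
  rw [key]
  abel

/-- The operator in normalized coordinates, positive case. -/
lemma Sop_pos {n : ℕ} (hn : 4 ≤ n) {ι : ℕ → ℕ} (hadm : Admissible n ι)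
    (hadap : Adapted n (cartanD n) ι) {i : ℕ} {t : ℤ} (hi : 1 ≤ i)
    (hin : i ≤ n) (ht : 1 ≤ t + (PD ι n i : ℤ)) {φ : ℕ → ℚ} (h : 0 < φ (ypos ι n i t)) :
    Sop (cartanD n) ι (ypos ι n i t) φ = φ - φ (ypos ι n i t) • bf ι n i t := by
  rw [Sop, if_pos h, beta_ypos hn hadm hadap hi hin ht]

/-- The operator in normalized coordinates, nonpositive case. -/
lemma Sop_neg {n : ℕ} (hn : 4 ≤ n) {ι : ℕ → ℕ} (hadm : Admissible n ι)
    (hadap : Adapted n (cartanD n) ι) {i : ℕ} {t : ℤ} (hi : 1 ≤ i)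
    (hin : i ≤ n) (ht : 1 ≤ t + (PD ι n i : ℤ)) {φ : ℕ → ℚ} (h : φ (ypos ι n i t) ≤ 0) :
    Sop (cartanD n) ι (ypos ι n i t) φ = φ ∨
    Sop (cartanD n) ι (ypos ι n i t) φ = φ - φ (ypos ι n i t) • bf ι n i (t - 1) := by
  have hk : kminus ι (ypos ι n i t) = ypos ι n i (t - 1) := by
    unfold ypos
    rw [show (t + (PD ι n i : ℤ)).toNat = (t - 1 + (PD ι n i : ℤ)).toNat + 1 by omega,
      kminus_occ hadm hi hin]
  rw [Sop, if_neg (by simpa using h), hk]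
  by_cases ht' : 1 ≤ t - 1 + (PD ι n i : ℤ)
  · right
    rw [beta_ypos hn hadm hadap hi hin ht']
  · left
    have : ypos ι n i (t - 1) = 0 := by
      unfold ypos
      rw [show (t - 1 + (PD ι n i : ℤ)).toNat = 0 by omega, occPos]
    rw [this, beta, if_pos rfl]
    simp

/-! ### Boxes in normalized coordinates -/

lemma box_zero {ι : ℕ → ℕ} {n : ℕ} (L : ℤ) : boxD ι n L 0 = yv ι n n L := by
  simp [boxD, yv]

lemma box_low {ι : ℕ → ℕ} {n e : ℕ} (h1 : 1 ≤ e) (h2 : e + 2 ≤ n) (L : ℤ) :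
    boxD ι n L e = yv ι n e L - yv ι n (e - 1) (L + 1) := by
  unfold boxD yv
  rw [if_neg (by omega), if_pos (by omega)]
  congr 2
  ring

lemma box_n1 {ι : ℕ → ℕ} {n e : ℕ} (hn : 4 ≤ n) (he : e + 1 = n) (L : ℤ) :
    boxD ι n L e = yv ι n (n - 1) L + yv ι n n L - yv ι n (n - 2) (L + 1) := by
  unfold boxD yv
  rw [if_neg (by omega), if_neg (by omega), if_pos (by omega)]
  congr 2
  ring

lemma box_n {ι : ℕ → ℕ} {n : ℕ} (hn : 4 ≤ n) (L : ℤ) :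
    boxD ι n L n = yv ι n n L - yv ι n (n - 1) (L + 1) := by
  unfold boxD yv
  rw [if_neg (by omega), if_neg (by omega), if_neg (by omega), if_pos rfl]
  congr 2
  ring

lemma box_nb {ι : ℕ → ℕ} {n : ℕ} (hn : 4 ≤ n) (L : ℤ) :
    boxD ι n L (n + 1) = yv ι n (n - 1) L - yv ι n n (L + 1) := by
  unfold boxD yv
  rw [if_neg (by omega), if_neg (by omega), if_neg (by omega), if_neg (by omega), if_pos rfl]
  congr 2
  ring

lemma box_n1b {ι : ℕ → ℕ} {n : ℕ} (hn : 4 ≤ n) (L : ℤ) :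
    boxD ι n L (n + 2) =
      yv ι n (n - 2) (L + 1) - yv ι n (n - 1) (L + 1) - yv ι n n (L + 1) := by
  unfold boxD yv
  rw [if_neg (by omega), if_neg (by omega), if_neg (by omega), if_neg (by omega),
    if_neg (by omega), if_pos rfl]
  have a : ∀ i, L + (PD ι n i : ℤ) + 1 = L + 1 + PD ι n i := fun i => by ring
  rw [a, a, a]

lemma box_bar {ι : ℕ → ℕ} {n i e : ℕ} (hn : 4 ≤ n) (hi : 1 ≤ i) (hin : i + 2 ≤ n)
    (he : e + i = 2 * n + 1) (L : ℤ) :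
    boxD ι n L e = yv ι n (i - 1) (L + n - i) - yv ι n i (L + n - i) := by
  unfold boxD yv
  rw [if_neg (by omega), if_neg (by omega), if_neg (by omega), if_neg (by omega),
    if_neg (by omega), if_neg (by omega), show 2 * n - e = i - 1 by omega,
    show 2 * n + 1 - e = i by omega]
  congr 2 <;> ring

/-- Raising an unbarred entry. -/
lemma box_stepA {ι : ℕ → ℕ} {n i : ℕ} (hi : 1 ≤ i) (hin : i + 2 ≤ n) (hn : 4 ≤ n) (L : ℤ) :
    boxD ι n L (i + 1) = boxD ι n L i - bf ι n i L := by
  rw [box_low hi hin]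
  by_cases h : i + 3 ≤ n
  · rw [box_low (by omega) (by omega), bf, nbf, if_pos h, Nat.add_sub_cancel]
    abel
  · rw [box_n1 hn (by omega), bf, nbf, if_neg h, if_pos (by omega), show n - 2 = i by omega,
      show n - 3 = i - 1 by omega]
    abel

/-- Raising a barred entry. -/
lemma box_stepB {ι : ℕ → ℕ} {n i e : ℕ} (hi : 1 ≤ i) (hin : i + 1 ≤ n) (hn : 4 ≤ n)
    (he : e + i = 2 * n) {L t : ℤ} (ht : t = L + n - i - 1) :
    boxD ι n L (e + 1) = boxD ι n L e - bf ι n i t := by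
  by_cases h2 : i + 2 ≤ n
  · rw [box_bar hn hi h2 (by omega)]
    by_cases h : i + 3 ≤ n
    · rw [box_bar (i := i + 1) hn (by omega) (by omega) (by omega), bf, nbf, if_pos h,
        Nat.add_sub_cancel, ht, show L + n - ((i + 1 : ℕ) : ℤ) = L + n - i - 1 by push_cast; ring,
        show L + n - i - 1 + 1 = L + n - i by ring]
      abel
    · obtain rfl : e = n + 2 := by omega
      rw [box_n1b hn, bf, nbf, if_neg h, if_pos (by omega), show n - 2 = i by omega,
        show n - 3 = i - 1 by omega, show L + n - i = L + 2 by omega,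
        show t = L + 1 by omega, show L + 1 + 1 = L + 2 by ring]
      abel
  · obtain rfl : e = n + 1 := by omega
    rw [box_n1b hn, box_nb hn, bf, nbf, if_neg (by omega), if_neg (by omega),
      show t = L by omega, show n - 1 = i by omega]
    abel

lemma box_step_n1 {ι : ℕ → ℕ} {n : ℕ} (hn : 4 ≤ n) (L : ℤ) :
    boxD ι n L n = boxD ι n L (n - 1) - bf ι n (n - 1) L := by
  rw [box_n hn, box_n1 hn (by omega), bf, nbf, if_neg (by omega), if_neg (by omega)]
  abel

lemma box_step_n {ι : ℕ → ℕ} {n : ℕ} (hn : 4 ≤ n) (L : ℤ) :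
    boxD ι n L (n + 1) = boxD ι n L (n - 1) - bf ι n n L := by
  rw [box_nb hn, box_n1 hn (by omega), bf, nbf, if_neg (by omega), if_neg (by omega)]
  abel

lemma box_step_n' {ι : ℕ → ℕ} {n : ℕ} (hn : 4 ≤ n) (L : ℤ) :
    boxD ι n L (n + 2) = boxD ι n L n - bf ι n n L := by
  rw [box_n1b hn, box_n hn, bf, nbf, if_neg (by omega), if_neg (by omega)]
  abel

lemma box_spin {ι : ℕ → ℕ} {n : ℕ} (hn : 4 ≤ n) (L : ℤ) :
    boxD ι n L (n + 2) + boxD ι n (L + 1) (n + 1) + boxD ι n (L + 1 + 1) 0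
      = boxD ι n L 0 - bf ι n n L := by
  rw [box_n1b hn, box_nb hn, box_zero, box_zero, bf, nbf, if_neg (by omega), if_neg (by omega)]
  abel

/-! ### Coefficients of boxes -/

lemma box_eval_lo {n : ℕ} (hn : 4 ≤ n) {ι : ℕ → ℕ} (hadm : Admissible n ι) {i : ℕ} {t : ℤ}
    (hi : 1 ≤ i) (hin : i + 2 ≤ n) (ht : 1 ≤ t + (PD ι n i : ℤ)) (L : ℤ) {e : ℕ}
    (he : e ≤ 2 * n) :
    boxD ι n L e (ypos ι n i t) =
      (if L = t ∧ e = i then 1 else 0) - (if L = t - 1 ∧ e = i + 1 then 1 else 0)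
      + (if L = t - (n - i - 1) ∧ e = 2 * n - i then 1 else 0)
      - (if L = t - (n - i) ∧ e = 2 * n + 1 - i then 1 else 0) := by
  have ev := yv_eval hadm hi (by omega) ht
  rcases (by omega : e = 0 ∨ (1 ≤ e ∧ e + 2 ≤ n) ∨ e + 1 = n ∨ e = n ∨ e = n + 1 ∨ e = n + 2 ∨
    n + 3 ≤ e) with rfl | ⟨h1, h2⟩ | h | rfl | rfl | rfl | h
  · rw [box_zero, ev]; split_ifs <;> first | omega | (norm_num; done) | (exfalso; tauto)
  · rw [box_low h1 h2, Pi.sub_apply, ev, ev]; split_ifs <;> first | omega | (norm_num; done) | (exfalso; tauto)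
  · rw [box_n1 hn h, Pi.sub_apply, Pi.add_apply, ev, ev, ev]
    split_ifs <;> first | omega | (norm_num; done) | (exfalso; tauto)
  · rw [box_n hn, Pi.sub_apply, ev, ev]; split_ifs <;> first | omega | (norm_num; done) | (exfalso; tauto)
  · rw [box_nb hn, Pi.sub_apply, ev, ev]; split_ifs <;> first | omega | (norm_num; done) | (exfalso; tauto)
  · rw [box_n1b hn, Pi.sub_apply, Pi.sub_apply, ev, ev, ev]
    split_ifs <;> first | omega | (norm_num; done) | (exfalso; tauto)
  · rw [box_bar (i := 2 * n + 1 - e) hn (by omega) (by omega) (by omega), Pi.sub_apply, ev, ev]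
    split_ifs <;> first | omega | (norm_num; done) | (exfalso; tauto)

lemma box_eval_n1 {n : ℕ} (hn : 4 ≤ n) {ι : ℕ → ℕ} (hadm : Admissible n ι) {t : ℤ}
    (ht : 1 ≤ t + (PD ι n (n - 1) : ℤ)) (L : ℤ) {e : ℕ}
    (he : e ≤ 2 * n) :
    boxD ι n L e (ypos ι n (n - 1) t) =
      (if L = t ∧ e = n - 1 then 1 else 0) + (if L = t ∧ e = n + 1 then 1 else 0)
      - (if L = t - 1 ∧ e = n then 1 else 0)
      - (if L = t - 1 ∧ e = n + 2 then 1 else 0) := by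
  have ev := yv_eval hadm (by omega) (by omega) ht
  rcases (by omega : e = 0 ∨ (1 ≤ e ∧ e + 2 ≤ n) ∨ e + 1 = n ∨ e = n ∨ e = n + 1 ∨ e = n + 2 ∨
    n + 3 ≤ e) with rfl | ⟨h1, h2⟩ | h | rfl | rfl | rfl | h
  · rw [box_zero, ev]; split_ifs <;> first | omega | (norm_num; done) | (exfalso; tauto)
  · rw [box_low h1 h2, Pi.sub_apply, ev, ev]; split_ifs <;> first | omega | (norm_num; done) | (exfalso; tauto)
  · rw [box_n1 hn h, Pi.sub_apply, Pi.add_apply, ev, ev, ev]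
    split_ifs <;> first | omega | (norm_num; done) | (exfalso; tauto)
  · rw [box_n hn, Pi.sub_apply, ev, ev]; split_ifs <;> first | omega | (norm_num; done) | (exfalso; tauto)
  · rw [box_nb hn, Pi.sub_apply, ev, ev]; split_ifs <;> first | omega | (norm_num; done) | (exfalso; tauto)
  · rw [box_n1b hn, Pi.sub_apply, Pi.sub_apply, ev, ev, ev]
    split_ifs <;> first | omega | (norm_num; done) | (exfalso; tauto)
  · rw [box_bar (i := 2 * n + 1 - e) hn (by omega) (by omega) (by omega), Pi.sub_apply, ev, ev]
    split_ifs <;> first | omega | (norm_num; done) | (exfalso; tauto)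

lemma box_eval_n {n : ℕ} (hn : 4 ≤ n) {ι : ℕ → ℕ} (hadm : Admissible n ι) {t : ℤ}
    (ht : 1 ≤ t + (PD ι n n : ℤ)) (L : ℤ) {e : ℕ}
    (he : e ≤ 2 * n) :
    boxD ι n L e (ypos ι n n t) =
      (if L = t ∧ e = 0 then 1 else 0) +
      (if L = t ∧ e = n - 1 then 1 else 0) + (if L = t ∧ e = n then 1 else 0)
      - (if L = t - 1 ∧ e = n + 1 then 1 else 0)
      - (if L = t - 1 ∧ e = n + 2 then 1 else 0) := by
  have ev := yv_eval hadm (by omega) (by omega) ht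
  rcases (by omega : e = 0 ∨ (1 ≤ e ∧ e + 2 ≤ n) ∨ e + 1 = n ∨ e = n ∨ e = n + 1 ∨ e = n + 2 ∨
    n + 3 ≤ e) with rfl | ⟨h1, h2⟩ | h | rfl | rfl | rfl | h
  · rw [box_zero, ev]; split_ifs <;> first | omega | (norm_num; done) | (exfalso; tauto)
  · rw [box_low h1 h2, Pi.sub_apply, ev, ev]; split_ifs <;> first | omega | (norm_num; done) | (exfalso; tauto)
  · rw [box_n1 hn h, Pi.sub_apply, Pi.add_apply, ev, ev, ev]
    split_ifs <;> first | omega | (norm_num; done) | (exfalso; tauto)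
  · rw [box_n hn, Pi.sub_apply, ev, ev]; split_ifs <;> first | omega | (norm_num; done) | (exfalso; tauto)
  · rw [box_nb hn, Pi.sub_apply, ev, ev]; split_ifs <;> first | omega | (norm_num; done) | (exfalso; tauto)
  · rw [box_n1b hn, Pi.sub_apply, Pi.sub_apply, ev, ev, ev]
    split_ifs <;> first | omega | (norm_num; done) | (exfalso; tauto)
  · rw [box_bar (i := 2 * n + 1 - e) hn (by omega) (by omega) (by omega), Pi.sub_apply, ev, ev]
    split_ifs <;> first | omega | (norm_num; done) | (exfalso; tauto)

/-! ### Tableaux indexed by level -/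

/-- The form of a tableau whose entry at level `L` is `g L`. -/
noncomputable def ltab (ι : ℕ → ℕ) (n : ℕ) (s : ℤ) (k : ℕ) (g : ℤ → ℕ) : ℕ → ℚ :=
  ∑ L ∈ Finset.Ico s (s + k), boxD ι n L (g L)

/-- Indicator: there is a row of level `u`, and its entry is `e`. -/
def ind (s : ℤ) (k : ℕ) (g : ℤ → ℕ) (u : ℤ) (e : ℕ) : ℚ :=
  if s ≤ u ∧ u < s + k ∧ g u = e then 1 else 0

lemma sum_ind (s : ℤ) (k : ℕ) (g : ℤ → ℕ) (u : ℤ) (e : ℕ) :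
    (∑ L ∈ Finset.Ico s (s + k), if L = u ∧ g L = e then (1 : ℚ) else 0) = ind s k g u e := by
  simp only [ite_and]
  rw [Finset.sum_ite_eq']
  unfold ind
  simp only [Finset.mem_Ico]
  split_ifs <;> first | rfl | (exfalso; tauto)

lemma coef_lo {n : ℕ} (hn : 4 ≤ n) {ι : ℕ → ℕ} (hadm : Admissible n ι) {i : ℕ} {t : ℤ}
    (hi : 1 ≤ i) (hin : i + 2 ≤ n) (ht : 1 ≤ t + (PD ι n i : ℤ)) {s : ℤ} {k : ℕ} {g : ℤ → ℕ}
    (hg : ∀ L, s ≤ L → L < s + k → g L ≤ 2 * n) :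
    ltab ι n s k g (ypos ι n i t) = ind s k g t i - ind s k g (t - 1) (i + 1)
      + ind s k g (t - (n - i - 1)) (2 * n - i) - ind s k g (t - (n - i)) (2 * n + 1 - i) := by
  unfold ltab
  rw [Finset.sum_apply, ← sum_ind, ← sum_ind, ← sum_ind, ← sum_ind, ← Finset.sum_sub_distrib,
    ← Finset.sum_add_distrib, ← Finset.sum_sub_distrib]
  refine Finset.sum_congr rfl fun L hL => ?_
  rw [Finset.mem_Ico] at hL
  exact box_eval_lo hn hadm hi hin ht L (hg L hL.1 hL.2)

lemma coef_n1 {n : ℕ} (hn : 4 ≤ n) {ι : ℕ → ℕ} (hadm : Admissible n ι) {t : ℤ}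
    (ht : 1 ≤ t + (PD ι n (n - 1) : ℤ)) {s : ℤ} {k : ℕ} {g : ℤ → ℕ}
    (hg : ∀ L, s ≤ L → L < s + k → g L ≤ 2 * n) :
    ltab ι n s k g (ypos ι n (n - 1) t) = ind s k g t (n - 1) + ind s k g t (n + 1)
      - ind s k g (t - 1) n - ind s k g (t - 1) (n + 2) := by
  unfold ltab
  rw [Finset.sum_apply, ← sum_ind, ← sum_ind, ← sum_ind, ← sum_ind, ← Finset.sum_add_distrib,
    ← Finset.sum_sub_distrib, ← Finset.sum_sub_distrib]
  refine Finset.sum_congr rfl fun L hL => ?_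
  rw [Finset.mem_Ico] at hL
  exact box_eval_n1 hn hadm ht L (hg L hL.1 hL.2)

lemma coef_n {n : ℕ} (hn : 4 ≤ n) {ι : ℕ → ℕ} (hadm : Admissible n ι) {t : ℤ}
    (ht : 1 ≤ t + (PD ι n n : ℤ)) {s : ℤ} {k : ℕ} {g : ℤ → ℕ}
    (hg : ∀ L, s ≤ L → L < s + k → g L ≤ 2 * n) :
    ltab ι n s k g (ypos ι n n t) = ind s k g t 0 + ind s k g t (n - 1) + ind s k g t n
      - ind s k g (t - 1) (n + 1) - ind s k g (t - 1) (n + 2) := by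
  unfold ltab
  rw [Finset.sum_apply, ← sum_ind, ← sum_ind, ← sum_ind, ← sum_ind, ← sum_ind,
    ← Finset.sum_add_distrib, ← Finset.sum_add_distrib,
    ← Finset.sum_sub_distrib, ← Finset.sum_sub_distrib]
  refine Finset.sum_congr rfl fun L hL => ?_
  rw [Finset.mem_Ico] at hL
  exact box_eval_n hn hadm ht L (hg L hL.1 hL.2)

lemma ltab_update {ι : ℕ → ℕ} {n : ℕ} {s : ℤ} {k : ℕ} {g : ℤ → ℕ} {u : ℤ} (h1 : s ≤ u)
    (h2 : u < s + k) (e : ℕ) {b : ℕ → ℚ} (hb : boxD ι n u e = boxD ι n u (g u) + b) :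
    ltab ι n s k (Function.update g u e) = ltab ι n s k g + b := by
  unfold ltab
  have hu : u ∈ Finset.Ico s (s + k) := Finset.mem_Ico.mpr ⟨h1, h2⟩
  rw [← Finset.add_sum_erase _ _ hu, ← Finset.add_sum_erase _ (fun L => boxD ι n L (g L)) hu,
    Function.update_self, hb]
  have : ∑ x ∈ (Finset.Ico s (s + k)).erase u, boxD ι n x (Function.update g u e x) =
      ∑ x ∈ (Finset.Ico s (s + k)).erase u, boxD ι n x (g x) := by
    refine Finset.sum_congr rfl fun x hx => ?_
    rw [Function.update_of_ne (Finset.ne_of_mem_erase hx)]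
  rw [this]
  abel

/-- The weight used for the inductions. -/
noncomputable def wsum (w : ℕ → ℕ) (s : ℤ) (k : ℕ) (g : ℤ → ℕ) : ℕ := ∑ L ∈ Finset.Ico s (s + k), w (g L)

lemma wsum_update {w : ℕ → ℕ} {s : ℤ} {k : ℕ} {g : ℤ → ℕ} {u : ℤ} (h1 : s ≤ u)
    (h2 : u < s + k) (e : ℕ) :
    wsum w s k (Function.update g u e) + w (g u) = wsum w s k g + w e := by
  unfold wsum
  have hu : u ∈ Finset.Ico s (s + k) := Finset.mem_Ico.mpr ⟨h1, h2⟩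
  rw [← Finset.add_sum_erase _ _ hu, ← Finset.add_sum_erase _ (fun L => w (g L)) hu,
    Function.update_self]
  have : ∑ x ∈ (Finset.Ico s (s + k)).erase u, w (Function.update g u e x) =
      ∑ x ∈ (Finset.Ico s (s + k)).erase u, w (g x) := by
    refine Finset.sum_congr rfl fun x hx => ?_
    rw [Function.update_of_ne (Finset.ne_of_mem_erase hx)]
  rw [this]
  ring

lemma tab_eq_ltab {ι : ℕ → ℕ} {n : ℕ} (s : ℤ) (k : ℕ) (j : ℕ → ℕ) :
    tab (boxD ι n) s k j = ltab ι n s k (fun L => j (s + k - L).toNat) := by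
  unfold tab ltab
  refine Finset.sum_nbij' (fun i => s + k - i) (fun L => (s + k - L).toNat) ?_ ?_ ?_ ?_ ?_
  · intro i hi; simp only [Finset.mem_Icc, Finset.mem_Ico] at *; omega
  · intro i hi; simp only [Finset.mem_Icc, Finset.mem_Ico] at *; omega
  · intro i hi; simp only [Finset.mem_Icc] at *; omega
  · intro i hi; simp only [Finset.mem_Ico] at *; omega
  · intro i hi
    simp only [Finset.mem_Icc] at hi
    simp only [show (s + k - (s + k - (i : ℤ))).toNat = i by omega]

lemma ltab_eq_tab {ι : ℕ → ℕ} {n : ℕ} (s : ℤ) (k : ℕ) (g : ℤ → ℕ) :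
    ltab ι n s k g = tab (boxD ι n) s k (fun r => g (s + k - r)) := by
  rw [tab_eq_ltab]
  unfold ltab
  refine Finset.sum_congr rfl fun L hL => ?_
  rw [Finset.mem_Ico] at hL
  simp only [show s + k - (((s + k - L).toNat : ℕ) : ℤ) = L by omega]

/-- Admissible vertical adjacency (`a` directly above `b`). -/
def okD (n a b : ℕ) : Prop := a < b ∨ (a = n + 1 ∧ b = n)

/-- Validity of tableaux of the first kind. -/
def VA (n : ℕ) (s : ℤ) (k : ℕ) (g : ℤ → ℕ) : Prop :=
  1 ≤ k ∧ k + 2 ≤ n ∧ (∀ L, s ≤ L → L < s + k → 1 ≤ g L ∧ g L ≤ 2 * n) ∧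
  (∀ L, s ≤ L → L + 1 < s + k → okD n (g (L + 1)) (g L))

/-- Validity of tableaux of the second kind. -/
def VB (n : ℕ) (s : ℤ) (k : ℕ) (g : ℤ → ℕ) : Prop :=
  1 ≤ k ∧ k ≤ n + 1 ∧ g (s + k - 1) = 0 ∧
  (∀ L, s ≤ L → L + 1 < s + k → n + 1 ≤ g L ∧ g L ≤ 2 * n) ∧
  (∀ L, s ≤ L → L + 1 < s + k → g (L + 1) < g L)

/-- Condition on `s` for tableaux of the second kind. -/
def SB (ι : ℕ → ℕ) (n : ℕ) (s : ℤ) (k : ℕ) : Prop :=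
  (k % 2 = 0 → 1 - (PD ι n (n - 1) : ℤ) ≤ s) ∧ (k % 2 = 1 → 1 - (PD ι n n : ℤ) ≤ s)

lemma mem_TabD_iff {n : ℕ} (hn : 4 ≤ n) {ι : ℕ → ℕ} (φ : ℕ → ℚ) :
    φ ∈ TabD ι n ↔ ∃ s k g, ((VA n s k g ∧ 1 - (PD ι n k : ℤ) ≤ s) ∨ (VB n s k g ∧ SB ι n s k)) ∧
      φ = ltab ι n s k g := by
  constructor
  · rintro ⟨k, s, j, hc, rfl⟩
    refine ⟨s, k, _, ?_, tab_eq_ltab s k j⟩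
    rcases hc with ⟨h1, h2, h3, h4, h5⟩ | ⟨h0, h1, h2, h3, h4, h5, h6⟩
    · refine Or.inl ⟨⟨h1, by omega, fun L a b => h3 _ (by omega) (by omega), fun L a b => ?_⟩, h5⟩
      have := h4 (s + k - (L + 1)).toNat (by omega) (by omega)
      rw [show (s + k - (L + 1)).toNat + 1 = (s + k - L).toNat by omega] at this
      unfold leD at this
      dsimp only [okD]
      omega
    · refine Or.inr ⟨⟨h1, by omega, ?_, fun L a b => h3 _ (by omega) (by omega), fun L a b => ?_⟩,
        h5, h6⟩
      · simp only [show (s + k - (s + k - 1)).toNat = 1 by omega, h0]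
      · by_cases ht : L + 2 = s + k
        · simp only [show (s + k - (L + 1)).toNat = 1 by omega, h0,
            show (s + k - L).toNat = 2 by omega]
          have := h3 2 le_rfl (by omega)
          omega
        · have := h4 (s + k - (L + 1)).toNat (by omega) (by omega)
          rwa [show (s + k - (L + 1)).toNat + 1 = (s + k - L).toNat by omega] at this
  · rintro ⟨s, k, g, hc, rfl⟩
    refine ⟨k, s, _, ?_, ltab_eq_tab s k g⟩
    rcases hc with ⟨⟨h1, h2, h3, h4⟩, h5⟩ | ⟨⟨h1, h2, h0, h3, h4⟩, h5⟩
    · refine Or.inl ⟨h1, by omega, fun i a b => h3 _ (by omega) (by omega), fun i a b => ?_, h5⟩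
      have := h4 (s + k - ((i + 1 : ℕ) : ℤ)) (by omega) (by push_cast; omega)
      rw [show s + k - ((i + 1 : ℕ) : ℤ) + 1 = s + k - (i : ℤ) by push_cast; ring] at this
      unfold okD at this
      dsimp only [leD]
      omega
    · refine Or.inr ⟨by simpa using h0, h1, h2, fun i a b => h3 _ (by omega) (by omega),
        fun i a b => ?_, h5.1, h5.2⟩
      have := h4 (s + k - ((i + 1 : ℕ) : ℤ)) (by omega) (by push_cast; omega)
      rwa [show s + k - ((i + 1 : ℕ) : ℤ) + 1 = s + k - (i : ℤ) by push_cast; ring] at this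

/-! ### The operators on forms with small coefficients -/

lemma Sop_zero {A : ℕ → ℕ → ℤ} {ι : ℕ → ℕ} {k : ℕ} {φ : ℕ → ℚ} (h : φ k = 0) :
    Sop A ι k φ = φ := by
  simp [Sop, h]

lemma Sop_one {n : ℕ} (hn : 4 ≤ n) {ι : ℕ → ℕ} (hadm : Admissible n ι)
    (hadap : Adapted n (cartanD n) ι) {i : ℕ} {t : ℤ} (hi : 1 ≤ i)
    (hin : i ≤ n) (ht : 1 ≤ t + (PD ι n i : ℤ)) {φ : ℕ → ℚ} (h : φ (ypos ι n i t) = 1) :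
    Sop (cartanD n) ι (ypos ι n i t) φ = φ - bf ι n i t := by
  rw [Sop_pos hn hadm hadap hi hin ht (by rw [h]; norm_num), h, one_smul]

lemma Sop_two {n : ℕ} (hn : 4 ≤ n) {ι : ℕ → ℕ} (hadm : Admissible n ι)
    (hadap : Adapted n (cartanD n) ι) {i : ℕ} {t : ℤ} (hi : 1 ≤ i)
    (hin : i ≤ n) (ht : 1 ≤ t + (PD ι n i : ℤ)) {φ : ℕ → ℚ} (h : φ (ypos ι n i t) = 2) :
    Sop (cartanD n) ι (ypos ι n i t) φ = φ - bf ι n i t - bf ι n i t := by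
  rw [Sop_pos hn hadm hadap hi hin ht (by rw [h]; norm_num), h, two_smul]
  abel

lemma Sop_neg_one {n : ℕ} (hn : 4 ≤ n) {ι : ℕ → ℕ} (hadm : Admissible n ι)
    (hadap : Adapted n (cartanD n) ι) {i : ℕ} {t : ℤ} (hi : 1 ≤ i)
    (hin : i ≤ n) (ht : 1 ≤ t + (PD ι n i : ℤ)) {φ : ℕ → ℚ} (h : φ (ypos ι n i t) = -1) :
    Sop (cartanD n) ι (ypos ι n i t) φ = φ ∨
    Sop (cartanD n) ι (ypos ι n i t) φ = φ + bf ι n i (t - 1) := by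
  rcases Sop_neg hn hadm hadap hi hin ht (φ := φ) (by rw [h]; norm_num) with h' | h'
  · exact Or.inl h'
  · right; rw [h', h, neg_one_smul, sub_neg_eq_add]

lemma Sop_neg_two {n : ℕ} (hn : 4 ≤ n) {ι : ℕ → ℕ} (hadm : Admissible n ι)
    (hadap : Adapted n (cartanD n) ι) {i : ℕ} {t : ℤ} (hi : 1 ≤ i)
    (hin : i ≤ n) (ht : 1 ≤ t + (PD ι n i : ℤ)) {φ : ℕ → ℚ} (h : φ (ypos ι n i t) = -2) :
    Sop (cartanD n) ι (ypos ι n i t) φ = φ ∨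
    Sop (cartanD n) ι (ypos ι n i t) φ = φ + bf ι n i (t - 1) + bf ι n i (t - 1) := by
  rcases Sop_neg hn hadm hadap hi hin ht (φ := φ) (by rw [h]; norm_num) with h' | h'
  · exact Or.inl h'
  · right; rw [h', h, neg_smul, two_smul]; abel

lemma ind_pos {s : ℤ} {k : ℕ} {g : ℤ → ℕ} {u : ℤ} {e : ℕ} (h1 : s ≤ u) (h2 : u < s + k)
    (h3 : g u = e) : ind s k g u e = 1 := if_pos ⟨h1, h2, h3⟩

lemma ind_neg {s : ℤ} {k : ℕ} {g : ℤ → ℕ} {u : ℤ} {e : ℕ}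
    (h : ¬ (s ≤ u ∧ u < s + k ∧ g u = e)) : ind s k g u e = 0 := if_neg h

lemma tri (s : ℤ) (k : ℕ) (g : ℤ → ℕ) (u v : ℤ) (e f : ℕ) :
    (ind s k g u e - ind s k g v f = 1 ∧ (s ≤ u ∧ u < s + k ∧ g u = e) ∧
      ¬ (s ≤ v ∧ v < s + k ∧ g v = f)) ∨
    (ind s k g u e - ind s k g v f = -1 ∧ ¬ (s ≤ u ∧ u < s + k ∧ g u = e) ∧
      (s ≤ v ∧ v < s + k ∧ g v = f)) ∨
    (ind s k g u e - ind s k g v f = 0) := by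
  unfold ind
  by_cases h1 : (s ≤ u ∧ u < s + k ∧ g u = e) <;> by_cases h2 : (s ≤ v ∧ v < s + k ∧ g v = f)
  · right; right; rw [if_pos h1, if_pos h2]; norm_num
  · left; rw [if_pos h1, if_neg h2]; exact ⟨by norm_num, h1, h2⟩
  · right; left; rw [if_neg h1, if_pos h2]; exact ⟨by norm_num, h1, h2⟩
  · right; right; rw [if_neg h1, if_neg h2]; norm_num

/-! ### Moves on tableaux of the first kind -/

lemma VA_le {n : ℕ} {s : ℤ} {k : ℕ} {g : ℤ → ℕ} (hV : VA n s k g) :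
    ∀ L, s ≤ L → L < s + k → g L ≤ 2 * n := fun L h1 h2 => (hV.2.2.1 L h1 h2).2

lemma VA_below {n : ℕ} {s : ℤ} {k : ℕ} {g : ℤ → ℕ} (hV : VA n s k g) {u : ℤ} (h1 : s ≤ u - 1)
    (h2 : u < s + k) : okD n (g u) (g (u - 1)) := by
  have := hV.2.2.2 (u - 1) h1 (by omega)
  rwa [sub_add_cancel] at this

lemma VA_update {n : ℕ} {s : ℤ} {k : ℕ} {g : ℤ → ℕ} (hV : VA n s k g) {u : ℤ} {e : ℕ}
    (he1 : 1 ≤ e) (he2 : e ≤ 2 * n)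
    (hp : s ≤ u → u + 1 < s + k → okD n (g (u + 1)) e)
    (hq : s ≤ u - 1 → u < s + k → okD n e (g (u - 1))) :
    VA n s k (Function.update g u e) := by
  obtain ⟨h1, h2, h3, h4⟩ := hV
  refine ⟨h1, h2, fun L a b => ?_, fun L a b => ?_⟩
  · rw [Function.update_apply]
    split_ifs
    · exact ⟨he1, he2⟩
    · exact h3 L a b
  · by_cases c1 : L = u
    · subst c1
      rw [Function.update_self, Function.update_of_ne (by omega)]
      exact hp a b
    · by_cases c2 : L + 1 = u
      · subst c2
        rw [Function.update_self, Function.update_of_ne (by omega)]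
        simpa using hq (by omega) (by omega)
      · rw [Function.update_of_ne (by omega), Function.update_of_ne (by omega)]
        exact h4 L a b

lemma upA {n : ℕ} (hn : 4 ≤ n) {ι : ℕ → ℕ} {s : ℤ} {k : ℕ} {g : ℤ → ℕ} (hV : VA n s k g)
    {i : ℕ} {t : ℤ} (hi : 1 ≤ i) (hin : i + 2 ≤ n)
    (h1 : s ≤ t ∧ t < s + k ∧ g t = i) (h2 : ¬ (s ≤ t - 1 ∧ t - 1 < s + k ∧ g (t - 1) = i + 1)) :
    VA n s k (Function.update g t (i + 1)) ∧
    ltab ι n s k (Function.update g t (i + 1)) = ltab ι n s k g - bf ι n i t := by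
  obtain ⟨a, b, c⟩ := h1
  constructor
  · refine VA_update hV (by omega) (by omega) (fun x y => ?_) (fun x y => ?_)
    · have := hV.2.2.2 t x y
      unfold okD at *; omega
    · have := VA_below hV x y
      unfold okD at *; omega
  · rw [sub_eq_add_neg]
    apply ltab_update a b
    rw [c, box_stepA hi hin hn, sub_eq_add_neg]

lemma downA {n : ℕ} (hn : 4 ≤ n) {ι : ℕ → ℕ} {s : ℤ} {k : ℕ} {g : ℤ → ℕ} (hV : VA n s k g)
    {i : ℕ} {t : ℤ} (hi : 1 ≤ i) (hin : i + 2 ≤ n)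
    (h1 : ¬ (s ≤ t ∧ t < s + k ∧ g t = i)) (h2 : s ≤ t - 1 ∧ t - 1 < s + k ∧ g (t - 1) = i + 1) :
    VA n s k (Function.update g (t - 1) i) ∧
    ltab ι n s k (Function.update g (t - 1) i) = ltab ι n s k g + bf ι n i (t - 1) := by
  obtain ⟨a, b, c⟩ := h2
  constructor
  · refine VA_update hV (by omega) (by omega) (fun x y => ?_) (fun x y => ?_)
    · have := hV.2.2.2 (t - 1) x y
      rw [sub_add_cancel] at this y ⊢
      unfold okD at *; omega
    · have := VA_below hV x y
      unfold okD at *; omega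
  · apply ltab_update a b
    rw [c, box_stepA hi hin hn, sub_add_cancel]

lemma upB {n : ℕ} (hn : 4 ≤ n) {ι : ℕ → ℕ} {s : ℤ} {k : ℕ} {g : ℤ → ℕ} (hV : VA n s k g)
    {i : ℕ} {t : ℤ} (hi : 1 ≤ i) (hin : i + 2 ≤ n)
    (h1 : s ≤ t - (n - i - 1) ∧ t - (n - i - 1) < s + k ∧ g (t - (n - i - 1)) = 2 * n - i)
    (h2 : ¬ (s ≤ t - (n - i) ∧ t - (n - i) < s + k ∧ g (t - (n - i)) = 2 * n + 1 - i)) :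
    VA n s k (Function.update g (t - (n - i - 1)) (2 * n + 1 - i)) ∧
    ltab ι n s k (Function.update g (t - (n - i - 1)) (2 * n + 1 - i)) =
      ltab ι n s k g - bf ι n i t := by
  have e1 : t - (n - i - 1) - 1 = t - ((n : ℤ) - i) := by ring
  obtain ⟨a, b, c⟩ := h1
  constructor
  · refine VA_update hV (by omega) (by omega) (fun x y => ?_) (fun x y => ?_)
    · have := hV.2.2.2 _ x y
      unfold okD at *; omega
    · have := VA_below hV x y
      rw [e1] at this x ⊢
      unfold okD at *; omega
  · rw [sub_eq_add_neg (ltab ι n s k g)]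
    apply ltab_update a b
    rw [c, show 2 * n + 1 - i = (2 * n - i) + 1 by omega,
      box_stepB hi (by omega) hn (by omega) (t := t) (by ring), sub_eq_add_neg]

lemma downB {n : ℕ} (hn : 4 ≤ n) {ι : ℕ → ℕ} {s : ℤ} {k : ℕ} {g : ℤ → ℕ} (hV : VA n s k g)
    {i : ℕ} {t : ℤ} (hi : 1 ≤ i) (hin : i + 2 ≤ n)
    (h1 : ¬ (s ≤ t - (n - i - 1) ∧ t - (n - i - 1) < s + k ∧ g (t - (n - i - 1)) = 2 * n - i))
    (h2 : s ≤ t - (n - i) ∧ t - (n - i) < s + k ∧ g (t - (n - i)) = 2 * n + 1 - i) :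
    VA n s k (Function.update g (t - (n - i)) (2 * n - i)) ∧
    ltab ι n s k (Function.update g (t - (n - i)) (2 * n - i)) =
      ltab ι n s k g + bf ι n i (t - 1) := by
  have e1 : t - ((n : ℤ) - i) + 1 = t - (n - i - 1) := by ring
  obtain ⟨a, b, c⟩ := h2
  constructor
  · refine VA_update hV (by omega) (by omega) (fun x y => ?_) (fun x y => ?_)
    · have := hV.2.2.2 _ x y
      rw [e1] at this y ⊢
      unfold okD at *; omega
    · have := VA_below hV x y
      unfold okD at *; omega
  · apply ltab_update a b
    rw [c, show 2 * n + 1 - i = (2 * n - i) + 1 by omega,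
      box_stepB hi (by omega) hn (by omega) (t := t - 1) (by ring), sub_add_cancel]

lemma closeA_lo {n : ℕ} (hn : 4 ≤ n) {ι : ℕ → ℕ} (hadm : Admissible n ι)
    (hadap : Adapted n (cartanD n) ι) {s : ℤ} {k : ℕ} {g : ℤ → ℕ} (hV : VA n s k g)
    {i : ℕ} {t : ℤ} (hi : 1 ≤ i) (hin : i + 2 ≤ n) (ht : 1 ≤ t + (PD ι n i : ℤ)) :
    ∃ g', VA n s k g' ∧ Sop (cartanD n) ι (ypos ι n i t) (ltab ι n s k g) = ltab ι n s k g' := by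
  have hc := coef_lo hn hadm hi hin ht (VA_le hV)
  rw [add_sub_assoc] at hc
  have hin' : i ≤ n := by omega
  rcases tri s k g t (t - 1) i (i + 1) with ⟨hA, a1, a2⟩ | ⟨hA, a1, a2⟩ | hA <;>
  rcases tri s k g (t - (n - i - 1)) (t - (n - i)) (2 * n - i) (2 * n + 1 - i) with
    ⟨hB, b1, b2⟩ | ⟨hB, b1, b2⟩ | hB <;> rw [hA, hB] at hc <;> norm_num at hc
  · rw [Sop_two hn hadm hadap hi hin' ht hc]
    obtain ⟨v1, l1⟩ := upA (ι := ι) hn hV hi hin a1 a2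
    obtain ⟨v2, l2⟩ := upB (ι := ι) hn v1 (t := t) hi hin
      (by rw [Function.update_of_ne (by omega)]; exact b1)
      (by rw [Function.update_of_ne (by omega)]; exact b2)
    exact ⟨_, v2, by rw [l2, l1]⟩
  · exact ⟨g, hV, Sop_zero hc⟩
  · rw [Sop_one hn hadm hadap hi hin' ht hc]
    obtain ⟨v1, l1⟩ := upA (ι := ι) hn hV hi hin a1 a2
    exact ⟨_, v1, l1.symm⟩
  · exact ⟨g, hV, Sop_zero hc⟩
  · rcases Sop_neg_two hn hadm hadap hi hin' ht hc with h | h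
    · exact ⟨g, hV, h⟩
    · rw [h]
      obtain ⟨v1, l1⟩ := downB (ι := ι) hn hV hi hin b1 b2
      obtain ⟨v2, l2⟩ := downA (ι := ι) hn v1 (t := t) hi hin
        (by rw [Function.update_of_ne (by omega)]; exact a1)
        (by rw [Function.update_of_ne (by omega)]; exact a2)
      exact ⟨_, v2, by rw [l2, l1]⟩
  · rcases Sop_neg_one hn hadm hadap hi hin' ht hc with h | h
    · exact ⟨g, hV, h⟩
    · rw [h]
      obtain ⟨v1, l1⟩ := downA (ι := ι) hn hV hi hin a1 a2
      exact ⟨_, v1, l1.symm⟩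
  · rw [Sop_one hn hadm hadap hi hin' ht hc]
    obtain ⟨v1, l1⟩ := upB (ι := ι) hn hV hi hin b1 b2
    exact ⟨_, v1, l1.symm⟩
  · rcases Sop_neg_one hn hadm hadap hi hin' ht hc with h | h
    · exact ⟨g, hV, h⟩
    · rw [h]
      obtain ⟨v1, l1⟩ := downB (ι := ι) hn hV hi hin b1 b2
      exact ⟨_, v1, l1.symm⟩
  · exact ⟨g, hV, Sop_zero hc⟩

set_option maxHeartbeats 4000000 in
/-- A single-row move that is common to the two spin nodes. -/
lemma closeA_hi {n : ℕ} (hn : 4 ≤ n) {ι : ℕ → ℕ} (hadm : Admissible n ι)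
    (hadap : Adapted n (cartanD n) ι) {s : ℤ} {k : ℕ} {g : ℤ → ℕ} (hV : VA n s k g)
    {i : ℕ} {t : ℤ} (hi : i = n - 1 ∨ i = n) (ht : 1 ≤ t + (PD ι n i : ℤ))
    {a b : ℕ} (hab : (a = n ∧ b = n + 1) ∨ (a = n + 1 ∧ b = n))
    (s1 : ∀ L, boxD ι n L a = boxD ι n L (n - 1) - bf ι n i L)
    (s2 : ∀ L, boxD ι n L (n + 2) = boxD ι n L b - bf ι n i L)
    (hc : ltab ι n s k g (ypos ι n i t) = ind s k g t (n - 1) + ind s k g t b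
      - ind s k g (t - 1) a - ind s k g (t - 1) (n + 2)) :
    ∃ g', VA n s k g' ∧ Sop (cartanD n) ι (ypos ι n i t) (ltab ι n s k g) = ltab ι n s k g' := by
  have hi1 : 1 ≤ i := by omega
  have hin : i ≤ n := by omega
  have up1 : (s ≤ t ∧ t < s + k ∧ g t = n - 1) →
      ¬ (s ≤ t - 1 ∧ t - 1 < s + k ∧ (g (t - 1) = a ∨ g (t - 1) = n + 2)) →
      ltab ι n s k g (ypos ι n i t) = 1 → ∃ g', VA n s k g' ∧
        Sop (cartanD n) ι (ypos ι n i t) (ltab ι n s k g) = ltab ι n s k g' := by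
    rintro ⟨h1, h2, h3⟩ h4 h5
    refine ⟨Function.update g t a, VA_update hV (by omega) (by omega) ?_ ?_, ?_⟩
    · intro x y
      have := hV.2.2.2 t x y
      unfold okD at *; omega
    · intro x y
      have := VA_below hV x y
      unfold okD at *; omega
    · rw [Sop_one hn hadm hadap hi1 hin ht h5, sub_eq_add_neg]
      refine (ltab_update h1 h2 _ ?_).symm
      rw [h3, s1, sub_eq_add_neg]
  have up2 : (s ≤ t ∧ t < s + k ∧ g t = b) →
      ¬ (s ≤ t - 1 ∧ t - 1 < s + k ∧ (g (t - 1) = a ∨ g (t - 1) = n + 2)) →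
      ltab ι n s k g (ypos ι n i t) = 1 → ∃ g', VA n s k g' ∧
        Sop (cartanD n) ι (ypos ι n i t) (ltab ι n s k g) = ltab ι n s k g' := by
    rintro ⟨h1, h2, h3⟩ h4 h5
    refine ⟨Function.update g t (n + 2), VA_update hV (by omega) (by omega) ?_ ?_, ?_⟩
    · intro x y
      have := hV.2.2.2 t x y
      unfold okD at *; omega
    · intro x y
      have := VA_below hV x y
      unfold okD at *; omega
    · rw [Sop_one hn hadm hadap hi1 hin ht h5, sub_eq_add_neg]
      refine (ltab_update h1 h2 _ ?_).symm
      rw [h3, s2, sub_eq_add_neg]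
  have down1 : (s ≤ t - 1 ∧ t - 1 < s + k ∧ g (t - 1) = a) →
      ¬ (s ≤ t ∧ t < s + k ∧ (g t = n - 1 ∨ g t = b)) →
      ltab ι n s k g (ypos ι n i t) = -1 → ∃ g', VA n s k g' ∧
        Sop (cartanD n) ι (ypos ι n i t) (ltab ι n s k g) = ltab ι n s k g' := by
    rintro ⟨h1, h2, h3⟩ h4 h5
    rcases Sop_neg_one hn hadm hadap hi1 hin ht h5 with h | h
    · exact ⟨g, hV, h⟩
    refine ⟨Function.update g (t - 1) (n - 1), VA_update hV (by omega) (by omega) ?_ ?_, ?_⟩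
    · intro x y
      have := hV.2.2.2 _ x y
      rw [sub_add_cancel] at this y ⊢
      unfold okD at *; omega
    · intro x y
      have := VA_below hV x y
      unfold okD at *; omega
    · rw [h]
      refine (ltab_update h1 h2 _ ?_).symm
      rw [h3, s1, sub_add_cancel]
  have down2 : (s ≤ t - 1 ∧ t - 1 < s + k ∧ g (t - 1) = n + 2) →
      ¬ (s ≤ t ∧ t < s + k ∧ (g t = n - 1 ∨ g t = b)) →
      ltab ι n s k g (ypos ι n i t) = -1 → ∃ g', VA n s k g' ∧
        Sop (cartanD n) ι (ypos ι n i t) (ltab ι n s k g) = ltab ι n s k g' := by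
    rintro ⟨h1, h2, h3⟩ h4 h5
    rcases Sop_neg_one hn hadm hadap hi1 hin ht h5 with h | h
    · exact ⟨g, hV, h⟩
    refine ⟨Function.update g (t - 1) b, VA_update hV (by omega) (by omega) ?_ ?_, ?_⟩
    · intro x y
      have := hV.2.2.2 _ x y
      rw [sub_add_cancel] at this y ⊢
      unfold okD at *; omega
    · intro x y
      have := VA_below hV x y
      unfold okD at *; omega
    · rw [h]
      refine (ltab_update h1 h2 _ ?_).symm
      rw [h3, s2, sub_add_cancel]
  unfold ind at hc
  by_cases c1 : s ≤ t ∧ t < s + k ∧ g t = n - 1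
  · rw [if_pos c1, if_neg (c := s ≤ t ∧ t < s + k ∧ g t = b) (by omega)] at hc
    by_cases c2 : s ≤ t - 1 ∧ t - 1 < s + k ∧ g (t - 1) = a
    · rw [if_pos c2, if_neg (by omega)] at hc
      exact ⟨g, hV, Sop_zero (by rw [hc]; norm_num)⟩
    · rw [if_neg c2] at hc
      by_cases c3 : s ≤ t - 1 ∧ t - 1 < s + k ∧ g (t - 1) = n + 2
      · rw [if_pos c3] at hc
        exact ⟨g, hV, Sop_zero (by rw [hc]; norm_num)⟩
      · rw [if_neg c3] at hc
        exact up1 c1 (by omega) (by rw [hc]; norm_num)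
  rw [if_neg c1] at hc
  by_cases c1' : s ≤ t ∧ t < s + k ∧ g t = b
  · rw [if_pos c1'] at hc
    by_cases c2 : s ≤ t - 1 ∧ t - 1 < s + k ∧ g (t - 1) = a
    · rw [if_pos c2, if_neg (by omega)] at hc
      exact ⟨g, hV, Sop_zero (by rw [hc]; norm_num)⟩
    · rw [if_neg c2] at hc
      by_cases c3 : s ≤ t - 1 ∧ t - 1 < s + k ∧ g (t - 1) = n + 2
      · rw [if_pos c3] at hc
        exact ⟨g, hV, Sop_zero (by rw [hc]; norm_num)⟩
      · rw [if_neg c3] at hc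
        exact up2 c1' (by omega) (by rw [hc]; norm_num)
  rw [if_neg c1'] at hc
  by_cases c2 : s ≤ t - 1 ∧ t - 1 < s + k ∧ g (t - 1) = a
  · rw [if_pos c2, if_neg (by omega)] at hc
    exact down1 c2 (by omega) (by rw [hc]; norm_num)
  rw [if_neg c2] at hc
  by_cases c3 : s ≤ t - 1 ∧ t - 1 < s + k ∧ g (t - 1) = n + 2
  · rw [if_pos c3] at hc
    exact down2 c3 (by omega) (by rw [hc]; norm_num)
  · rw [if_neg c3] at hc
    exact ⟨g, hV, Sop_zero (by rw [hc]; norm_num)⟩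

lemma coef_n_A {n : ℕ} (hn : 4 ≤ n) {ι : ℕ → ℕ} (hadm : Admissible n ι) {t : ℤ}
    (ht : 1 ≤ t + (PD ι n n : ℤ)) {s : ℤ} {k : ℕ} {g : ℤ → ℕ} (hV : VA n s k g) :
    ltab ι n s k g (ypos ι n n t) = ind s k g t (n - 1) + ind s k g t n
      - ind s k g (t - 1) (n + 1) - ind s k g (t - 1) (n + 2) := by
  rw [coef_n hn hadm ht (VA_le hV), ind_neg (e := 0), zero_add]
  rintro ⟨h1, h2, h3⟩
  have := hV.2.2.1 t h1 h2
  omega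

lemma box_step_n1' {ι : ℕ → ℕ} {n : ℕ} (hn : 4 ≤ n) (L : ℤ) :
    boxD ι n L (n + 2) = boxD ι n L (n + 1) - bf ι n (n - 1) L :=
  box_stepB (by omega) (by omega) hn (by omega) (by omega)

lemma closeA {n : ℕ} (hn : 4 ≤ n) {ι : ℕ → ℕ} (hadm : Admissible n ι)
    (hadap : Adapted n (cartanD n) ι) {s : ℤ} {k : ℕ} {g : ℤ → ℕ} (hV : VA n s k g)
    {i : ℕ} {t : ℤ} (hi : 1 ≤ i) (hin : i ≤ n) (ht : 1 ≤ t + (PD ι n i : ℤ)) :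
    ∃ g', VA n s k g' ∧ Sop (cartanD n) ι (ypos ι n i t) (ltab ι n s k g) = ltab ι n s k g' := by
  rcases (by omega : i + 2 ≤ n ∨ i = n - 1 ∨ i = n) with h | h | h
  · exact closeA_lo hn hadm hadap hV hi h ht
  · subst h
    exact closeA_hi hn hadm hadap hV (Or.inl rfl) ht (a := n) (b := n + 1) (Or.inl ⟨rfl, rfl⟩)
      (box_step_n1 hn) (box_step_n1' hn) (coef_n1 hn hadm ht (VA_le hV))
  · rw [h] at ht ⊢
    exact closeA_hi hn hadm hadap hV (Or.inr rfl) ht (a := n + 1) (b := n) (Or.inr ⟨rfl, rfl⟩)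
      (box_step_n hn) (box_step_n' hn) (coef_n_A hn hadm ht hV)

/-! ### Moves on tableaux of the second kind -/

lemma VB_le {n : ℕ} {s : ℤ} {k : ℕ} {g : ℤ → ℕ} (hV : VB n s k g) :
    ∀ L, s ≤ L → L < s + k → g L ≤ 2 * n := by
  intro L h1 h2
  by_cases h : L = s + k - 1
  · rw [h, hV.2.2.1]; omega
  · exact (hV.2.2.2.1 L h1 (by omega)).2

lemma VB_cases {n : ℕ} {s : ℤ} {k : ℕ} {g : ℤ → ℕ} (hV : VB n s k g) {L : ℤ} (h1 : s ≤ L)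
    (h2 : L < s + k) : (L = s + k - 1 ∧ g L = 0) ∨ (L + 1 < s + k ∧ n + 1 ≤ g L ∧ g L ≤ 2 * n ∧
      g (L + 1) < g L) := by
  by_cases h : L = s + k - 1
  · left; rw [h, hV.2.2.1]; exact ⟨rfl, rfl⟩
  · right
    have := hV.2.2.2.1 L h1 (by omega)
    exact ⟨by omega, this.1, this.2, hV.2.2.2.2 L h1 (by omega)⟩

lemma VB_update {n : ℕ} {s : ℤ} {k : ℕ} {g : ℤ → ℕ} (hV : VB n s k g) {u : ℤ} {e : ℕ}
    (hu : u + 1 < s + k) (he1 : n + 1 ≤ e) (he2 : e ≤ 2 * n)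
    (hp : s ≤ u → u + 1 < s + k → g (u + 1) < e)
    (hq : s ≤ u - 1 → u < s + k → e < g (u - 1)) :
    VB n s k (Function.update g u e) := by
  obtain ⟨h1, h2, h0, h3, h4⟩ := hV
  refine ⟨h1, h2, ?_, fun L a b => ?_, fun L a b => ?_⟩
  · rw [Function.update_of_ne (by omega)]; exact h0
  · rw [Function.update_apply]
    split_ifs
    · exact ⟨he1, he2⟩
    · exact h3 L a b
  · by_cases c1 : L = u
    · subst c1
      rw [Function.update_self, Function.update_of_ne (by omega)]
      exact hp a b
    · by_cases c2 : L + 1 = u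
      · subst c2
        rw [Function.update_self, Function.update_of_ne (by omega)]
        simpa using hq (by omega) (by omega)
      · rw [Function.update_of_ne (by omega), Function.update_of_ne (by omega)]
        exact h4 L a b

lemma coef_B {n : ℕ} (hn : 4 ≤ n) {ι : ℕ → ℕ} (hadm : Admissible n ι) {i : ℕ} {t : ℤ}
    (hi : 1 ≤ i) (hin : i + 1 ≤ n) (ht : 1 ≤ t + (PD ι n i : ℤ)) {s : ℤ} {k : ℕ} {g : ℤ → ℕ}
    (hV : VB n s k g) :
    ltab ι n s k g (ypos ι n i t) =
      ind s k g (t - (n - i - 1)) (2 * n - i) - ind s k g (t - (n - i)) (2 * n + 1 - i) := by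
  have key : ∀ (u : ℤ) (e : ℕ), 1 ≤ e → e ≤ n → ind s k g u e = 0 := by
    intro u e h1 h2
    apply ind_neg
    rintro ⟨a, b, c⟩
    rcases VB_cases hV a b with h | h <;> omega
  by_cases h : i + 2 ≤ n
  · rw [coef_lo hn hadm hi h ht (VB_le hV), key t i hi (by omega), key _ (i + 1) (by omega) (by omega)]
    ring
  · obtain rfl : i = n - 1 := by omega
    rw [coef_n1 hn hadm ht (VB_le hV), key t _ (by omega) (by omega),
      key _ n (by omega) (by omega)]
    rw [show t - ((n : ℤ) - ((n - 1 : ℕ) : ℤ) - 1) = t by omega,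
      show t - ((n : ℤ) - ((n - 1 : ℕ) : ℤ)) = t - 1 by omega,
      show 2 * n - (n - 1) = n + 1 by omega, show 2 * n + 1 - (n - 1) = n + 2 by omega]
    ring

lemma coef_Bn {n : ℕ} (hn : 4 ≤ n) {ι : ℕ → ℕ} (hadm : Admissible n ι) {t : ℤ}
    (ht : 1 ≤ t + (PD ι n n : ℤ)) {s : ℤ} {k : ℕ} {g : ℤ → ℕ}
    (hV : VB n s k g) :
    ltab ι n s k g (ypos ι n n t) =
      ind s k g t 0 - ind s k g (t - 1) (n + 1) - ind s k g (t - 1) (n + 2) := by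
  have key : ∀ (u : ℤ) (e : ℕ), 1 ≤ e → e ≤ n → ind s k g u e = 0 := by
    intro u e h1 h2
    apply ind_neg
    rintro ⟨a, b, c⟩
    rcases VB_cases hV a b with h | h <;> omega
  rw [coef_n hn hadm ht (VB_le hV), key t (n - 1) (by omega) (by omega),
    key t n (by omega) (by omega)]
  ring

lemma closeB_lo {n : ℕ} (hn : 4 ≤ n) {ι : ℕ → ℕ} (hadm : Admissible n ι)
    (hadap : Adapted n (cartanD n) ι) {s : ℤ} {k : ℕ} {g : ℤ → ℕ} (hV : VB n s k g)
    {i : ℕ} {t : ℤ} (hi : 1 ≤ i) (hin : i + 1 ≤ n) (ht : 1 ≤ t + (PD ι n i : ℤ)) :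
    ∃ g', VB n s k g' ∧ Sop (cartanD n) ι (ypos ι n i t) (ltab ι n s k g) = ltab ι n s k g' := by
  have hc := coef_B hn hadm hi hin ht hV
  have hin' : i ≤ n := by omega
  have e1 : t - (n - i - 1) - 1 = t - ((n : ℤ) - i) := by ring
  have e2 : t - ((n : ℤ) - i) + 1 = t - (n - i - 1) := by ring
  rcases tri s k g (t - (n - i - 1)) (t - (n - i)) (2 * n - i) (2 * n + 1 - i) with
    ⟨hB, b1, b2⟩ | ⟨hB, b1, b2⟩ | hB <;> rw [hB] at hc
  · rw [Sop_one hn hadm hadap hi hin' ht hc]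
    obtain ⟨a, b, c⟩ := b1
    have h1 := VB_cases hV a b
    refine ⟨Function.update g (t - (n - i - 1)) (2 * n + 1 - i), ?_, ?_⟩
    · refine VB_update hV (by omega) (by omega) (by omega) (fun x y => by omega) (fun x y => ?_)
      rw [e1] at x ⊢
      have h2 := VB_cases hV x (by omega)
      rw [e2] at h2
      omega
    · rw [sub_eq_add_neg (ltab ι n s k g)]
      refine (ltab_update a b _ ?_).symm
      rw [c, show 2 * n + 1 - i = (2 * n - i) + 1 by omega,
        box_stepB hi hin hn (by omega) (t := t) (by ring), sub_eq_add_neg]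
  · rcases Sop_neg_one hn hadm hadap hi hin' ht hc with h | h
    · exact ⟨g, hV, h⟩
    rw [h]
    obtain ⟨a, b, c⟩ := b2
    have h1 := VB_cases hV a b
    refine ⟨Function.update g (t - (n - i)) (2 * n - i), ?_, ?_⟩
    · refine VB_update hV (by omega) (by omega) (by omega) (fun x y => ?_) (fun x y => ?_)
      · rw [e2] at y h1 ⊢
        omega
      · have h2 := VB_cases hV x (by omega)
        rw [sub_add_cancel] at h2
        omega
    · refine (ltab_update a b _ ?_).symm
      rw [c, show 2 * n + 1 - i = (2 * n - i) + 1 by omega,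
        box_stepB hi hin hn (by omega) (t := t - 1) (by ring), sub_add_cancel]
  · exact ⟨g, hV, Sop_zero hc⟩

lemma ltab_succ {ι : ℕ → ℕ} {n : ℕ} (s : ℤ) (k : ℕ) (g : ℤ → ℕ) :
    ltab ι n s (k + 1) g = ltab ι n s k g + boxD ι n (s + k) (g (s + k)) := by
  unfold ltab
  have : Finset.Ico s (s + ((k + 1 : ℕ) : ℤ)) = insert (s + (k : ℤ)) (Finset.Ico s (s + k)) := by
    ext L
    simp only [Finset.mem_Ico, Finset.mem_insert]
    omega
  rw [this, Finset.sum_insert (by simp), add_comm]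

lemma ltab_congr {ι : ℕ → ℕ} {n : ℕ} {s : ℤ} {k : ℕ} {g g' : ℤ → ℕ}
    (h : ∀ L, s ≤ L → L < s + k → g L = g' L) : ltab ι n s k g = ltab ι n s k g' := by
  unfold ltab
  refine Finset.sum_congr rfl fun L hL => ?_
  rw [Finset.mem_Ico] at hL
  rw [h L hL.1 hL.2]

/-- The row-adding move at the top. -/
lemma spin_top {ι : ℕ → ℕ} {n : ℕ} (hn : 4 ≤ n) {s : ℤ} {k : ℕ} {g g' : ℤ → ℕ}
    (h1 : g (s + k) = n + 2) (h2 : g (s + k + 1) = n + 1) (h3 : g (s + k + 2) = 0)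
    (h4 : g' (s + k) = 0) (h : ∀ L, s ≤ L → L < s + k → g L = g' L) :
    ltab ι n s (k + 3) g = ltab ι n s (k + 1) g' - bf ι n n (s + k) := by
  rw [show k + 3 = k + 1 + 1 + 1 by ring, ltab_succ, ltab_succ, ltab_succ, ltab_succ _ _ g',
    ltab_congr h, h1, h4]
  push_cast
  rw [← add_assoc, ← add_assoc, h2, h3]
  have := box_spin (ι := ι) hn (s + k)
  rw [show s + k + 1 + 1 = s + k + 2 by ring] at this
  rw [add_assoc (ltab ι n s k g'), add_assoc (ltab ι n s k g'), this]
  abel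

lemma VB_bound {n : ℕ} {s : ℤ} {k : ℕ} {g : ℤ → ℕ} (hV : VB n s k g) {c : ℕ}
    (hc : s ≤ s + k - 2 → c ≤ g (s + k - 2)) (m : ℕ) :
    m + 2 ≤ k → c + m ≤ g (s + k - 2 - m) := by
  induction m with
  | zero => intro h; simpa using hc (by omega)
  | succ m ih =>
    intro h
    have h1 := ih (by omega)
    have h2 := hV.2.2.2.2 (s + k - 2 - ((m + 1 : ℕ) : ℤ)) (by push_cast; omega) (by push_cast; omega)
    rw [show s + k - 2 - ((m + 1 : ℕ) : ℤ) + 1 = s + k - 2 - m by push_cast; ring] at h2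
    omega

lemma closeB_n {n : ℕ} (hn : 4 ≤ n) {ι : ℕ → ℕ} (hadm : Admissible n ι)
    (hadap : Adapted n (cartanD n) ι) {s : ℤ} {k : ℕ} {g : ℤ → ℕ} (hV : VB n s k g)
    {t : ℤ} (ht : 1 ≤ t + (PD ι n n : ℤ)) :
    ∃ k' g', VB n s k' g' ∧ k' % 2 = k % 2 ∧
      Sop (cartanD n) ι (ypos ι n n t) (ltab ι n s k g) = ltab ι n s k' g' := by
  have hc := coef_Bn hn hadm ht hV
  have hn1 : 1 ≤ n := by omega
  obtain ⟨k1, k2, k0, k3, k4⟩ := id hV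
  have triv : ltab ι n s k g (ypos ι n n t) = 0 → ∃ k' g', VB n s k' g' ∧ k' % 2 = k % 2 ∧
      Sop (cartanD n) ι (ypos ι n n t) (ltab ι n s k g) = ltab ι n s k' g' :=
    fun h => ⟨k, g, hV, rfl, Sop_zero h⟩
  by_cases top : t = s + k - 1
  · rw [ind_pos (u := t) (by omega) (by omega) (by rw [top, k0])] at hc
    by_cases c1 : s ≤ t - 1 ∧ t - 1 < s + k ∧ g (t - 1) = n + 1
    · rw [ind_pos c1.1 c1.2.1 c1.2.2, ind_neg (by omega)] at hc
      exact triv (by rw [hc]; norm_num)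
    by_cases c2 : s ≤ t - 1 ∧ t - 1 < s + k ∧ g (t - 1) = n + 2
    · rw [ind_pos c2.1 c2.2.1 c2.2.2, ind_neg (by omega)] at hc
      exact triv (by rw [hc]; norm_num)
    rw [ind_neg c1, ind_neg c2] at hc
    rw [Sop_one hn hadm hadap hn1 le_rfl ht (by rw [hc]; norm_num)]
    have hb : s ≤ s + k - 2 → n + 3 ≤ g (s + k - 2) := by
      intro h
      have := VB_cases hV h (by omega)
      rw [show t - 1 = s + k - 2 by omega] at c1 c2
      omega
    have hk : k + 1 ≤ n := by
      by_contra hk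
      have h1 := VB_bound hV hb (k - 2) (by omega)
      rw [show s + k - 2 - ((k - 2 : ℕ) : ℤ) = s by omega] at h1
      have := VB_le hV s (by omega) (by omega)
      omega
    obtain ⟨m, rfl⟩ : ∃ m, k = m + 1 := ⟨k - 1, by omega⟩
    push_cast at top
    obtain rfl : t = s + m := by omega
    set g' : ℤ → ℕ := fun L => if L < s + m then g L else if L = s + m then n + 2 else
      if L = s + m + 1 then n + 1 else 0 with hg'
    have v1 : g' (s + m) = n + 2 := by simp [hg']
    have v2 : g' (s + m + 1) = n + 1 := by
      simp only [hg']; rw [if_neg (by omega), if_neg (by omega), if_pos trivial]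
    have v3 : g' (s + m + 2) = 0 := by
      simp only [hg']; rw [if_neg (by omega), if_neg (by omega), if_neg (by omega)]
    have v4 : ∀ L, L < s + m → g' L = g L := fun L h => by simp only [hg']; rw [if_pos h]
    refine ⟨m + 3, g', ⟨by omega, by omega, ?_, fun L a b => ?_, fun L a b => ?_⟩, by omega, ?_⟩
    · push_cast
      rw [show s + (m + 3 : ℤ) - 1 = s + m + 2 by ring, v3]
    · push_cast at b
      rcases (by omega : L < s + m ∨ L = s + m ∨ L = s + m + 1) with h | rfl | rfl
      · rw [v4 L h]; exact k3 L a (by push_cast; omega)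
      · rw [v1]; omega
      · rw [v2]; omega
    · push_cast at b
      rcases (by omega : L + 1 < s + m ∨ L + 1 = s + m ∨ L = s + m ∨ L = s + m + 1)
        with h | h | rfl | rfl
      · rw [v4 L (by omega), v4 _ h]; exact k4 L a (by push_cast; omega)
      · rw [h, v1, v4 L (by omega)]
        push_cast at hb
        rw [show s + (m + 1 : ℤ) - 2 = L by omega] at hb
        have := hb a
        omega
      · rw [v1, v2]; omega
      · rw [v2, show s + (m : ℤ) + 1 + 1 = s + m + 2 by ring, v3]; omega
    · rw [spin_top hn v1 v2 v3 (by push_cast at k0; rw [← k0]; congr 1)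
        (fun L _ h => v4 L h)]
  · rw [ind_neg (u := t) (by
      rintro ⟨a, b, c⟩
      have := VB_cases hV a b
      omega)] at hc
    rw [ind_neg (e := n + 1) (by
      rintro ⟨a, b, c⟩
      have h1 := VB_cases hV a b
      have h2 := VB_cases hV (L := t) (by omega) (by omega)
      rw [sub_add_cancel] at h1
      omega)] at hc
    by_cases c2 : s ≤ t - 1 ∧ t - 1 < s + k ∧ g (t - 1) = n + 2
    swap
    · rw [ind_neg c2] at hc
      exact triv (by rw [hc]; norm_num)
    obtain ⟨a, b, c⟩ := c2
    rw [ind_pos a b c] at hc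
    have h1 := VB_cases hV a b
    have h2 := VB_cases hV (L := t) (by omega) (by omega)
    rw [sub_add_cancel] at h1
    have h3 := VB_cases hV (L := t + 1) (by omega) (by omega)
    rcases Sop_neg_one hn hadm hadap hn1 le_rfl ht (φ := ltab ι n s k g) (by rw [hc]; norm_num) with h | h
    · exact ⟨k, g, hV, rfl, h⟩
    obtain ⟨m, rfl⟩ : ∃ m, k = m + 3 := ⟨k - 3, by omega⟩
    obtain rfl : t = s + m + 1 := by omega
    rw [add_sub_cancel_right] at a b c h h1
    refine ⟨m + 1, Function.update g (s + m) 0,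
      ⟨by omega, by omega, ?_, fun L a b => ?_, fun L a b => ?_⟩, by omega, ?_⟩
    · rw [show s + ((m + 1 : ℕ) : ℤ) - 1 = s + m by push_cast; ring, Function.update_self]
    · rw [Function.update_of_ne (by omega)]
      exact k3 L a (by push_cast at *; omega)
    · push_cast at b
      rw [Function.update_of_ne (by omega) (a := L)]
      by_cases hL : L + 1 = s + m
      · rw [hL, Function.update_self]
        have := k3 L a (by push_cast at *; omega)
        omega
      · rw [Function.update_of_ne hL]
        exact k4 L a (by push_cast at *; omega)
    · rw [h, spin_top hn (g' := Function.update g (s + m) 0) c (by omega)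
        (by rw [show s + (m : ℤ) + 2 = s + m + 1 + 1 by ring]; omega)
        (Function.update_self _ _ _) (fun L _ h => by rw [Function.update_of_ne (by omega)]),
        sub_add_cancel]

lemma closeB {n : ℕ} (hn : 4 ≤ n) {ι : ℕ → ℕ} (hadm : Admissible n ι)
    (hadap : Adapted n (cartanD n) ι) {s : ℤ} {k : ℕ} {g : ℤ → ℕ} (hV : VB n s k g)
    {i : ℕ} {t : ℤ} (hi : 1 ≤ i) (hin : i ≤ n) (ht : 1 ≤ t + (PD ι n i : ℤ)) :
    ∃ k' g', VB n s k' g' ∧ k' % 2 = k % 2 ∧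
      Sop (cartanD n) ι (ypos ι n i t) (ltab ι n s k g) = ltab ι n s k' g' := by
  by_cases h : i = n
  · subst h
    exact closeB_n hn hadm hadap hV ht
  · obtain ⟨g', h1, h2⟩ := closeB_lo hn hadm hadap hV hi (by omega) ht
    exact ⟨k, g', h1, rfl, h2⟩

/-! ### The coordinate forms as tableaux -/

lemma base_A {ι : ℕ → ℕ} {n : ℕ} {s : ℤ} {k : ℕ} {g : ℤ → ℕ} (hk : 1 ≤ k)
    (hkn : k + 2 ≤ n) (hg : ∀ L, s ≤ L → L < s + k → (g L : ℤ) = s + k - L) :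
    ltab ι n s k g = yv ι n k s := by
  have key : ∀ m : ℕ, m ≤ k → ltab ι n s m g = yv ι n k s - yv ι n (k - m) (s + m) := by
    intro m
    induction m with
    | zero => intro _; simp [ltab]
    | succ m ih =>
      intro h
      have h1 := hg (s + m) (by omega) (by omega)
      have h2 : g (s + m) = k - m := by omega
      rw [ltab_succ, ih (by omega), h2, box_low (by omega) (by omega),
        show k - (m + 1) = k - m - 1 by omega]
      push_cast
      rw [add_assoc s]
      abel
  rw [key k le_rfl, Nat.sub_self, yv_zero, sub_zero]

lemma base_B1 {ι : ℕ → ℕ} {n : ℕ} {s : ℤ} {g : ℤ → ℕ} (h : g s = 0) :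
    ltab ι n s 1 g = yv ι n n s := by
  have := ltab_succ (ι := ι) (n := n) s 0 g
  simp only [Nat.cast_zero, add_zero, zero_add, h, box_zero] at this
  rw [this]
  simp [ltab]

lemma base_B2 {ι : ℕ → ℕ} {n : ℕ} (hn : 4 ≤ n) {s : ℤ} {g : ℤ → ℕ} (h : g s = n + 1)
    (h' : g (s + 1) = 0) : ltab ι n s 2 g = yv ι n (n - 1) s := by
  have h0 := ltab_succ (ι := ι) (n := n) s 1 g
  have := ltab_succ (ι := ι) (n := n) s 0 g
  simp only [Nat.cast_zero, add_zero, zero_add, h, box_nb hn] at this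
  simp only [Nat.cast_one, h', box_zero, this] at h0
  rw [h0]
  simp [ltab]

/-- Every coordinate form is a tableau. -/
lemma base_mem {n : ℕ} (hn : 4 ≤ n) {ι : ℕ → ℕ} {i : ℕ} {t : ℤ} (hi : 1 ≤ i) (hin : i ≤ n)
    (ht : 1 ≤ t + (PD ι n i : ℤ)) : yv ι n i t ∈ TabD ι n := by
  rw [mem_TabD_iff hn]
  rcases (by omega : i + 2 ≤ n ∨ i = n - 1 ∨ i = n) with h | rfl | rfl
  · refine ⟨t, i, fun L => (t + i - L).toNat, Or.inl ⟨⟨hi, h, fun L a b => ?_, fun L a b => ?_⟩,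
      by omega⟩, (base_A hi h fun L a b => by omega).symm⟩
    · dsimp only; omega
    · left; dsimp only; omega
  · refine ⟨t, 2, fun L => if L = t then n + 1 else 0, Or.inr ⟨⟨by omega, by omega, ?_,
      fun L a b => ?_, fun L a b => ?_⟩, ⟨fun _ => by omega, fun h => by omega⟩⟩,
      (base_B2 hn (by simp) (by simp)).symm⟩
    · dsimp only; rw [if_neg]; push_cast; omega
    · dsimp only; rw [if_pos (by push_cast at b; omega)]; omega
    · push_cast at b
      dsimp only
      rw [if_neg (by omega), if_pos (by omega)]; omega
  · refine ⟨t, 1, fun L => 0, Or.inr ⟨⟨by omega, by omega, rfl,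
      fun L a b => ?_, fun L a b => ?_⟩, ⟨fun h => by omega, fun h => by omega⟩⟩,
      (base_B1 rfl).symm⟩
    · push_cast at b; omega
    · push_cast at b; omega

/-! ### Every tableau is reached -/

lemma Xi_back {n : ℕ} (hn : 4 ≤ n) {ι : ℕ → ℕ} (hadm : Admissible n ι)
    (hadap : Adapted n (cartanD n) ι) {i : ℕ} {t : ℤ} (hi : 1 ≤ i)
    (hin : i ≤ n) (ht : 1 ≤ t + (PD ι n i : ℤ)) {φ ψ : ℕ → ℚ}
    (hφ : XiMem (cartanD n) ι φ) (h : φ (ypos ι n i t) = 1) (he : φ = ψ + bf ι n i t) :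
    XiMem (cartanD n) ι ψ := by
  have := XiMem.step (A := cartanD n) _ (ypos_pos hadm hi hin ht) φ hφ
  rw [Sop_one hn hadm hadap hi hin ht h, he, add_sub_cancel_right] at this
  exact this

lemma wsum_succ (w : ℕ → ℕ) (s : ℤ) (k : ℕ) (g : ℤ → ℕ) :
    wsum w s (k + 1) g = wsum w s k g + w (g (s + k)) := by
  unfold wsum
  have : Finset.Ico s (s + ((k + 1 : ℕ) : ℤ)) = insert (s + (k : ℤ)) (Finset.Ico s (s + k)) := by
    ext L
    simp only [Finset.mem_Ico, Finset.mem_insert]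
    omega
  rw [this, Finset.sum_insert (by simp), add_comm]

lemma wsum_congr {w : ℕ → ℕ} {s : ℤ} {k : ℕ} {g g' : ℤ → ℕ}
    (h : ∀ L, s ≤ L → L < s + k → g L = g' L) : wsum w s k g = wsum w s k g' := by
  unfold wsum
  refine Finset.sum_congr rfl fun L hL => ?_
  rw [Finset.mem_Ico] at hL
  rw [h L hL.1 hL.2]

lemma VB_remove {n : ℕ} {s : ℤ} {m : ℕ} {g : ℤ → ℕ} (hV : VB n s (m + 3) g) :
    VB n s (m + 1) (Function.update g (s + m) 0) := by
  obtain ⟨k1, k2, k0, k3, k4⟩ := hV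
  refine ⟨by omega, by omega, ?_, fun L a b => ?_, fun L a b => ?_⟩
  · rw [show s + ((m + 1 : ℕ) : ℤ) - 1 = s + m by push_cast; ring, Function.update_self]
  · rw [Function.update_of_ne (by omega)]
    exact k3 L a (by push_cast at *; omega)
  · push_cast at b
    rw [Function.update_of_ne (by omega) (a := L)]
    by_cases hL : L + 1 = s + m
    · rw [hL, Function.update_self]
      have := k3 L a (by push_cast at *; omega)
      omega
    · rw [Function.update_of_ne hL]
      exact k4 L a (by push_cast at *; omega)

lemma reachB {n : ℕ} (hn : 4 ≤ n) {ι : ℕ → ℕ} (hadm : Admissible n ι)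
    (hadap : Adapted n (cartanD n) ι) {s : ℤ} (N : ℕ) :
    ∀ (k : ℕ) (g : ℤ → ℕ), VB n s k g → SB ι n s k → wsum id s k g = N →
      XiMem (cartanD n) ι (ltab ι n s k g) := by
  induction N using Nat.strong_induction_on with
  | _ N ih =>
  intro k g hV hS hw
  have hPn := PD_n_lip (ι := ι) hn
  obtain ⟨hS0, hS1⟩ := id hS
  by_cases H : ∃ u, s ≤ u ∧ u + 1 < s + k ∧ n + 2 ≤ g u ∧ g (u + 1) + 1 < g u
  · obtain ⟨u, hu1, hu2, hu3, hu4⟩ := H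
    have hg := VB_cases hV hu1 (by omega)
    obtain ⟨i, hi⟩ : ∃ i, i = 2 * n + 1 - g u := ⟨_, rfl⟩
    have hP1 := PD_lip (ι := ι) hn (i := i) (k := n - 1) (by omega) (by omega) (by omega)
    have hP2 : i ≤ n - 2 → PD ι n (n - 2) + i ≤ PD ι n i + (n - 2) := fun h =>
      (PD_lip (ι := ι) hn (i := i) (k := n - 2) (by omega) h (by omega)).2
    have htop := VB_cases hV (L := u + 1) (by omega) (by omega)
    have hb : ∀ _ : s ≤ u - 1, g u < g (u - 1) := by
      intro x
      have := VB_cases hV x (by omega)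
      rw [sub_add_cancel] at this
      omega
    have hV' : VB n s k (Function.update g u (g u - 1)) :=
      VB_update hV hu2 (by omega) (by omega) (fun _ _ => by omega)
        (fun x _ => by have := hb x; omega)
    have hw' := wsum_update (w := id) (g := g) hu1 (by omega : u < s + k) (g u - 1)
    simp only [id] at hw'
    have ht : 1 ≤ u + n - i - 1 + (PD ι n i : ℤ) := by
      rcases Nat.mod_two_eq_zero_or_one k with h | h
      · have := hS0 h
        omega
      · have := hS1 h
        by_cases h' : i ≤ n - 2
        · have := hP2 h'
          omega
        · obtain rfl : i = n - 1 := by omega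
          omega
    refine Xi_back hn hadm hadap (i := i) (t := u + n - i - 1) (by omega) (by omega) ht
      (ih _ (by omega) k _ hV' hS rfl) ?_ ?_
    · rw [coef_B hn hadm (by omega) (by omega) ht hV']
      rw [show u + (n : ℤ) - i - 1 - (n - i - 1) = u by ring,
        show u + (n : ℤ) - i - 1 - (n - i) = u - 1 by ring,
        ind_pos hu1 (by omega) (by rw [Function.update_self]; omega), ind_neg, sub_zero]
      rintro ⟨a, b, c⟩
      rw [Function.update_of_ne (by omega)] at c
      have := hb a
      omega
    · refine ltab_update hu1 (by omega) _ ?_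
      have := box_stepB (ι := ι) (i := i) (e := g u - 1) (L := u) (by omega) (by omega) hn
        (by omega) rfl
      rw [show g u - 1 + 1 = g u by omega] at this
      rw [this, sub_add_cancel]
  · push Not at H
    obtain ⟨k1, k2, k0, k3, k4⟩ := id hV
    by_cases hk1 : k = 1
    · subst hk1
      have ht : 1 ≤ s + (PD ι n n : ℤ) := by have := hS1 rfl; omega
      rw [base_B1 (by simpa using k0), yv_valid (by omega) le_rfl ht]
      exact XiMem.base _ (ypos_pos hadm (by omega) le_rfl ht)
    have h1 := H (s + k - 2) (by omega) (by omega)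
    have h1' := VB_cases hV (L := s + k - 2) (by omega) (by omega)
    have e1 : s + (k : ℤ) - 2 + 1 = s + k - 1 := by ring
    rw [e1, k0] at h1 h1'
    by_cases hk2 : k = 2
    · subst hk2
      have ht : 1 ≤ s + (PD ι n (n - 1) : ℤ) := by have := hS0 rfl; omega
      have e2 : s + ((2 : ℕ) : ℤ) - 2 = s := by push_cast; ring
      have e3 : s + ((2 : ℕ) : ℤ) - 1 = s + 1 := by push_cast; ring
      rw [e2] at h1 h1'
      rw [e3] at k0
      rw [base_B2 hn (by omega) k0, yv_valid (by omega) (by omega) ht]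
      exact XiMem.base _ (ypos_pos hadm (by omega) (by omega) ht)
    obtain ⟨m, rfl⟩ : ∃ m, k = m + 3 := ⟨k - 3, by omega⟩
    have h2 := H (s + m) (by omega) (by push_cast; omega)
    have h2' := VB_cases hV (L := s + m) (by omega) (by push_cast; omega)
    have e2 : s + ((m + 3 : ℕ) : ℤ) - 2 = s + m + 1 := by push_cast; ring
    have e3 : s + ((m + 3 : ℕ) : ℤ) - 1 = s + m + 2 := by push_cast; ring
    rw [e2] at h1 h1'
    rw [e3] at k0
    have g1 : g (s + m + 1) = n + 1 := by omega
    have g2 : g (s + m) = n + 2 := by omega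
    have hV' := VB_remove hV
    have ht : 1 ≤ s + m + (PD ι n n : ℤ) := by
      rcases Nat.mod_two_eq_zero_or_one (m + 3) with h | h
      · have := hS0 h
        omega
      · have := hS1 h
        omega
    have hw' : wsum id s (m + 1) (Function.update g (s + m) 0) < N := by
      rw [← hw, show m + 3 = m + 1 + 1 + 1 by ring, wsum_succ, wsum_succ, wsum_succ, wsum_succ,
        wsum_congr (g := Function.update g (s + m) 0) (g' := g)
          (fun L _ h => by rw [Function.update_of_ne (by omega)]), Function.update_self, g2]
      simp only [id]
      omega
    refine Xi_back hn hadm hadap (i := n) (t := s + m) (by omega) le_rfl ht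
      (ih _ hw' (m + 1) _ hV' ⟨fun h => hS0 (by omega), fun h => hS1 (by omega)⟩ rfl) ?_ ?_
    · rw [coef_Bn hn hadm ht hV', ind_pos (by omega) (by push_cast; omega)
        (Function.update_self _ _ _)]
      have hb : ∀ _ : s ≤ s + m - 1, n + 2 < g (s + m - 1) := by
        intro x
        have := VB_cases hV x (by push_cast; omega)
        rw [sub_add_cancel] at this
        omega
      rw [ind_neg, ind_neg, sub_zero, sub_zero]
      · rintro ⟨a, b, c⟩
        rw [Function.update_of_ne (by omega)] at c
        have := hb a
        omega
      · rintro ⟨a, b, c⟩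
        rw [Function.update_of_ne (by omega)] at c
        have := hb a
        omega
    · rw [spin_top hn (g' := Function.update g (s + m) 0) g2 g1 k0
        (Function.update_self _ _ _) (fun L _ h => by rw [Function.update_of_ne (by omega)]),
        sub_add_cancel]

/-- The weight for tableaux of the first kind. -/
def wA (n e : ℕ) : ℕ := if e ≤ n + 1 then 2 * e else e + n + 1

/-- `u` is the highest level whose entry differs from its row index. -/
def topDev (s : ℤ) (k : ℕ) (g : ℤ → ℕ) (u : ℤ) : Prop :=
  s ≤ u ∧ u < s + k ∧ s + k - u < (g u : ℤ) ∧ ∀ L, u < L → L < s + k → (g L : ℤ) = s + k - L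

lemma topDev_exists {n : ℕ} {s : ℤ} {k : ℕ} {g : ℤ → ℕ} (hV : VA n s k g)
    (h : ¬ ∀ L, s ≤ L → L < s + k → (g L : ℤ) = s + k - L) : ∃ u, topDev s k g u := by
  push Not at h
  obtain ⟨v, v1, v2, v3⟩ := h
  obtain ⟨u, ⟨u1, u2, u3⟩, hu⟩ := Int.exists_greatest_of_bdd
    (P := fun L => s ≤ L ∧ L < s + k ∧ (g L : ℤ) ≠ s + k - L)
    ⟨s + k, fun z hz => by omega⟩ ⟨v, v1, v2, v3⟩
  have hL : ∀ L, u < L → L < s + k → (g L : ℤ) = s + k - L := by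
    intro L a b
    by_contra hc
    have := hu L ⟨by omega, b, hc⟩
    omega
  refine ⟨u, u1, u2, ?_, hL⟩
  by_cases ht : u + 1 < s + k
  · have h1 := hL (u + 1) (by omega) ht
    have h2 := hV.2.2.2 u u1 ht
    have hk := hV.2.1
    unfold okD at h2
    omega
  · have := hV.2.2.1 u u1 u2
    omega

/-- Validity of the node used to undo a move on the barred part. -/
lemma PD_bar {ι : ℕ → ℕ} {n : ℕ} (hn : 4 ≤ n) {i k : ℕ} (hi : 1 ≤ i) (hin : i + 2 ≤ n)
    (hk : 1 ≤ k) (hkn : k + 2 ≤ n) : PD ι n k + i + 2 ≤ PD ι n i + n := by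
  rcases le_total i k with h | h
  · have := PD_lip (ι := ι) hn hi h (by omega)
    omega
  · have := PD_lip (ι := ι) hn hk h (by omega)
    omega

lemma reachA_1 {n : ℕ} (hn : 4 ≤ n) {ι : ℕ → ℕ} (hadm : Admissible n ι)
    (hadap : Adapted n (cartanD n) ι) {s : ℤ} {k : ℕ} {g : ℤ → ℕ} (hV : VA n s k g)
    (hs : 1 - (PD ι n k : ℤ) ≤ s) {u : ℤ} (hu : topDev s k g u)
    (ih : ∀ g', VA n s k g' → wsum (wA n) s k g' < wsum (wA n) s k g →
      XiMem (cartanD n) ι (ltab ι n s k g'))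
    (he : g u + 1 ≤ n) : XiMem (cartanD n) ι (ltab ι n s k g) := by
  obtain ⟨u1, u2, u3, u4⟩ := hu
  obtain ⟨hk1, hk2, -, -⟩ := id hV
  obtain ⟨i, hi⟩ : ∃ i, g u = i + 1 := ⟨g u - 1, by omega⟩
  have hi1 : 1 ≤ i := by omega
  have hin : i + 2 ≤ n := by omega
  have hbar := PD_bar (ι := ι) hn hi1 hin hk1 hk2
  have habove : ¬ (s ≤ u + 1 ∧ u + 1 < s + k ∧ g (u + 1) = i) := by
    rintro ⟨a, b, c⟩
    have := u4 (u + 1) (by omega) b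
    omega
  have e0 : u + 1 - 1 = u := by ring
  have hself : s ≤ u + 1 - 1 ∧ u + 1 - 1 < s + k ∧ g (u + 1 - 1) = i + 1 := by
    rw [e0]; exact ⟨u1, u2, hi⟩
  have hb1 : s ≤ u - 1 → i + 1 < g (u - 1) := by
    intro x
    have := VA_below hV x u2
    unfold okD at this
    omega
  have hb2 : s ≤ u - 2 → i + 1 < g (u - 2) := by
    intro x
    have h1 := hb1 (by omega)
    have := VA_below hV (u := u - 1) (by omega) (by omega)
    rw [show u - 1 - 1 = u - 2 by ring] at this
    unfold okD at this
    omega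
  rcases tri s k g (u - (n - i - 1)) (u - (n - i)) (2 * n - i) (2 * n + 1 - i) with
    ⟨hB, b1, b2⟩ | ⟨hB, b1, b2⟩ | hB
  · -- the same form has a smaller representative
    obtain ⟨v1, l1⟩ := upB (ι := ι) hn hV hi1 hin b1 b2
    obtain ⟨v2, l2⟩ := downA (ι := ι) hn v1 (t := u + 1) hi1 hin
      (by rw [Function.update_of_ne (by omega)]; exact habove)
      (by rw [Function.update_of_ne (by omega)]; exact hself)
    have w1 := wsum_update (w := wA n) (g := g) b1.1 b1.2.1 (2 * n + 1 - i)
    have w2 := wsum_update (w := wA n) (s := s) (k := k)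
      (g := Function.update g (u - (n - i - 1)) (2 * n + 1 - i)) (u := u + 1 - 1)
      hself.1 hself.2.1 i
    rw [Function.update_of_ne (by omega) (a := u + 1 - 1), hself.2.2] at w2
    rw [b1.2.2] at w1
    have a1 : wA n (2 * n + 1 - i) = wA n (2 * n - i) + 1 := by
      unfold wA; rw [if_neg (by omega), if_neg (by omega)]; omega
    have a2 : wA n (i + 1) = wA n i + 2 := by
      unfold wA; rw [if_pos (by omega), if_pos (by omega)]; omega
    have := ih _ v2 (by omega)
    rw [l2, l1, e0, sub_add_cancel] at this
    exact this
  · obtain ⟨v1, l1⟩ := downB (ι := ι) hn hV hi1 hin b1 b2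
    obtain ⟨c1, c2, c3⟩ := b2
    have w1 := wsum_update (w := wA n) (g := g) c1 c2 (2 * n - i)
    rw [c3] at w1
    have a1 : wA n (2 * n + 1 - i) = wA n (2 * n - i) + 1 := by
      unfold wA; rw [if_neg (by omega), if_neg (by omega)]; omega
    have ht : 1 ≤ u - 1 + (PD ι n i : ℤ) := by omega
    refine Xi_back hn hadm hadap hi1 (by omega) ht (ih _ v1 (by omega)) ?_ l1
    rw [coef_lo hn hadm hi1 hin ht (VA_le v1),
      show u - 1 - ((n : ℤ) - i - 1) = u - (n - i) by ring,
      ind_pos (u := u - (n - i)) c1 c2 (Function.update_self _ _ _), ind_neg, ind_neg, ind_neg]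
    · norm_num
    · rintro ⟨x, y, z⟩
      rw [Function.update_of_ne (by omega)] at z
      have := VA_below hV (u := u - (n - i)) (by omega) c2
      rw [show u - ((n : ℤ) - i) - 1 = u - 1 - (n - i) by ring] at this
      unfold okD at this
      omega
    · rintro ⟨x, y, z⟩
      rw [show u - 1 - 1 = u - 2 by ring] at x z
      by_cases hq : u - 2 = u - ((n : ℤ) - i)
      · rw [hq, Function.update_self] at z
        omega
      · rw [Function.update_of_ne hq] at z
        have := hb2 x
        omega
    · rintro ⟨x, y, z⟩
      rw [Function.update_of_ne (by omega)] at z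
      have := hb1 x
      omega
  · obtain ⟨v1, l1⟩ := downA (ι := ι) hn hV (t := u + 1) hi1 hin habove hself
    rw [e0] at v1 l1
    have w1 := wsum_update (w := wA n) (g := g) u1 u2 i
    rw [hi] at w1
    have a2 : wA n (i + 1) = wA n i + 2 := by
      unfold wA; rw [if_pos (by omega), if_pos (by omega)]; omega
    have ht : 1 ≤ u + (PD ι n i : ℤ) := by
      rcases le_total i k with h | h
      · have := PD_lip (ι := ι) hn hi1 h (by omega)
        omega
      · have := PD_lip (ι := ι) hn hk1 h (by omega)
        omega
    refine Xi_back hn hadm hadap hi1 (by omega) ht (ih _ v1 (by omega)) ?_ l1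
    have hB' : ind s k (Function.update g u i) (u - (n - i - 1)) (2 * n - i) -
        ind s k (Function.update g u i) (u - (n - i)) (2 * n + 1 - i) = 0 := by
      unfold ind at hB ⊢
      rw [Function.update_of_ne (by omega), Function.update_of_ne (by omega)]
      exact hB
    rw [coef_lo hn hadm hi1 hin ht (VA_le v1), add_sub_assoc, hB',
      ind_pos (u := u) u1 u2 (Function.update_self _ _ _), ind_neg]
    · norm_num
    · rintro ⟨x, y, z⟩
      rw [Function.update_of_ne (by omega)] at z
      have := hb1 x
      omega

/-- The common treatment of the entries `n` and `n̄`. -/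
lemma reachA_2 {n : ℕ} (hn : 4 ≤ n) {ι : ℕ → ℕ} (hadm : Admissible n ι)
    (hadap : Adapted n (cartanD n) ι) {s : ℤ} {k : ℕ} {g : ℤ → ℕ} (hV : VA n s k g)
    (hs : 1 - (PD ι n k : ℤ) ≤ s) {u : ℤ} (hu : topDev s k g u)
    (ih : ∀ g', VA n s k g' → wsum (wA n) s k g' < wsum (wA n) s k g →
      XiMem (cartanD n) ι (ltab ι n s k g'))
    {i : ℕ} (hi : i = n - 1 ∨ i = n)
    {a b : ℕ} (hab : (a = n ∧ b = n + 1) ∨ (a = n + 1 ∧ b = n))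
    (s1 : ∀ L, boxD ι n L a = boxD ι n L (n - 1) - bf ι n i L)
    (s2 : ∀ L, boxD ι n L (n + 2) = boxD ι n L b - bf ι n i L)
    (hc : ∀ g' t, VA n s k g' → 1 ≤ t + (PD ι n i : ℤ) →
      ltab ι n s k g' (ypos ι n i t) = ind s k g' t (n - 1) + ind s k g' t b
      - ind s k g' (t - 1) a - ind s k g' (t - 1) (n + 2))
    (he : g u = a) : XiMem (cartanD n) ι (ltab ι n s k g) := by
  obtain ⟨u1, u2, u3, u4⟩ := hu
  obtain ⟨hk1, hk2, -, -⟩ := id hV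
  have hPk := PD_lip (ι := ι) hn (i := k) (k := n - 2) hk1 (by omega) (by omega)
  have hPn := PD_n_lip (ι := ι) hn
  have hi1 : 1 ≤ i := by omega
  have hin : i ≤ n := by omega
  have hP : PD ι n k ≤ PD ι n i := by
    rcases hi with rfl | hi
    · omega
    · rw [hi]; omega
  have habove : u + 1 < s + k → g (u + 1) + 1 < n - 1 := by
    intro x
    have := u4 (u + 1) (by omega) x
    omega
  have hb1 : s ≤ u - 1 → okD n (g u) (g (u - 1)) := fun x => VA_below hV x u2
  by_cases hc1 : s ≤ u - 1 ∧ g (u - 1) = n + 2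
  · obtain ⟨x, y⟩ := hc1
    have hb2 : s ≤ u - 2 → n + 2 < g (u - 2) := by
      intro z
      have := VA_below hV (u := u - 1) (by omega) (by omega)
      rw [show u - 1 - 1 = u - 2 by ring] at this
      unfold okD at this
      omega
    have v1 : VA n s k (Function.update g (u - 1) b) := by
      refine VA_update hV (by omega) (by omega) (fun _ _ => ?_) (fun p q => ?_)
      · rw [sub_add_cancel, he]
        unfold okD
        omega
      · rw [show u - 1 - 1 = u - 2 by ring] at p ⊢
        have := hb2 p
        unfold okD
        omega
    have w1 := wsum_update (w := wA n) (g := g) x (by omega : u - 1 < s + k) b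
    rw [y] at w1
    have a1 : wA n b < wA n (n + 2) := by
      unfold wA; rw [if_pos (by omega), if_neg (by omega)]; omega
    have ht : 1 ≤ u - 1 + (PD ι n i : ℤ) := by omega
    refine Xi_back hn hadm hadap hi1 hin ht (ih _ v1 (by omega)) ?_
      (ltab_update x (by omega) _ (by rw [y, s2, sub_add_cancel]))
    rw [hc _ _ v1 ht, ind_pos (u := u - 1) (e := b) x (by omega) (Function.update_self _ _ _),
      ind_neg, ind_neg, ind_neg]
    · norm_num
    · rintro ⟨p, q, r⟩
      rw [Function.update_of_ne (by omega)] at r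
      rw [show u - 1 - 1 = u - 2 by ring] at p r
      have := hb2 p
      omega
    · rintro ⟨p, q, r⟩
      rw [Function.update_of_ne (by omega)] at r
      rw [show u - 1 - 1 = u - 2 by ring] at p r
      have := hb2 p
      omega
    · rintro ⟨p, q, r⟩
      rw [Function.update_self] at r
      omega
  · have v1 : VA n s k (Function.update g u (n - 1)) := by
      refine VA_update hV (by omega) (by omega) (fun p q => ?_) (fun p q => ?_)
      · have := habove q
        unfold okD
        omega
      · have := hb1 p
        unfold okD at *
        omega
    have w1 := wsum_update (w := wA n) (g := g) u1 u2 (n - 1)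
    rw [he] at w1
    have a1 : wA n (n - 1) < wA n a := by
      unfold wA; rw [if_pos (by omega), if_pos (by omega)]; omega
    have ht : 1 ≤ u + (PD ι n i : ℤ) := by omega
    refine Xi_back hn hadm hadap hi1 hin ht (ih _ v1 (by omega)) ?_
      (ltab_update u1 u2 _ (by rw [he, s1, sub_add_cancel]))
    rw [hc _ _ v1 ht, ind_pos (u := u) (e := n - 1) u1 u2 (Function.update_self _ _ _),
      ind_neg, ind_neg, ind_neg]
    · norm_num
    · rintro ⟨p, q, r⟩
      rw [Function.update_of_ne (by omega)] at r
      exact hc1 ⟨p, r⟩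
    · rintro ⟨p, q, r⟩
      rw [Function.update_of_ne (by omega)] at r
      have := hb1 p
      unfold okD at this
      omega
    · rintro ⟨p, q, r⟩
      rw [Function.update_self] at r
      omega

lemma reachA_4 {n : ℕ} (hn : 4 ≤ n) {ι : ℕ → ℕ} (hadm : Admissible n ι)
    (hadap : Adapted n (cartanD n) ι) {s : ℤ} {k : ℕ} {g : ℤ → ℕ} (hV : VA n s k g)
    (hs : 1 - (PD ι n k : ℤ) ≤ s) {u : ℤ} (hu : topDev s k g u)
    (ih : ∀ g', VA n s k g' → wsum (wA n) s k g' < wsum (wA n) s k g →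
      XiMem (cartanD n) ι (ltab ι n s k g'))
    (he : g u = n + 2) : XiMem (cartanD n) ι (ltab ι n s k g) := by
  obtain ⟨u1, u2, u3, u4⟩ := hu
  obtain ⟨hk1, hk2, -, -⟩ := id hV
  have hPk := PD_lip (ι := ι) hn (i := k) (k := n - 1) hk1 (by omega) (by omega)
  have hb1 : s ≤ u - 1 → n + 2 < g (u - 1) := by
    intro x
    have := VA_below hV x u2
    unfold okD at this
    omega
  have v1 : VA n s k (Function.update g u (n + 1)) := by
    refine VA_update hV (by omega) (by omega) (fun p q => ?_) (fun p q => ?_)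
    · have := u4 (u + 1) (by omega) q
      unfold okD
      omega
    · have := hb1 p
      unfold okD
      omega
  have w1 := wsum_update (w := wA n) (g := g) u1 u2 (n + 1)
  rw [he] at w1
  have a1 : wA n (n + 1) < wA n (n + 2) := by
    unfold wA; rw [if_pos (by omega), if_neg (by omega)]; omega
  have ht : 1 ≤ u + (PD ι n (n - 1) : ℤ) := by omega
  refine Xi_back hn hadm hadap (i := n - 1) (by omega) (by omega) ht (ih _ v1 (by omega)) ?_
    (ltab_update u1 u2 _ (by rw [he, box_step_n1' hn, sub_add_cancel]))
  rw [coef_n1 hn hadm ht (VA_le v1),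
    ind_pos (u := u) (e := n + 1) u1 u2 (Function.update_self _ _ _), ind_neg, ind_neg, ind_neg]
  · norm_num
  · rintro ⟨p, q, r⟩
    rw [Function.update_of_ne (by omega)] at r
    have := hb1 p
    omega
  · rintro ⟨p, q, r⟩
    rw [Function.update_of_ne (by omega)] at r
    have := hb1 p
    omega
  · rintro ⟨p, q, r⟩
    rw [Function.update_self] at r
    omega

lemma reachA_5 {n : ℕ} (hn : 4 ≤ n) {ι : ℕ → ℕ} (hadm : Admissible n ι)
    (hadap : Adapted n (cartanD n) ι) {s : ℤ} {k : ℕ} {g : ℤ → ℕ} (hV : VA n s k g)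
    (hs : 1 - (PD ι n k : ℤ) ≤ s) {u : ℤ} (hu : topDev s k g u)
    (ih : ∀ g', VA n s k g' → wsum (wA n) s k g' < wsum (wA n) s k g →
      XiMem (cartanD n) ι (ltab ι n s k g'))
    (he : n + 3 ≤ g u) : XiMem (cartanD n) ι (ltab ι n s k g) := by
  obtain ⟨u1, u2, u3, u4⟩ := hu
  obtain ⟨hk1, hk2, hk3, -⟩ := id hV
  have hgu := hk3 u u1 u2
  obtain ⟨i, hi⟩ : ∃ i, i = 2 * n + 1 - g u := ⟨_, rfl⟩
  have hi1 : 1 ≤ i := by omega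
  have hin : i + 2 ≤ n := by omega
  have hgi : g u = 2 * n - i + 1 := by omega
  have hbar := PD_bar (ι := ι) hn hi1 hin hk1 hk2
  have hb1 : s ≤ u - 1 → g u < g (u - 1) := by
    intro x
    have := VA_below hV x u2
    unfold okD at this
    omega
  have v1 : VA n s k (Function.update g u (2 * n - i)) := by
    refine VA_update hV (by omega) (by omega) (fun p q => ?_) (fun p q => ?_)
    · have := u4 (u + 1) (by omega) q
      unfold okD
      omega
    · have := hb1 p
      unfold okD
      omega
  have w1 := wsum_update (w := wA n) (g := g) u1 u2 (2 * n - i)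
  rw [hgi] at w1
  have a1 : wA n (2 * n - i) < wA n (2 * n - i + 1) := by
    unfold wA; rw [if_neg (by omega), if_neg (by omega)]; omega
  have ht : 1 ≤ u + n - i - 1 + (PD ι n i : ℤ) := by omega
  refine Xi_back hn hadm hadap (i := i) (t := u + n - i - 1) hi1 (by omega) ht
    (ih _ v1 (by omega)) ?_ (ltab_update u1 u2 _ ?_)
  · rw [coef_lo hn hadm hi1 hin ht (VA_le v1),
      show u + (n : ℤ) - i - 1 - (n - i - 1) = u by ring,
      show u + (n : ℤ) - i - 1 - (n - i) = u - 1 by ring,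
      ind_pos (u := u) u1 u2 (Function.update_self _ _ _), ind_neg, ind_neg, ind_neg]
    · norm_num
    · rintro ⟨p, q, r⟩
      rw [Function.update_of_ne (by omega)] at r
      have := hb1 p
      omega
    · rintro ⟨p, q, r⟩
      by_cases hq : u + (n : ℤ) - i - 1 - 1 = u
      · rw [hq, Function.update_self] at r
        omega
      · rw [Function.update_of_ne hq] at r
        have := u4 _ (by omega) q
        omega
    · rintro ⟨p, q, r⟩
      rw [Function.update_of_ne (by omega)] at r
      have := u4 _ (by omega) q
      omega
  · rw [hgi, box_stepB (ι := ι) (i := i) (L := u) hi1 (by omega) hn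
      (by omega) rfl, sub_add_cancel]

lemma reachA {n : ℕ} (hn : 4 ≤ n) {ι : ℕ → ℕ} (hadm : Admissible n ι)
    (hadap : Adapted n (cartanD n) ι) {s : ℤ} {k : ℕ} (hs : 1 - (PD ι n k : ℤ) ≤ s) (N : ℕ) :
    ∀ g : ℤ → ℕ, VA n s k g → wsum (wA n) s k g = N → XiMem (cartanD n) ι (ltab ι n s k g) := by
  induction N using Nat.strong_induction_on with
  | _ N ih =>
  intro g hV hw
  have ih' : ∀ g', VA n s k g' → wsum (wA n) s k g' < wsum (wA n) s k g →
      XiMem (cartanD n) ι (ltab ι n s k g') := fun g' h1 h2 => ih _ (hw ▸ h2) g' h1 rfl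
  obtain ⟨hk1, hk2, -, -⟩ := id hV
  by_cases hbase : ∀ L, s ≤ L → L < s + k → (g L : ℤ) = s + k - L
  · have ht : 1 ≤ s + (PD ι n k : ℤ) := by omega
    rw [base_A hk1 hk2 hbase, yv_valid hk1 (by omega) ht]
    exact XiMem.base _ (ypos_pos hadm hk1 (by omega) ht)
  · obtain ⟨u, hu⟩ := topDev_exists hV hbase
    rcases (by omega : g u + 1 ≤ n ∨ g u = n ∨ g u = n + 1 ∨ g u = n + 2 ∨ n + 3 ≤ g u) with
      h | h | h | h | h
    · exact reachA_1 hn hadm hadap hV hs hu ih' h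
    · exact reachA_2 hn hadm hadap hV hs hu ih' (i := n - 1) (Or.inl rfl) (Or.inl ⟨rfl, rfl⟩)
        (box_step_n1 hn) (box_step_n1' hn) (fun g' t hV' ht => coef_n1 hn hadm ht (VA_le hV')) h
    · exact reachA_2 hn hadm hadap hV hs hu ih' (i := n) (Or.inr rfl) (Or.inr ⟨rfl, rfl⟩)
        (box_step_n hn) (box_step_n' hn) (fun g' t hV' ht => coef_n_A hn hadm ht hV') h
    · exact reachA_4 hn hadm hadap hV hs hu ih' h
    · exact reachA_5 hn hadm hadap hV hs hu ih' h

end XiTabProof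

/-- Theorem 3.5 (type D): for an adapted sequence, `Ξ_ι = Tab_{D,ι}`. -/
theorem XiEqTabD (n : ℕ) (hn : 4 ≤ n) (ι : ℕ → ℕ)
    (hadm : Admissible n ι) (hadap : Adapted n (cartanD n) ι) :
    Xi (cartanD n) ι = TabD ι n := by
  ext φ
  constructor
  · intro h
    change XiMem (cartanD n) ι φ at h
    induction h with
    | base k hk =>
      obtain ⟨i, t, hi, hin, ht, rfl⟩ := ypos_surj hadm hk
      rw [← yv_valid hi hin ht]
      exact base_mem hn hi hin ht
    | step k hk φ _ ih =>
      obtain ⟨i, t, hi, hin, ht, rfl⟩ := ypos_surj hadm hk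
      rw [mem_TabD_iff hn] at ih ⊢
      obtain ⟨s, k, g, ⟨hV, hs⟩ | ⟨hV, hs⟩, rfl⟩ := ih
      · obtain ⟨g', h1, h2⟩ := closeA hn hadm hadap hV hi hin ht
        exact ⟨s, k, g', Or.inl ⟨h1, hs⟩, h2⟩
      · obtain ⟨k', g', h1, h2, h3⟩ := closeB hn hadm hadap hV hi hin ht
        refine ⟨s, k', g', Or.inr ⟨h1, ?_⟩, h3⟩
        unfold SB
        rw [h2]
        exact hs
  · intro h
    rw [mem_TabD_iff hn] at h
    obtain ⟨s, k, g, ⟨hV, hs⟩ | ⟨hV, hs⟩, rfl⟩ := h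
    · exact reachA hn hadm hadap hs _ g hV rfl
    · exact reachB hn hadm hadap _ k g hV hs rfl
end

section
/- Let A be the Cartan matrix of type A_n (n ≥ 2), B_n (n ≥ 2), C_n (n ≥ 2) or D_n (n ≥ 4), and let ι be an admissible sequence in I = {1,…,n} adapted to A. Then ι satisfies the positivity condition: for every linear form φ = Σ_k φ_k x_k belonging to Ξ_ι and every index k ≥ 1 with k^- = 0, the coefficient φ_k is nonnegative. -/
/-! ### Proof: existence of graded quiver representations -/

namespace AdapPos

open Classical in
/-- Positions `m < k < m^+` with a letter different from that of `k`. -/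
noncomputable def predpos (ι : ℕ → ℕ) (k : ℕ) : Finset ℕ :=
  (Finset.Ico 1 k).filter (fun m => (∀ j, m < j → j < k → ι j ≠ ι m) ∧ ι m ≠ ι k)

theorem mem_predpos {ι : ℕ → ℕ} {k m : ℕ} : m ∈ predpos ι k ↔
    (1 ≤ m ∧ m < k) ∧ (∀ j, m < j → j < k → ι j ≠ ι m) ∧ ι m ≠ ι k := by
  simp [predpos]

/-- Unfolding data for a Cartan matrix. -/
structure Unfold (n : ℕ) (A : ℕ → ℕ → ℤ) where
  fib : ℕ → Finset Bool
  E : ℕ × Bool → ℕ × Bool → Bool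
  nonempty : ∀ i, (fib i).Nonempty
  symm : ∀ p q, E p q = true → E q p = true
  count : ∀ i j, 1 ≤ i → i ≤ n → 1 ≤ j → j ≤ n → i ≠ j → ∀ b ∈ fib j,
    (((fib i).filter (fun b' => E (i, b') (j, b) = true)).card : ℤ) = - A i j

/-- The ambient space. -/
abbrev FF : Type := List (ℕ × Bool) → ℚ

/-- Shift along an arrow. -/
def sh (q : ℕ × Bool) : FF →ₗ[ℚ] FF := LinearMap.funLeft ℚ ℚ (fun l => q :: l)

theorem sh_apply (q : ℕ × Bool) (f : FF) (l : List (ℕ × Bool)) : sh q f l = f (q :: l) := rfl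

theorem exists_mid (V M : Submodule ℚ FF) [FiniteDimensional ℚ M] (h : V ≤ M) (N : ℕ)
    (h1 : Module.finrank ℚ V ≤ N) (h2 : N ≤ Module.finrank ℚ M) :
    ∃ X : Submodule ℚ FF, V ≤ X ∧ X ≤ M ∧ Module.finrank ℚ X = N := by
  induction N, h1 using Nat.le_induction with
  | base => exact ⟨V, le_rfl, h, rfl⟩
  | succ N hN ih =>
    obtain ⟨X, hVX, hXM, hX⟩ := ih (by omega)
    have hlt : X < M := lt_of_le_of_ne hXM (by rintro rfl; omega)
    obtain ⟨x, hxM, hxX⟩ := SetLike.exists_of_lt hlt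
    have : FiniteDimensional ℚ X := Submodule.finiteDimensional_of_le hXM
    refine ⟨X ⊔ Submodule.span ℚ {x}, hVX.trans le_sup_left,
      sup_le hXM (by simpa using hxM), ?_⟩
    have hle : X ⊔ Submodule.span ℚ {x} ≤ M := sup_le hXM (by simpa using hxM)
    have a1 := Submodule.finrank_add_le_finrank_add_finrank X (Submodule.span ℚ {x})
    have a2 : Module.finrank ℚ (Submodule.span ℚ {x}) ≤ 1 := by
      simpa using finrank_span_le_card (R := ℚ) ({x} : Set FF)
    have hlt2 : X < X ⊔ Submodule.span ℚ {x} := by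
      refine lt_of_le_of_ne le_sup_left (fun he => hxX ?_)
      rw [he]
      exact Submodule.mem_sup_right (Submodule.mem_span_singleton_self x)
    have : FiniteDimensional ℚ ↥(X ⊔ Submodule.span ℚ {x}) :=
      Submodule.finiteDimensional_of_le hle
    have a3 := Submodule.finrank_lt_finrank_of_lt hlt2
    omega

variable {n : ℕ} {A : ℕ → ℕ → ℤ}

open Classical in
/-- Predecessors of a lifted position. -/
noncomputable def pre (D : Unfold n A) (ι : ℕ → ℕ) (p : ℕ × Bool) : Finset (ℕ × Bool) :=
  (predpos ι p.1 ×ˢ Finset.univ).filter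
    (fun q => q.2 ∈ D.fib (ι q.1) ∧ D.E (ι q.1, q.2) (ι p.1, p.2) = true)

theorem mem_pre {D : Unfold n A} {ι : ℕ → ℕ} {p q : ℕ × Bool} : q ∈ pre D ι p ↔
    q.1 ∈ predpos ι p.1 ∧ q.2 ∈ D.fib (ι q.1) ∧ D.E (ι q.1, q.2) (ι p.1, p.2) = true := by
  simp [pre]

/-- The space `U_p`. -/
def UU (D : Unfold n A) (ι : ℕ → ℕ) (k0 : ℕ) (V : ℕ × Bool → Submodule ℚ FF) (p : ℕ × Bool) :
    Submodule ℚ FF where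
  carrier := {f | (p.1 ≠ k0 → f [] = 0) ∧ (∀ q ∈ pre D ι p, sh q f ∈ V q) ∧
    ∀ q, q ∉ pre D ι p → sh q f = 0}
  zero_mem' := by simp
  add_mem' := by
    rintro f g ⟨h1, h2, h3⟩ ⟨h1', h2', h3'⟩
    refine ⟨fun h => by simp [h1 h, h1' h], fun q hq => ?_, fun q hq => ?_⟩
    · rw [map_add]; exact add_mem (h2 q hq) (h2' q hq)
    · rw [map_add, h3 q hq, h3' q hq, add_zero]
  smul_mem' := by
    rintro a f ⟨h1, h2, h3⟩
    refine ⟨fun h => by simp [h1 h], fun q hq => ?_, fun q hq => ?_⟩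
    · rw [map_smul]; exact Submodule.smul_mem _ _ (h2 q hq)
    · rw [map_smul, h3 q hq, smul_zero]

theorem mem_UU {D : Unfold n A} {ι : ℕ → ℕ} {k0 : ℕ} {V : ℕ × Bool → Submodule ℚ FF}
    {p : ℕ × Bool} {f : FF} : f ∈ UU D ι k0 V p ↔ (p.1 ≠ k0 → f [] = 0) ∧
      (∀ q ∈ pre D ι p, sh q f ∈ V q) ∧ ∀ q, q ∉ pre D ι p → sh q f = 0 := Iff.rfl

/-- The allowed values at the empty path. -/
def WW (k0 : ℕ) (p : ℕ × Bool) : Submodule ℚ ℚ := if p.1 = k0 then ⊤ else ⊥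

open Classical in
/-- Assembling an element of `U_p` from its components. -/
noncomputable def glue (D : Unfold n A) (ι : ℕ → ℕ) (k0 : ℕ) (V : ℕ × Bool → Submodule ℚ FF)
    (p : ℕ × Bool) : (WW k0 p × ((q : pre D ι p) → V q.1)) →ₗ[ℚ] FF where
  toFun x := fun l => match l with
    | [] => x.1.1
    | q :: l => if h : q ∈ pre D ι p then (x.2 ⟨q, h⟩).1 l else 0
  map_add' x y := by
    funext l
    rcases l with _ | ⟨q, l⟩
    · simp
    · by_cases h : q ∈ pre D ι p <;> simp [h]
  map_smul' a x := by
    funext l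
    rcases l with _ | ⟨q, l⟩
    · simp
    · by_cases h : q ∈ pre D ι p <;> simp [h]

theorem sh_glue {D : Unfold n A} {ι : ℕ → ℕ} {k0 : ℕ} {V : ℕ × Bool → Submodule ℚ FF}
    {p : ℕ × Bool} (x) (q : ℕ × Bool) (h : q ∈ pre D ι p) :
    sh q (glue D ι k0 V p x) = (x.2 ⟨q, h⟩).1 := by
  funext l
  simp [sh_apply, glue, h]

theorem sh_glue' {D : Unfold n A} {ι : ℕ → ℕ} {k0 : ℕ} {V : ℕ × Bool → Submodule ℚ FF}
    {p : ℕ × Bool} (x) (q : ℕ × Bool) (h : q ∉ pre D ι p) :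
    sh q (glue D ι k0 V p x) = 0 := by
  funext l
  simp [sh_apply, glue, h]

theorem glue_injective (D : Unfold n A) (ι : ℕ → ℕ) (k0 : ℕ) (V : ℕ × Bool → Submodule ℚ FF)
    (p : ℕ × Bool) : Function.Injective (glue D ι k0 V p) := by
  intro x y hxy
  refine Prod.ext (Subtype.ext ?_) (funext fun q => Subtype.ext ?_)
  · exact congrFun hxy []
  · rw [← sh_glue x q.1 q.2, ← sh_glue y q.1 q.2, hxy]

theorem glue_range (D : Unfold n A) (ι : ℕ → ℕ) (k0 : ℕ) (V : ℕ × Bool → Submodule ℚ FF)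
    (p : ℕ × Bool) : LinearMap.range (glue D ι k0 V p) = UU D ι k0 V p := by
  ext f
  constructor
  · rintro ⟨x, rfl⟩
    refine ⟨fun h => ?_, fun q hq => ?_, fun q hq => sh_glue' x q hq⟩
    · have := x.1.2
      have hW : WW k0 p = ⊥ := if_neg h
      replace this := hW.le this
      exact (Submodule.mem_bot ℚ).1 this
    · rw [sh_glue x q hq]; exact (x.2 ⟨q, hq⟩).2
  · rintro ⟨h1, h2, h3⟩
    have hw : f [] ∈ WW k0 p := by
      unfold WW
      split_ifs with h
      · trivial
      · exact (Submodule.mem_bot ℚ).2 (h1 h)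
    refine ⟨(⟨f [], hw⟩, fun q => ⟨sh q.1 f, h2 q.1 q.2⟩), ?_⟩
    funext l
    rcases l with _ | ⟨q, l⟩
    · rfl
    · by_cases h : q ∈ pre D ι p
      · simp [glue, h, sh_apply]
      · have := congrFun (h3 q h) l
        simp [sh_apply] at this
        simp [glue, h, this]

theorem finrank_WW (k0 : ℕ) (p : ℕ × Bool) :
    Module.finrank ℚ (WW k0 p) = if p.1 = k0 then 1 else 0 := by
  by_cases h : p.1 = k0
  · have hW : WW k0 p = ⊤ := if_pos h
    rw [hW, if_pos h]; simp
  · have hW : WW k0 p = ⊥ := if_neg h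
    rw [hW, if_neg h]; simp

theorem UU_finite (D : Unfold n A) (ι : ℕ → ℕ) (k0 : ℕ) (V : ℕ × Bool → Submodule ℚ FF)
    (p : ℕ × Bool) (hV : ∀ q ∈ pre D ι p, FiniteDimensional ℚ (V q)) :
    FiniteDimensional ℚ (UU D ι k0 V p) := by
  have : ∀ q : pre D ι p, FiniteDimensional ℚ (V q.1) := fun q => hV q.1 q.2
  rw [← glue_range]
  infer_instance

theorem finrank_UU (D : Unfold n A) (ι : ℕ → ℕ) (k0 : ℕ) (V : ℕ × Bool → Submodule ℚ FF)
    (p : ℕ × Bool) (hV : ∀ q ∈ pre D ι p, FiniteDimensional ℚ (V q)) :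
    Module.finrank ℚ (UU D ι k0 V p) =
      (if p.1 = k0 then 1 else 0) + ∑ q ∈ pre D ι p, Module.finrank ℚ (V q) := by
  have : ∀ q : pre D ι p, FiniteDimensional ℚ (V q.1) := fun q => hV q.1 q.2
  rw [← glue_range, LinearMap.finrank_range_of_inj (glue_injective D ι k0 V p),
    Module.finrank_prod, finrank_WW, Module.finrank_pi_fintype,
    ← Finset.sum_coe_sort (pre D ι p) (fun q => Module.finrank ℚ (V q))]

/-- The predecessor position with the same lifted letter. -/
noncomputable def pm (ι : ℕ → ℕ) (p : ℕ × Bool) : ℕ × Bool := (kminus ι p.1, p.2)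

/-- The mesh map. -/
noncomputable def TT (D : Unfold n A) (ι : ℕ → ℕ) (p : ℕ × Bool) : FF →ₗ[ℚ] FF :=
  ∑ q ∈ pre D ι p, (sh (pm ι p)).comp (sh q)

theorem TT_apply (D : Unfold n A) (ι : ℕ → ℕ) (p : ℕ × Bool) (f : FF) :
    TT D ι p f = ∑ q ∈ pre D ι p, sh (pm ι p) (sh q f) := by
  simp [TT]

/-- Valid families of spaces with dimension vector `c`. -/
structure QRep (D : Unfold n A) (ι : ℕ → ℕ) (k0 : ℕ) (c : ℕ → ℕ)
    (V : ℕ × Bool → Submodule ℚ FF) : Prop where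
  zero : c 0 = 0
  bot : ∀ b, V (0, b) = ⊥
  fin : ∀ p, FiniteDimensional ℚ (V p)
  dim : ∀ k b, 1 ≤ k → b ∈ D.fib (ι k) → Module.finrank ℚ (V (k, b)) = c k
  le : ∀ k b, 1 ≤ k → b ∈ D.fib (ι k) →
    V (k, b) ≤ UU D ι k0 V (k, b) ⊓ LinearMap.ker (TT D ι (k, b))


theorem rank_aux (U : Submodule ℚ FF) [FiniteDimensional ℚ U] (T : FF →ₗ[ℚ] FF) :
    Module.finrank ℚ (U.map T) + Module.finrank ℚ ↥(U ⊓ LinearMap.ker T) =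
      Module.finrank ℚ U := by
  have h := LinearMap.finrank_range_add_finrank_ker (T.domRestrict U)
  have h1 : LinearMap.range (T.domRestrict U) = U.map T := by
    ext x; simp
  have h2 : (LinearMap.ker (T.domRestrict U)).map U.subtype = U ⊓ LinearMap.ker T := by
    ext x
    simp only [Submodule.mem_map, LinearMap.mem_ker, LinearMap.domRestrict_apply,
      Submodule.mem_inf, Submodule.subtype_apply, Subtype.exists]
    constructor
    · rintro ⟨a, ha, h, rfl⟩; exact ⟨ha, h⟩
    · rintro ⟨ha, h⟩; exact ⟨x, ha, h, rfl⟩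
  rw [← h, h1, ← h2, Submodule.finrank_map_subtype_eq]

theorem pre_valid {D : Unfold n A} {ι : ℕ → ℕ} {p q : ℕ × Bool} (h : q ∈ pre D ι p) :
    1 ≤ q.1 ∧ q.2 ∈ D.fib (ι q.1) ∧ q.1 < p.1 := by
  rw [mem_pre, mem_predpos] at h
  exact ⟨h.1.1.1, h.2.1, h.1.1.2⟩

theorem map_TT_le {D : Unfold n A} {ι : ℕ → ℕ} {k0 : ℕ} {c : ℕ → ℕ}
    {V : ℕ × Bool → Submodule ℚ FF} (R : QRep D ι k0 c V) (p : ℕ × Bool) :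
    (UU D ι k0 V p).map (TT D ι p) ≤ V (pm ι p) := by
  rintro _ ⟨f, hf, rfl⟩
  rw [TT_apply]
  refine Submodule.sum_mem _ fun q hq => ?_
  have hv := pre_valid hq
  have h1 := (R.le q.1 q.2 hv.1 hv.2.1 (hf.2.1 q hq)).1
  by_cases h : pm ι p ∈ pre D ι (q.1, q.2)
  · exact h1.2.1 _ h
  · rw [h1.2.2 _ h]; exact zero_mem _

theorem kminus_lt {ι : ℕ → ℕ} {k : ℕ} (h : kminus ι k ≠ 0) :
    0 < kminus ι k ∧ kminus ι k < k ∧ ι (kminus ι k) = ι k := by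
  have hne : {l | 0 < l ∧ l < k ∧ ι l = ι k}.Nonempty := by
    by_contra hne
    rw [Set.not_nonempty_iff_eq_empty] at hne
    apply h
    rw [kminus, hne]; simp
  exact Nat.sSup_mem hne ⟨k, fun l hl => hl.2.1.le⟩

theorem le_kminus {ι : ℕ → ℕ} {k l : ℕ} (h0 : 0 < l) (h1 : l < k) (h2 : ι l = ι k) :
    l ≤ kminus ι k :=
  le_csSup ⟨k, fun _ hl => hl.2.1.le⟩ (⟨h0, h1, h2⟩ : l ∈ {l | 0 < l ∧ l < k ∧ ι l = ι k})

theorem dim_M {D : Unfold n A} {ι : ℕ → ℕ} {k0 : ℕ} {c : ℕ → ℕ}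
    {V : ℕ × Bool → Submodule ℚ FF} (R : QRep D ι k0 c V) {k : ℕ} {b : Bool}
    (hb : b ∈ D.fib (ι k)) :
    Module.finrank ℚ (V (pm ι (k, b))) = c (kminus ι k) := by
  by_cases h : kminus ι k = 0
  · have : V (pm ι (k, b)) = ⊥ := by
      rw [pm]; simp only [h]; exact R.bot b
    rw [this, h, R.zero]; simp
  · obtain ⟨h0, h1, h2⟩ := kminus_lt h
    exact R.dim _ _ h0 (by rw [h2]; exact hb)

/-- Enlarging the spaces at position `k`. -/
theorem step_up {D : Unfold n A} {ι : ℕ → ℕ} {k0 : ℕ} {c : ℕ → ℕ}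
    {V : ℕ × Bool → Submodule ℚ FF} (R : QRep D ι k0 c V) {k : ℕ} (hk : 1 ≤ k) (u N : ℕ)
    (hu : ∀ b ∈ D.fib (ι k), Module.finrank ℚ (UU D ι k0 V (k, b)) = u)
    (hN : c k ≤ N) (hNu : N + c (kminus ι k) ≤ u) :
    ∃ V', QRep D ι k0 (Function.update c k N) V' := by
  have key : ∀ b, ∃ X : Submodule ℚ FF, V (k, b) ≤ X ∧ FiniteDimensional ℚ X ∧
      (b ∈ D.fib (ι k) → X ≤ UU D ι k0 V (k, b) ⊓ LinearMap.ker (TT D ι (k, b)) ∧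
        Module.finrank ℚ X = N) := by
    intro b
    by_cases hb : b ∈ D.fib (ι k)
    · have hf := UU_finite D ι k0 V (k, b) (fun q _ => R.fin q)
      have hr := rank_aux (UU D ι k0 V (k, b)) (TT D ι (k, b))
      have hfin := R.fin (pm ι (k, b))
      have hm := Submodule.finrank_mono (map_TT_le R (k, b))
      rw [dim_M R hb] at hm
      rw [hu b hb] at hr
      have hfM : FiniteDimensional ℚ
          ↥(UU D ι k0 V (k, b) ⊓ LinearMap.ker (TT D ι (k, b))) :=
        Submodule.finiteDimensional_of_le inf_le_left
      obtain ⟨X, h1, h2, h3⟩ := exists_mid _ _ (R.le k b hk hb) N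
        (by rw [R.dim k b hk hb]; exact hN) (by omega)
      exact ⟨X, h1, Submodule.finiteDimensional_of_le h2, fun _ => ⟨h2, h3⟩⟩
    · exact ⟨V (k, b), le_rfl, R.fin _, fun h => absurd h hb⟩
  choose X hX1 hX2 hX3 using key
  have hV' : ∀ q, V q ≤ (if q.1 = k then X q.2 else V q) := by
    rintro ⟨q, b⟩
    by_cases h : q = k
    · subst h; simpa using hX1 b
    · simp [h]
  refine ⟨fun q => if q.1 = k then X q.2 else V q, ?_, ?_, ?_, ?_, ?_⟩
  · rw [Function.update_of_ne (by omega)]; exact R.zero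
  · intro b
    rw [if_neg (by simp; omega)]; exact R.bot b
  · intro p
    by_cases h : p.1 = k
    · rw [if_pos h]; exact hX2 _
    · rw [if_neg h]; exact R.fin p
  · intro l b hl hb
    by_cases h : l = k
    · subst h
      rw [if_pos rfl, Function.update_self]; exact (hX3 b hb).2
    · rw [if_neg h, Function.update_of_ne h]; exact R.dim l b hl hb
  · intro l b hl hb f hf
    have hm : f ∈ UU D ι k0 V (l, b) ⊓ LinearMap.ker (TT D ι (l, b)) := by
      by_cases h : l = k
      · subst h
        exact (hX3 b hb).1 (by simpa using hf)
      · exact R.le l b hl hb (by simpa [h] using hf)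
    exact ⟨⟨hm.1.1, fun q hq => hV' q (hm.1.2.1 q hq), hm.1.2.2⟩, hm.2⟩

/-- The combinatorial consequence of adaptedness. -/
theorem pre_of_pm {D : Unfold n A} {ι : ℕ → ℕ} (hadm : Admissible n ι)
    (hadap : Adapted n A ι) {k : ℕ} (hk : kminus ι k ≠ 0) {b : Bool} {q : ℕ × Bool}
    (hq1 : 1 ≤ q.1) (hq : q.2 ∈ D.fib (ι q.1)) (h : (kminus ι k, b) ∈ pre D ι q) :
    q ∈ pre D ι (k, b) := by
  obtain ⟨h0, h1, h2⟩ := kminus_lt hk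
  rw [mem_pre, mem_predpos] at h
  obtain ⟨⟨⟨-, hlt⟩, hno, hne⟩, hb, hE⟩ := h
  simp only [h2] at hlt hno hne hb hE
  have hqk : q.1 < k := by
    by_contra hge
    rcases eq_or_lt_of_le (not_lt.1 hge) with h | h
    · exact hne (by rw [h])
    · exact hno k h1 h rfl
  rw [mem_pre, mem_predpos]
  refine ⟨⟨⟨hq1, hqk⟩, ?_, fun h => hne h.symm⟩, hq, D.symm _ _ hE⟩
  have hvq := hadm.1 q.1 hq1
  have hvk := hadm.1 k (by omega)
  have hA : A (ι k) (ι q.1) ≠ 0 := by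
    have hc := D.count (ι k) (ι q.1) hvk.1 hvk.2 hvq.1 hvq.2 hne q.2 hq
    have hpos : 0 < ((D.fib (ι k)).filter
        (fun b' => D.E (ι k, b') (ι q.1, q.2) = true)).card :=
      Finset.card_pos.2 ⟨b, by simpa using ⟨hb, hE⟩⟩
    omega
  by_contra hcon
  push Not at hcon
  have hex : ∃ j, q.1 < j ∧ j < k ∧ ι j = ι q.1 := hcon
  classical
  obtain ⟨hj1, hj2, hj3⟩ := Nat.find_spec hex
  refine hadap (ι k) (ι q.1) hvk.1 hvk.2 hvq.1 hvq.2 hne hA q.1 (Nat.find hex) hq1 hj1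
    (Or.inr rfl) (Or.inr hj3) ?_ hj3.symm
  intro m hm1 hm2
  constructor
  · intro hmk
    have := le_kminus (by omega) (hm2.trans hj2) hmk
    omega
  · intro hmq
    exact Nat.find_min hex hm2 ⟨hm1, hm2.trans hj2, hmq⟩

/-- Shrinking the spaces at position `k^-`. -/
theorem step_down {D : Unfold n A} {ι : ℕ → ℕ} (hadm : Admissible n ι)
    (hadap : Adapted n A ι) {k0 : ℕ} {c : ℕ → ℕ}
    {V : ℕ × Bool → Submodule ℚ FF} (R : QRep D ι k0 c V) {k : ℕ} (hk : 1 ≤ k) 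
    (hkm : kminus ι k ≠ 0) (u N : ℕ)
    (hu : ∀ b ∈ D.fib (ι k), Module.finrank ℚ (UU D ι k0 V (k, b)) = u)
    (hN : N ≤ c (kminus ι k)) (hNu : u ≤ N + c k) :
    ∃ V', QRep D ι k0 (Function.update c (kminus ι k) N) V' := by
  obtain ⟨h0, h1, h2⟩ := kminus_lt hkm
  have key : ∀ b, ∃ X : Submodule ℚ FF, X ≤ V (kminus ι k, b) ∧
      (b ∈ D.fib (ι k) → (UU D ι k0 V (k, b)).map (TT D ι (k, b)) ≤ X ∧
        Module.finrank ℚ X = N) := by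
    intro b
    by_cases hb : b ∈ D.fib (ι k)
    · have hf := UU_finite D ι k0 V (k, b) (fun q _ => R.fin q)
      have hr := rank_aux (UU D ι k0 V (k, b)) (TT D ι (k, b))
      have hfin := R.fin (pm ι (k, b))
      have hm := map_TT_le R (k, b)
      rw [hu b hb] at hr
      have hfM : FiniteDimensional ℚ
          ↥(UU D ι k0 V (k, b) ⊓ LinearMap.ker (TT D ι (k, b))) :=
        Submodule.finiteDimensional_of_le inf_le_left
      have hle := Submodule.finrank_mono (R.le k b hk hb)
      rw [R.dim k b hk hb] at hle
      obtain ⟨X, h1, h2, h3⟩ := exists_mid _ _ hm N (by omega)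
        (by rw [dim_M R hb]; exact hN)
      exact ⟨X, h2, fun _ => ⟨h1, h3⟩⟩
    · exact ⟨V (kminus ι k, b), le_rfl, fun h => absurd h hb⟩
  choose X hX1 hX3 using key
  have hV' : ∀ q, (if q.1 = kminus ι k then X q.2 else V q) ≤ V q := by
    rintro ⟨q, b⟩
    by_cases h : q = kminus ι k
    · subst h; simpa using hX1 b
    · simp [h]
  refine ⟨fun q => if q.1 = kminus ι k then X q.2 else V q, ?_, ?_, ?_, ?_, ?_⟩
  · rw [Function.update_of_ne (by omega)]; exact R.zero
  · intro b
    rw [if_neg (by simp; omega)]; exact R.bot b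
  · intro p
    have := R.fin p
    exact Submodule.finiteDimensional_of_le (hV' p)
  · intro l b hl hb
    by_cases h : l = kminus ι k
    · subst h
      rw [h2] at hb
      rw [if_pos rfl, Function.update_self]; exact (hX3 b hb).2
    · rw [if_neg h, Function.update_of_ne h]; exact R.dim l b hl hb
  · intro l b hl hb f hf
    have hfV : f ∈ V (l, b) := hV' (l, b) hf
    have hm := R.le l b hl hb hfV
    refine ⟨⟨hm.1.1, ?_, hm.1.2.2⟩, hm.2⟩
    rintro ⟨m, b'⟩ hq
    by_cases h : m = kminus ι k
    · subst h
      have hlb := pre_of_pm (q := (l, b)) hadm hadap hkm hl hb hq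
      have hb' := (pre_valid hq).2.1
      simp only [h2] at hb'
      have hmem := (hX3 b' hb').1
      simp only [if_true]
      classical
      let x : WW k0 (k, b') × ((q : pre D ι (k, b')) → V q.1) :=
        (0, Pi.single ⟨(l, b), hlb⟩ ⟨f, hfV⟩)
      have hg : glue D ι k0 V (k, b') x ∈ UU D ι k0 V (k, b') := by
        rw [← glue_range]; exact ⟨x, rfl⟩
      have hT : TT D ι (k, b') (glue D ι k0 V (k, b') x) = sh (kminus ι k, b') f := by
        rw [TT_apply, Finset.sum_eq_single (l, b)]
        · rw [sh_glue x _ hlb]; simp [x, pm]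
        · intro q hq' hne
          rw [sh_glue x _ hq']
          have : x.2 ⟨q, hq'⟩ = 0 := by
            simp only [x]
            rw [Pi.single_eq_of_ne]
            intro he
            exact hne (congrArg Subtype.val he)
          rw [this]; simp
        · intro h; exact absurd hlb h
      rw [← hT]
      exact hmem ⟨_, hg, rfl⟩
    · simpa [h] using hm.1.2.1 _ hq

theorem kplus_spec {ι : ℕ → ℕ} (hadm : Admissible n ι) {m : ℕ} (hm : 1 ≤ m) :
    m < kplus ι m ∧ ι (kplus ι m) = ι m := by
  have hne : {l | m < l ∧ ι l = ι m}.Nonempty := by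
    obtain ⟨k, hk1, hk2⟩ := hadm.2.2 (ι m) (hadm.1 m hm).1 (hadm.1 m hm).2 (m + 1)
    exact ⟨k, hk1, hk2⟩
  exact Nat.sInf_mem hne

theorem kplus_le {ι : ℕ → ℕ} {m j : ℕ} (h1 : m < j) (h2 : ι j = ι m) : kplus ι m ≤ j :=
  Nat.sInf_le (⟨h1, h2⟩ : j ∈ {l | m < l ∧ ι l = ι m})

theorem mem_predpos_iff {ι : ℕ → ℕ} (hadm : Admissible n ι) {k m : ℕ} (hm : 1 ≤ m) :
    m ∈ predpos ι k ↔ m < k ∧ k < kplus ι m := by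
  obtain ⟨h1, h2⟩ := kplus_spec hadm hm
  rw [mem_predpos]
  constructor
  · rintro ⟨⟨-, h3⟩, h4, h5⟩
    refine ⟨h3, ?_⟩
    by_contra h
    rcases eq_or_lt_of_le (not_lt.1 h) with h | h
    · exact h5 (by rw [← h2, h])
    · exact h4 _ h1 h h2
  · rintro ⟨h3, h4⟩
    refine ⟨⟨hm, h3⟩, fun j hj1 hj2 hj => ?_, fun h => ?_⟩
    · have := kplus_le hj1 hj; omega
    · have := kplus_le h3 h.symm; omega

theorem kplus_eq_iff {ι : ℕ → ℕ} (hadm : Admissible n ι) {k m : ℕ} (hm : 1 ≤ m) :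
    k = kplus ι m ↔ m = kminus ι k := by
  obtain ⟨h1, h2⟩ := kplus_spec hadm hm
  constructor
  · rintro rfl
    have h3 := le_kminus hm h1 h2.symm
    obtain ⟨h4, h5, h6⟩ := kminus_lt (ι := ι) (k := kplus ι m) (by omega)
    by_contra hne
    have := kplus_le (ι := ι) (m := m) (j := kminus ι (kplus ι m)) (by omega) (h6.trans h2)
    omega
  · intro h
    obtain ⟨h4, h5, h6⟩ := kminus_lt (ι := ι) (k := k) (by omega)
    rw [← h] at h5 h6
    have h7 := kplus_le h5 h6.symm
    by_contra hne
    have := le_kminus (k := k) (by omega : 0 < kplus ι m) (by omega) (h2.trans h6)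
    omega

theorem beta_apply (A : ℕ → ℕ → ℤ) (ι : ℕ → ℕ) {m : ℕ} (hm : 1 ≤ m) (l : ℕ) :
    beta A ι m l = (if l = m then 1 else 0) +
      (if l ∈ Finset.Ioo m (kplus ι m) then (A (ι m) (ι l) : ℚ) else 0) +
      (if l = kplus ι m then 1 else 0) := by
  rw [beta, if_neg (by omega)]
  simp [xc, Finset.sum_apply]

theorem beta_eq_zero {A : ℕ → ℕ → ℤ} {ι : ℕ → ℕ} (hadm : Admissible n ι) {m l : ℕ}
    (hm : 1 ≤ m) (hl : l < m) : beta A ι m l = 0 := by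
  have h1 := (kplus_spec hadm hm).1
  rw [beta_apply A ι hm, if_neg (by omega), if_neg (by simp; omega), if_neg (by omega)]
  simp

theorem sum_beta {A : ℕ → ℕ → ℤ} {ι : ℕ → ℕ} (hadm : Admissible n ι) {k : ℕ} (hk : 1 ≤ k)
    (c : ℕ → ℕ) (hc : c 0 = 0) :
    ∑ m ∈ Finset.Icc 1 k, (c m : ℚ) * beta A ι m k =
      c k + ∑ m ∈ predpos ι k, (A (ι m) (ι k) : ℚ) * c m + c (kminus ι k) := by
  have e : ∀ m ∈ Finset.Icc 1 k, (c m : ℚ) * beta A ι m k =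
      (if k = m then (c m : ℚ) else 0) +
      (if m ∈ predpos ι k then (A (ι m) (ι k) : ℚ) * c m else 0) +
      (if m = kminus ι k then (c m : ℚ) else 0) := by
    intro m hm
    have hm1 := (Finset.mem_Icc.1 hm).1
    rw [beta_apply A ι hm1]
    simp only [Finset.mem_Ioo, mem_predpos_iff hadm hm1, kplus_eq_iff hadm hm1]
    split_ifs <;> ring
  rw [Finset.sum_congr rfl e, Finset.sum_add_distrib, Finset.sum_add_distrib]
  congr 1
  · congr 1
    · rw [Finset.sum_ite_eq, if_pos (by simp; omega)]
    · rw [← Finset.sum_filter]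
      congr 1
      ext m
      simp only [Finset.mem_filter, Finset.mem_Icc, mem_predpos]
      constructor
      · exact fun h => h.2
      · exact fun h => ⟨⟨h.1.1, h.1.2.le⟩, h⟩
  · rw [Finset.sum_ite_eq']
    by_cases h : kminus ι k = 0
    · simp [h, hc]
    · have := kminus_lt h
      rw [if_pos (by simp; omega)]

theorem sum_pre {D : Unfold n A} {ι : ℕ → ℕ} (hadm : Admissible n ι) (c : ℕ → ℕ) {k : ℕ}
    (hk : 1 ≤ k) {b : Bool} (hb : b ∈ D.fib (ι k)) :
    ((∑ q ∈ pre D ι (k, b), c q.1 : ℕ) : ℚ) =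
      - ∑ m ∈ predpos ι k, (A (ι m) (ι k) : ℚ) * c m := by
  classical
  rw [pre, Finset.sum_filter, Finset.sum_product, Nat.cast_sum, ← Finset.sum_neg_distrib]
  refine Finset.sum_congr rfl fun m hm => ?_
  have hm' := mem_predpos.1 hm
  have h1 := hadm.1 m hm'.1.1
  have h2 := hadm.1 k hk
  have hc := D.count (ι m) (ι k) h1.1 h1.2 h2.1 h2.2 hm'.2.2 b hb
  have e : ∑ y : Bool, (if y ∈ D.fib (ι m) ∧ D.E (ι m, y) (ι k, b) = true then c m else 0) =
      ((D.fib (ι m)).filter (fun b' => D.E (ι m, b') (ι k, b) = true)).card * c m := by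
    rw [← Finset.sum_filter, Finset.sum_const, smul_eq_mul]
    congr 2
    ext y
    simp
  rw [e]
  push_cast
  have hc' : (((D.fib (ι m)).filter (fun b' => D.E (ι m, b') (ι k, b) = true)).card : ℚ) =
      - (A (ι m) (ι k) : ℚ) := by exact_mod_cast hc
  rw [hc']
  ring

/-- The invariant: `φ` comes from a representation. -/
def Good (D : Unfold n A) (ι : ℕ → ℕ) (φ : ℕ → ℚ) : Prop :=
  ∃ k0 c V, QRep D ι k0 c V ∧
    ∀ l, 1 ≤ l → φ l = xc k0 l - ∑ m ∈ Finset.Icc 1 l, (c m : ℚ) * beta A ι m l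

theorem coeff {D : Unfold n A} {ι : ℕ → ℕ} (hadm : Admissible n ι) {k0 : ℕ} {c : ℕ → ℕ}
    {V : ℕ × Bool → Submodule ℚ FF} (R : QRep D ι k0 c V) {k : ℕ} (hk : 1 ≤ k) {b : Bool}
    (hb : b ∈ D.fib (ι k)) :
    xc k0 k - ∑ m ∈ Finset.Icc 1 k, (c m : ℚ) * beta A ι m k =
      (Module.finrank ℚ (UU D ι k0 V (k, b)) : ℚ) - c k - c (kminus ι k) := by
  rw [sum_beta hadm hk c R.zero, finrank_UU D ι k0 V (k, b) (fun q _ => R.fin q)]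
  have e : ∑ q ∈ pre D ι (k, b), Module.finrank ℚ (V q) = ∑ q ∈ pre D ι (k, b), c q.1 :=
    Finset.sum_congr rfl fun q hq => R.dim q.1 q.2 (pre_valid hq).1 (pre_valid hq).2.1
  rw [e, Nat.cast_add, sum_pre hadm c hk hb]
  simp only [xc]
  push_cast
  ring

theorem sum_update {A : ℕ → ℕ → ℤ} {ι : ℕ → ℕ} (hadm : Admissible n ι) (c : ℕ → ℕ) {k N : ℕ}
    (hk : 1 ≤ k) (l : ℕ) :
    ∑ m ∈ Finset.Icc 1 l, (Function.update c k N m : ℚ) * beta A ι m l =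
      ∑ m ∈ Finset.Icc 1 l, (c m : ℚ) * beta A ι m l + ((N : ℚ) - c k) * beta A ι k l := by
  have e : ∀ m ∈ Finset.Icc 1 l, ((Function.update c k N m : ℕ) : ℚ) * beta A ι m l =
      (c m : ℚ) * beta A ι m l + (if m = k then ((N : ℚ) - c k) * beta A ι k l else 0) := by
    intro m _
    by_cases h : m = k
    · subst h; simp; ring
    · simp [h]
  rw [Finset.sum_congr rfl e, Finset.sum_add_distrib, Finset.sum_ite_eq']
  by_cases h : k ≤ l
  · rw [if_pos (by simp; omega)]
  · rw [if_neg (by simp; omega), beta_eq_zero hadm hk (by omega)]; simp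

theorem good_base (D : Unfold n A) (ι : ℕ → ℕ) (k : ℕ) : Good D ι (xc k) := by
  refine ⟨k, fun _ => 0, fun _ => ⊥, ⟨rfl, fun _ => rfl, fun _ => inferInstance, ?_, ?_⟩, ?_⟩
  · intros; simp
  · intros; exact bot_le
  · intros; simp

theorem good_step {D : Unfold n A} {ι : ℕ → ℕ} (hadm : Admissible n ι)
    (hadap : Adapted n A ι) {φ : ℕ → ℚ} (h : Good D ι φ) {k : ℕ} (hk : 1 ≤ k) :
    Good D ι (Sop A ι k φ) := by
  obtain ⟨k0, c, V, R, hφ⟩ := h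
  obtain ⟨b0, hb0⟩ := D.nonempty (ι k)
  have hc : ∀ b ∈ D.fib (ι k),
      φ k = (Module.finrank ℚ (UU D ι k0 V (k, b)) : ℚ) - c k - c (kminus ι k) :=
    fun b hb => (hφ k hk).trans (coeff hadm R hk hb)
  obtain ⟨u, hu⟩ : ∃ u, u = Module.finrank ℚ (UU D ι k0 V (k, b0)) := ⟨_, rfl⟩
  have hφu : φ k = (u : ℚ) - c k - c (kminus ι k) := by rw [hu]; exact hc b0 hb0
  have hU : ∀ b ∈ D.fib (ι k), Module.finrank ℚ (UU D ι k0 V (k, b)) = u := by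
    intro b hb
    have h1 := hc b hb
    have : (Module.finrank ℚ (UU D ι k0 V (k, b)) : ℚ) = u := by linarith
    exact_mod_cast this
  unfold Sop
  split_ifs with hpos
  · have hlt : c k + c (kminus ι k) < u := by
      have : (c k : ℚ) + c (kminus ι k) < u := by linarith
      exact_mod_cast this
    obtain ⟨V', R'⟩ := step_up R hk u (u - c (kminus ι k)) hU (by omega) (by omega)
    refine ⟨k0, _, V', R', fun l hl => ?_⟩
    rw [sum_update hadm c hk, Nat.cast_sub (by omega)]
    simp only [Pi.sub_apply, Pi.smul_apply, smul_eq_mul]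
    rw [hφ l hl, hφu]
    ring
  · by_cases hkm : kminus ι k = 0
    · refine ⟨k0, c, V, R, fun l hl => ?_⟩
      simp [hkm, beta, hφ l hl]
    · have hle : u ≤ c k + c (kminus ι k) := by
        have : (u : ℚ) ≤ c k + c (kminus ι k) := by linarith
        exact_mod_cast this
      have hV : c k ≤ u := by
        have hf := UU_finite D ι k0 V (k, b0) (fun q _ => R.fin q)
        have := Submodule.finrank_mono ((R.le k b0 hk hb0).trans inf_le_left)
        rw [R.dim k b0 hk hb0] at this
        omega
      obtain ⟨V', R'⟩ := step_down hadm hadap R hk hkm u (u - c k) hU (by omega) (by omega)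
      refine ⟨k0, _, V', R', fun l hl => ?_⟩
      rw [sum_update hadm c (by omega), Nat.cast_sub hV]
      simp only [Pi.sub_apply, Pi.smul_apply, smul_eq_mul]
      rw [hφ l hl, hφu]
      ring

theorem positivity_of_unfold (D : Unfold n A) {ι : ℕ → ℕ} (hadm : Admissible n ι)
    (hadap : Adapted n A ι) (φ : ℕ → ℚ) (h : XiMem A ι φ) (k : ℕ) (hk : 1 ≤ k)
    (hkm : kminus ι k = 0) : 0 ≤ φ k := by
  have hg : Good D ι φ := by
    induction h with
    | base k _ => exact good_base D ι k
    | step k hk φ _ ih => exact good_step hadm hadap ih hk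
  obtain ⟨k0, c, V, R, hφ⟩ := hg
  obtain ⟨b, hb⟩ := D.nonempty (ι k)
  rw [hφ k hk, coeff hadm R hk hb, hkm, R.zero]
  have hf := UU_finite D ι k0 V (k, b) (fun q _ => R.fin q)
  have := Submodule.finrank_mono ((R.le k b hk hb).trans inf_le_left)
  rw [R.dim k b hk hb] at this
  have h2 : (c k : ℚ) ≤ Module.finrank ℚ (UU D ι k0 V (k, b)) := by exact_mod_cast this
  simpa using h2

/-- Trivial unfolding in the simply laced case. -/
def unfoldSimple (n : ℕ) (A : ℕ → ℕ → ℤ) (hs : ∀ i j, A i j = A j i)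
    (h : ∀ i j, i ≠ j → A i j = 0 ∨ A i j = -1) : Unfold n A where
  fib _ := {false}
  E p q := decide (A p.1 q.1 ≠ 0)
  nonempty _ := by simp
  symm p q := by simp [hs p.1 q.1]
  count i j _ _ _ _ hij b _ := by
    rcases h i j hij with h | h <;> simp [h, Finset.filter_singleton]

/-- Unfolding of `B_n`. -/
def unfoldB (n : ℕ) : Unfold n (cartanB n) where
  fib i := if i = n then Finset.univ else {false}
  E p q := decide (p.1 + 1 = q.1 ∨ q.1 + 1 = p.1)
  nonempty i := by by_cases h : i = n <;> simp [h]
  symm p q := by simp; omega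
  count i j _ _ _ _ hij b _ := by
    by_cases hadj : i + 1 = j ∨ j + 1 = i
    · by_cases hi : i = n
      · have hj : j = n - 1 := by omega
        have hA : cartanB n i j = -2 := by
          rw [cartanB, if_neg hij, if_pos ⟨hi, hj⟩]
        rw [hA]
        simp only [hadj, if_pos hi]
        simp
      · simp [cartanB, hij, hadj, hi]
    · have : ¬ (i = n ∧ j = n - 1) := by omega
      simp [cartanB, hij, hadj, this]

/-- Unfolding of `C_n`. -/
def unfoldC (n : ℕ) : Unfold n (cartanC n) where
  fib i := if i = n then {false} else Finset.univ
  E p q := decide ((p.1 + 1 = q.1 ∨ q.1 + 1 = p.1) ∧ (p.1 = n ∨ q.1 = n ∨ p.2 = q.2))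
  nonempty i := by by_cases h : i = n <;> simp [h]
  symm p q := by
    simp only [decide_eq_true_eq]
    rintro ⟨h1, h2⟩
    exact ⟨h1.symm, by rcases h2 with h | h | h <;> simp [h]⟩
  count i j _ _ _ _ hij b _ := by
    by_cases hadj : i + 1 = j ∨ j + 1 = i
    · by_cases hi : i = n
      · have : ¬ (i = n - 1 ∧ j = n) := by omega
        simp only [cartanC, hij, hadj, this, if_false, if_true]
        simp [hi]
      · by_cases hj : j = n
        · have : (i = n - 1 ∧ j = n) := by omega
          have hA : cartanC n i j = -2 := by
            rw [cartanC, if_neg hij, if_pos this]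
          rw [hA]
          have hadj' : i + 1 = n ∨ n + 1 = i := by omega
          simp only [if_neg hi, hj, hadj']
          simp
        · have : ¬ (i = n - 1 ∧ j = n) := by omega
          simp only [cartanC, hij, hadj, this, if_false, if_true]
          cases b <;> simp [hi, hj] <;> decide
    · have : ¬ (i = n - 1 ∧ j = n) := by omega
      simp [cartanC, hij, hadj, this]

end AdapPos

/-- Theorem 3.6: an adapted sequence of type A, B, C (n ≥ 2) or D (n ≥ 4) satisfies the
positivity condition: the coefficient `φ_k` of every `φ ∈ Ξ_ι` is nonnegative whenever
`k^- = 0`. -/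
theorem adapted_positivity (n : ℕ) (A : ℕ → ℕ → ℤ)
    (hA : (2 ≤ n ∧ (A = cartanA n ∨ A = cartanB n ∨ A = cartanC n)) ∨
          (4 ≤ n ∧ A = cartanD n))
    (ι : ℕ → ℕ) (hadm : Admissible n ι) (hadap : Adapted n A ι) :
    ∀ φ ∈ Xi A ι, ∀ k, 1 ≤ k → kminus ι k = 0 → 0 ≤ φ k := by
  intro φ hφ k hk hkm
  rcases hA with ⟨-, rfl | rfl | rfl⟩ | ⟨hn, rfl⟩
  · exact AdapPos.positivity_of_unfold (AdapPos.unfoldSimple n (cartanA n)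
      (fun i j => by unfold cartanA; split_ifs <;> omega)
      (fun i j hij => by unfold cartanA; split_ifs <;> simp_all)) hadm hadap φ hφ k hk hkm
  · exact AdapPos.positivity_of_unfold (AdapPos.unfoldB n) hadm hadap φ hφ k hk hkm
  · exact AdapPos.positivity_of_unfold (AdapPos.unfoldC n) hadm hadap φ hφ k hk hkm
  · exact AdapPos.positivity_of_unfold (AdapPos.unfoldSimple n (cartanD n)
      (fun i j => by unfold cartanD; split_ifs <;> omega)
      (fun i j hij => by unfold cartanD; split_ifs <;> simp_all)) hadm hadap φ hφ k hk hkm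
end
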